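/- arXiv:2411.01681 — 8 statements merged into one kernel-verified Lean document; each statement's English description precedes it below -/
import Mathlib

section
/- Let q, x ∈ ℂ with |q| < 1 and |x| < 1. Then: (i) the series Σ_{k=0}^{∞} x^k / (q)_k converges absolutely, where (q)_k = Π_{j=1}^{k} (1 − q^j) (with (q)_0 = 1, and each (q)_k ≠ 0 since |q| < 1); (ii) the infinite product Π_{k=0}^{∞} (1 − x q^k) converges to a nonzero complex number; and (iii) Σ_{k=0}^{∞} x^k / (q)_k = ( Π_{k=0}^{∞} (1 − x q^k) )^{−1}. -/
/-!
Write `F(x) = ∑ₖ x^k/(q)_k`. Since `(1 - q^k)/(q)_k = 1/(q)_{k-1}`, one has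
`F(x) - F(qx) = x F(x)`, that is `F(qx) = (1 - x) F(x)`. Iterating,
`F(x q^n) = ∏_{k<n} (1 - x q^k) · F(x)`. As `n → ∞` the left side tends to `F(0) = 1` by dominated
convergence, and the right side tends to `∏ₖ (1 - x q^k) · F(x)`.
-/

/-- The q-numbers `(q)_k = (1 - q)(1 - q²)⋯(1 - q^k)`, with `(q)_0 = 1`. -/
noncomputable def qNum (q : ℂ) (k : ℕ) : ℂ := ∏ j ∈ Finset.range k, (1 - q ^ (j + 1))

lemma one_sub_ne_zero_of_norm_lt {z : ℂ} (hz : ‖z‖ < 1) : 1 - z ≠ 0 := by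
  intro h
  rw [← sub_eq_zero.mp h] at hz
  simp at hz

lemma qNum_factor_ne_zero {q : ℂ} (hq : ‖q‖ < 1) (k : ℕ) : 1 - q ^ (k + 1) ≠ 0 := by
  apply one_sub_ne_zero_of_norm_lt
  rw [norm_pow]
  exact pow_lt_one₀ (norm_nonneg _) hq (by omega)

lemma qNum_ne_zero {q : ℂ} (hq : ‖q‖ < 1) (k : ℕ) : qNum q k ≠ 0 :=
  Finset.prod_ne_zero_iff.mpr fun j _ => qNum_factor_ne_zero hq j

lemma qNum_succ (q : ℂ) (k : ℕ) : qNum q (k + 1) = qNum q k * (1 - q ^ (k + 1)) :=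
  Finset.prod_range_succ _ _

/-- Ratio test: consecutive terms have ratio `x / (1 - q^(k+1))`, which tends to `x`. -/
lemma summable_norm_qExp {q x : ℂ} (hq : ‖q‖ < 1) (hx : ‖x‖ < 1) :
    Summable (fun k : ℕ => ‖x ^ k / qNum q k‖) := by
  obtain ⟨r, hxr, hr⟩ := exists_between hx
  have hlim : Filter.Tendsto (fun k : ℕ => ‖x / (1 - q ^ (k + 1))‖) Filter.atTop
      (nhds ‖x‖) := by
    have h1 : Filter.Tendsto (fun k : ℕ => q ^ (k + 1)) Filter.atTop (nhds 0) :=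
      (tendsto_pow_atTop_nhds_zero_of_norm_lt_one hq).comp (Filter.tendsto_add_atTop_nat 1)
    have h2 := ((tendsto_const_nhds (x := x)).div
      ((tendsto_const_nhds (x := (1 : ℂ))).sub h1) (by simp)).norm
    simpa using h2
  refine summable_of_ratio_norm_eventually_le hr ?_
  filter_upwards [hlim.eventually (gt_mem_nhds hxr)] with k hk
  rw [norm_norm, norm_norm, qNum_succ, pow_succ x k, mul_div_mul_comm, norm_mul, mul_comm]
  gcongr

lemma summable_qExp {q x : ℂ} (hq : ‖q‖ < 1) (hx : ‖x‖ < 1) :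
    Summable (fun k : ℕ => x ^ k / qNum q k) :=
  (summable_norm_qExp hq hx).of_norm

lemma norm_mul_pow_lt_one {q x : ℂ} (hq : ‖q‖ < 1) (hx : ‖x‖ < 1) (n : ℕ) :
    ‖x * q ^ n‖ < 1 := by
  rw [norm_mul, norm_pow]
  exact (mul_le_of_le_one_right (norm_nonneg _)
    (pow_le_one₀ (norm_nonneg _) hq.le)).trans_lt hx

/-- The `q`-difference equation `F(xq) = (1 - x) F(x)`. -/
lemma tsum_qExp_mul {q x : ℂ} (hq : ‖q‖ < 1) (hx : ‖x‖ < 1) :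
    ∑' k : ℕ, (x * q) ^ k / qNum q k = (1 - x) * ∑' k : ℕ, x ^ k / qNum q k := by
  have hs := summable_qExp hq hx
  have hs' : Summable (fun k : ℕ => (x * q) ^ k / qNum q k) :=
    summable_qExp hq (by simpa using norm_mul_pow_lt_one hq hx 1)
  have hterm : ∀ k : ℕ, x ^ (k + 1) / qNum q (k + 1) - (x * q) ^ (k + 1) / qNum q (k + 1)
      = x * (x ^ k / qNum q k) := by
    intro k
    have h1 := qNum_ne_zero hq k
    have h2 := qNum_factor_ne_zero hq k
    rw [qNum_succ, mul_pow, ← sub_div, ← mul_one_sub, mul_div_mul_right _ _ h2, pow_succ]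
    ring
  have hdiff : ∑' k : ℕ, x ^ k / qNum q k - ∑' k : ℕ, (x * q) ^ k / qNum q k
      = x * ∑' k : ℕ, x ^ k / qNum q k := by
    rw [← hs.tsum_sub hs', (hs.sub hs').tsum_eq_zero_add, ← tsum_mul_left]
    simp only [hterm]
    simp
  linear_combination -hdiff

lemma tsum_qExp_mul_pow {q x : ℂ} (hq : ‖q‖ < 1) (hx : ‖x‖ < 1) (n : ℕ) :
    ∑' k : ℕ, (x * q ^ n) ^ k / qNum q k
      = (∏ k ∈ Finset.range n, (1 - x * q ^ k)) * ∑' k : ℕ, x ^ k / qNum q k := by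
  induction n with
  | zero => simp
  | succ n ih =>
    rw [pow_succ, ← mul_assoc, tsum_qExp_mul hq (norm_mul_pow_lt_one hq hx n), ih,
      Finset.prod_range_succ]
    ring

lemma tendsto_tsum_qExp {q x : ℂ} (hq : ‖q‖ < 1) (hx : ‖x‖ < 1) :
    Filter.Tendsto (fun n : ℕ => ∑' k : ℕ, (x * q ^ n) ^ k / qNum q k) Filter.atTop
      (nhds 1) := by
  have h0 : ∑' k : ℕ, (0 : ℂ) ^ k / qNum q k = 1 := by
    rw [tsum_eq_single 0 (fun k hk => by simp [hk])]
    simp [qNum]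
  rw [← h0]
  refine tendsto_tsum_of_dominated_convergence (summable_norm_qExp hq hx) (fun k => ?_)
    (Filter.Eventually.of_forall fun n k => ?_)
  · have h := (tendsto_pow_atTop_nhds_zero_of_norm_lt_one hq).const_mul x
    rw [mul_zero] at h
    exact (h.pow k).div_const _
  · rw [norm_div, norm_div, norm_pow, norm_pow, norm_mul, norm_pow]
    gcongr
    exact mul_le_of_le_one_right (norm_nonneg _) (pow_le_one₀ (norm_nonneg _) hq.le)

/-- Euler's expansion of the (inverse of the) compact quantum dilogarithm: for `|q| < 1` and
`|x| < 1`, (i) each `(q)_k ≠ 0` and the series `∑ₖ x^k/(q)_k` converges absolutely, (ii) the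
infinite product `∏ₖ (1 - x q^k)` converges to a nonzero complex number, and (iii)
`∑ₖ x^k/(q)_k = (∏ₖ (1 - x q^k))⁻¹`. -/
theorem quantum_dilog_expansion (q x : ℂ) (hq : ‖q‖ < 1) (hx : ‖x‖ < 1) :
    (∀ k : ℕ, qNum q k ≠ 0) ∧
    Summable (fun k : ℕ => ‖x ^ k / qNum q k‖) ∧
    Multipliable (fun k : ℕ => 1 - x * q ^ k) ∧
    (∏' k : ℕ, (1 - x * q ^ k)) ≠ 0 ∧
    (∑' k : ℕ, x ^ k / qNum q k) = (∏' k : ℕ, (1 - x * q ^ k))⁻¹ := by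
  have hmul : Multipliable (fun k : ℕ => 1 - x * q ^ k) := by
    have hsum : Summable (fun k : ℕ => ‖-(x * q ^ k)‖) := by
      simp only [norm_neg, norm_mul, norm_pow]
      exact (summable_geometric_of_lt_one (norm_nonneg _) hq).mul_left _
    simpa only [← sub_eq_add_neg] using multipliable_one_add_of_summable hsum
  have hprod : (∏' k : ℕ, (1 - x * q ^ k)) * ∑' k : ℕ, x ^ k / qNum q k = 1 := by
    refine tendsto_nhds_unique ?_ (tendsto_tsum_qExp hq hx)
    simp only [tsum_qExp_mul_pow hq hx]
    exact hmul.hasProd.tendsto_prod_nat.mul_const _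
  -- The product is nonzero because it has the series as an inverse.
  exact ⟨qNum_ne_zero hq, summable_norm_qExp hq hx, hmul, left_ne_zero_of_mul_eq_one hprod,
    eq_inv_of_mul_eq_one_right hprod⟩
end

section
/- Let R be a commutative ring and Q ∈ R an element such that 1 − Q^j is a unit in R for every integer j ≥ 1. Let A be an associative unital R-algebra and U, V ∈ A such that the element W := U·V − Q·(V·U) commutes with both U and V. Set c_k := Π_{j=1}^{k} (1 − Q^j)^{−1} ∈ R (with c_0 = 1), and in the power series ring A⟦t⟧ define E_U := Σ_{k≥0} c_k U^k t^k, E_V := Σ_{k≥0} c_k V^k t^k, and E_W := Σ_{k≥0} c_k ((1−Q)^{−1}·(U·V − V·U))^k t^{2k}. Then in A⟦t⟧ one has E_U · E_V = E_V · E_W · E_U. -/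
/-!
Write `X = (1 - Q)⁻¹ (UV - VU)`. The hypotheses give `UV = VU + (1 - Q) X`, `UX = Q XU` and
`XV = Q VX`. Let `σ` be the dilation `t ↦ Q t` of `A⟦t⟧`, and put `u = U t`, `v = V t`, `x = X t²`.
The recursion `(1 - Q^(k+1)) c_(k+1) = c_k` turns into the `q`-difference equations
`σ E_U = (1 - u) E_U`, `σ E_V = (1 - v) E_V`, `σ E_W = (1 - Q x)(1 - x) E_W`, and the commutation
relations turn into rules for moving `u`, `v`, `x` past the three series. With these rules both
sides `F` of the identity satisfy `σ F = (1 - u)(1 - v - x) F` (`dilate_left`, `dilate_right`).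
Since `1 - Q^n` is a unit for `n ≥ 1`, such an equation determines `F` from its constant
coefficient (`eq_of_dilate_eq`), which is `1` on both sides.
-/

namespace QPentagon

open PowerSeries

section Abstract

variable {R B : Type*} [CommRing R] [Ring B] [Algebra R B]

/-- The `q`-difference equation for `E_U E_V`, in an abstract algebra; here `(1 - u) eu` and
`(1 - v) ev` are the dilated series. -/
lemma dilate_left {u v x eu ev : B} (huv : eu * v = (v + x) * eu) :
    ((1 - u) * eu) * ((1 - v) * ev) = ((1 - u) * (1 - v - x)) * (eu * ev) := by
  have h : eu * (1 - v) = (1 - v - x) * eu := by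
    rw [mul_sub, huv]; noncomm_ring
  calc ((1 - u) * eu) * ((1 - v) * ev) = (1 - u) * (eu * (1 - v)) * ev := by noncomm_ring
    _ = _ := by rw [h]; noncomm_ring

/-- The `q`-difference equation for `E_V E_W E_U`, in an abstract algebra. -/
lemma dilate_right {Q : R} {u v x eu ev ew : B}
    (huv : u * v = v * u + (1 - Q) • x) (hux : u * x = Q • (x * u))
    (hw : u * ew = (1 - x) * ew * u) (hv : u * ev = ev * (u + x))
    (hx : x * ev = (1 - v) * ev * x) :
    ((1 - v) * ev) * ((1 - Q • x) * ((1 - x) * ew)) * ((1 - u) * eu) =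
      ((1 - u) * (1 - v - x)) * (ev * ew * eu) := by
  have h1 : (1 - x) * ew * (1 - u) = (1 - x - u) * ew := by
    rw [mul_sub, ← hw]; noncomm_ring
  have h2 : (1 - v - x) * ev = (1 - v) * ev * (1 - x) := by
    rw [sub_mul, hx]; noncomm_ring
  have h3 : u * ((1 - v) * ev) = (1 - v) * ev * (u + Q • x) := by
    have e1 : u * ((1 - v) * ev) = u * ev - (u * v) * ev := by noncomm_ring
    have e2 : (v * u + (1 - Q) • x) * ev = v * (u * ev) + (1 - Q) • (x * ev) := by
      rw [add_mul, smul_mul_assoc, mul_assoc]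
    rw [e1, huv, e2, hv, hx]
    simp only [sub_smul, one_smul, mul_add, mul_smul_comm, sub_mul, one_mul, smul_sub, mul_assoc]
    abel
  have h4 : (1 - u) * ((1 - v) * ev) = (1 - v) * ev * (1 - u - Q • x) := by
    rw [sub_mul, h3]; noncomm_ring
  have h5 : (1 - Q • x) * (1 - x - u) = (1 - u - Q • x) * (1 - x) := by
    have : (1 - u - Q • x) * (1 - x) = 1 - x - u - Q • x + Q • (x * x) + u * x := by
      simp only [sub_mul, mul_sub, smul_mul_assoc, one_mul, mul_one]; abel
    rw [this, hux]
    simp only [sub_mul, mul_sub, smul_mul_assoc, one_mul, mul_one]; abel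
  calc ((1 - v) * ev) * ((1 - Q • x) * ((1 - x) * ew)) * ((1 - u) * eu)
      = ((1 - v) * ev) * (1 - Q • x) * ((1 - x) * ew * (1 - u)) * eu := by
        simp only [mul_assoc]
    _ = ((1 - v) * ev) * ((1 - Q • x) * (1 - x - u)) * ew * eu := by
        rw [h1]; simp only [mul_assoc]
    _ = ((1 - v) * ev * (1 - u - Q • x)) * (1 - x) * ew * eu := by
        rw [h5]; simp only [mul_assoc]
    _ = (1 - u) * ((1 - v) * ev * (1 - x)) * ew * eu := by
        rw [← h4]; simp only [mul_assoc]
    _ = _ := by rw [← h2]; simp only [mul_assoc]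

end Abstract

variable {R A : Type*} [CommRing R] [Ring A] [Algebra R A]

/-- The dilation `t ↦ Q t` on power series over a possibly noncommutative algebra. -/
noncomputable def dilate (Q : R) (f : A⟦X⟧) : A⟦X⟧ := PowerSeries.mk fun n => Q ^ n • coeff n f

lemma dilate_mul (Q : R) (f g : A⟦X⟧) : dilate Q (f * g) = dilate Q f * dilate Q g := by
  ext n
  simp only [dilate, coeff_mk, coeff_mul, Finset.smul_sum]
  refine Finset.sum_congr rfl fun p hp => ?_
  rw [smul_mul_smul_comm, ← pow_add, Finset.HasAntidiagonal.mem_antidiagonal.1 hp]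

/-- A `q`-difference equation `σ F = P F` with `P(0) = 1` has at most one solution with given
constant coefficient, because `Q^n - 1` is a unit for `n ≥ 1`. -/
lemma eq_of_dilate_eq {Q : R} (hQ : ∀ j : ℕ, 1 ≤ j → IsUnit (1 - Q ^ j)) {P F G : A⟦X⟧}
    (hP : coeff 0 P = 1) (hF : dilate Q F = P * F) (hG : dilate Q G = P * G)
    (h0 : coeff 0 F = coeff 0 G) : F = G := by
  ext n
  induction n using Nat.strong_induction_on with
  | _ n ih =>
    rcases Nat.eq_zero_or_pos n with rfl | hn
    · exact h0
    have key : ∀ H : A⟦X⟧, dilate Q H = P * H → (1 - Q ^ n) • coeff n H =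
        - ∑ p ∈ (Finset.HasAntidiagonal.antidiagonal n).erase (0, n), coeff p.1 P * coeff p.2 H := by
      intro H hH
      have := congrArg (coeff n) hH
      rw [coeff_mul, ← Finset.add_sum_erase _ _ (show (0, n) ∈ Finset.HasAntidiagonal.antidiagonal n by simp),
        hP, one_mul] at this
      simp only [dilate, coeff_mk] at this
      rw [sub_smul, one_smul, this]; abel
    apply (hQ n hn).smul_left_cancel.1
    rw [key F hF, key G hG]
    congr 1
    refine Finset.sum_congr rfl fun p hp => ?_
    rw [Finset.mem_erase, Finset.HasAntidiagonal.mem_antidiagonal] at hp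
    obtain ⟨hne, hp⟩ := hp
    rw [ih p.2]
    by_contra hlt
    exact hne (Prod.ext (by simp only; omega) (by simp only; omega))

/-- The coefficients `c_k = ∏_{j=1}^{k} (1 - Q^j)⁻¹`. -/
noncomputable def qc (Q : R) (k : ℕ) : R :=
  ∏ j ∈ Finset.range k, Ring.inverse (1 - Q ^ (j + 1))

lemma qc_succ {Q : R} (hQ : ∀ j : ℕ, 1 ≤ j → IsUnit (1 - Q ^ j)) (k : ℕ) :
    (1 - Q ^ (k + 1)) * qc Q (k + 1) = qc Q k := by
  rw [qc, Finset.prod_range_succ, mul_left_comm, Ring.mul_inverse_cancel _ (hQ _ (by omega)),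
    mul_one, qc]

lemma pow_mul_qc_succ {Q : R} (hQ : ∀ j : ℕ, 1 ≤ j → IsUnit (1 - Q ^ j)) (k : ℕ) :
    Q ^ (k + 1) * qc Q (k + 1) = qc Q (k + 1) - qc Q k := by
  rw [← qc_succ hQ k]; ring

/-- The series `E(a t) = ∑ c_k a^k t^k`. -/
noncomputable def qexp (Q : R) (a : A) : A⟦X⟧ := PowerSeries.mk fun k => qc Q k • a ^ k

/-- The series `∑ d_k a^k t^(2k)` with scalar coefficients `d`. -/
noncomputable def evenSeries (d : ℕ → R) (a : A) : A⟦X⟧ :=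
  PowerSeries.mk fun n => if Even n then d (n / 2) • a ^ (n / 2) else 0

lemma coeff_even (d : ℕ → R) (a : A) (k : ℕ) :
    coeff (2 * k) (evenSeries d a) = d k • a ^ k := by
  simp [evenSeries]

lemma coeff_odd (d : ℕ → R) (a : A) (k : ℕ) :
    coeff (2 * k + 1) (evenSeries d a) = 0 := by
  simp [evenSeries]

lemma ext_even_odd {f g : A⟦X⟧} (h0 : coeff 0 f = coeff 0 g) (h1 : coeff 1 f = coeff 1 g)
    (he : ∀ k, coeff (2 * k + 2) f = coeff (2 * k + 2) g)
    (ho : ∀ k, coeff (2 * k + 1 + 2) f = coeff (2 * k + 1 + 2) g) : f = g := by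
  ext n
  match n with
  | 0 => exact h0
  | 1 => exact h1
  | n + 2 =>
    rcases Nat.even_or_odd' n with ⟨k, rfl | rfl⟩
    · exact he k
    · exact ho k

/-- The monomial `a t^d`. -/
noncomputable abbrev mon (d : ℕ) (a : A) : A⟦X⟧ := C a * X ^ d

lemma coeff_mon_mul (d : ℕ) (a : A) (f : A⟦X⟧) (n : ℕ) :
    coeff (n + d) (mon d a * f) = a * coeff n f := by
  rw [mon, mul_assoc, coeff_C_mul, coeff_X_pow_mul]

lemma coeff_mul_mon (d : ℕ) (a : A) (f : A⟦X⟧) (n : ℕ) :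
    coeff (n + d) (f * mon d a) = coeff n f * a := by
  rw [mon, ← mul_assoc, coeff_mul_X_pow, coeff_mul_C]

lemma coeff_mon_mul_of_lt {d n : ℕ} (h : n < d) (a : A) (f : A⟦X⟧) :
    coeff n (mon d a * f) = 0 := by
  rw [mon, mul_assoc, coeff_C_mul, coeff_X_pow_mul', if_neg (by omega), mul_zero]

lemma coeff_mul_mon_of_lt {d n : ℕ} (h : n < d) (a : A) (f : A⟦X⟧) :
    coeff n (f * mon d a) = 0 := by
  rw [mon, ← mul_assoc, coeff_mul_X_pow', if_neg (by omega)]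

lemma mon_mul_mon (d e : ℕ) (a b : A) : mon d a * mon e b = mon (d + e) (a * b) := by
  rw [mon, mon, mon, mul_assoc, ← mul_assoc (X ^ d), (commute_X_pow (C b) d).symm.eq, map_mul,
    pow_add]
  simp only [mul_assoc]

lemma smul_mon (r : R) (d : ℕ) (a : A) : r • mon d a = mon d (r • a) := by
  ext n
  simp [mon, coeff_X_pow]

lemma coeff_zero_qexp (Q : R) (a : A) : coeff 0 (qexp Q a) = 1 := by simp [qexp, qc]

section Rules

variable {Q : R}

lemma dilate_qexp (hQ : ∀ j : ℕ, 1 ≤ j → IsUnit (1 - Q ^ j)) (a : A) :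
    dilate Q (qexp Q a) = (1 - mon 1 a) * qexp Q a := by
  rw [sub_mul, one_mul]
  ext n
  rw [map_sub]
  cases n with
  | zero => rw [coeff_mon_mul_of_lt one_pos]; simp [dilate]
  | succ k =>
    rw [coeff_mon_mul]
    simp only [dilate, qexp, coeff_mk, smul_smul, pow_mul_qc_succ hQ, sub_smul, mul_smul_comm,
      ← pow_succ']

lemma one_sub_mon_mul_evenSeries (hQ : ∀ j : ℕ, 1 ≤ j → IsUnit (1 - Q ^ j)) (a : A) :
    (1 - mon 2 a) * evenSeries (qc Q) a = evenSeries (fun k => Q ^ k * qc Q k) a := by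
  rw [sub_mul, one_mul]
  refine ext_even_odd ?_ ?_ (fun k => ?_) (fun k => ?_) <;> rw [map_sub]
  · rw [coeff_mon_mul_of_lt two_pos]; simp [evenSeries]
  · rw [coeff_mon_mul_of_lt one_lt_two]; simp [evenSeries]
  · rw [coeff_mon_mul, coeff_even, show 2 * k + 2 = 2 * (k + 1) by ring, coeff_even, coeff_even,
      pow_mul_qc_succ hQ, sub_smul, mul_smul_comm, ← pow_succ']
  · rw [coeff_mon_mul, coeff_odd, show 2 * k + 1 + 2 = 2 * (k + 1) + 1 by ring, coeff_odd,
      coeff_odd]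
    simp

lemma dilate_evenSeries (hQ : ∀ j : ℕ, 1 ≤ j → IsUnit (1 - Q ^ j)) (a : A) :
    dilate Q (evenSeries (qc Q) a) =
      (1 - Q • mon 2 a) * ((1 - mon 2 a) * evenSeries (qc Q) a) := by
  rw [one_sub_mon_mul_evenSeries hQ, smul_mon, sub_mul, one_mul]
  refine ext_even_odd ?_ ?_ (fun k => ?_) (fun k => ?_) <;> rw [map_sub, dilate, coeff_mk]
  · rw [coeff_mon_mul_of_lt two_pos]; simp [evenSeries]
  · rw [coeff_mon_mul_of_lt one_lt_two]; simp [evenSeries]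
  · rw [coeff_mon_mul, coeff_even, show 2 * k + 2 = 2 * (k + 1) by ring, coeff_even, coeff_even,
      smul_mul_smul_comm, ← pow_succ', smul_smul, ← sub_smul]
    congr 1
    have := pow_mul_qc_succ hQ k
    linear_combination Q ^ (k + 1) * this
  · rw [coeff_mon_mul, coeff_odd, show 2 * k + 1 + 2 = 2 * (k + 1) + 1 by ring, coeff_odd,
      coeff_odd]
    simp

lemma mul_pow_of_qcomm {a b : A} (h : a * b = Q • (b * a)) (k : ℕ) :
    a * b ^ k = Q ^ k • (b ^ k * a) := by
  induction k with
  | zero => simp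
  | succ k ih =>
    rw [pow_succ, ← mul_assoc, ih, smul_mul_assoc, mul_assoc, h, mul_smul_comm, smul_smul,
      ← pow_succ, mul_assoc]

/-- `u E_W = (1 - x) E_W u`. -/
lemma mon_mul_evenSeries (hQ : ∀ j : ℕ, 1 ≤ j → IsUnit (1 - Q ^ j)) {a b : A}
    (h : a * b = Q • (b * a)) :
    mon 1 a * evenSeries (qc Q) b = (1 - mon 2 b) * evenSeries (qc Q) b * mon 1 a := by
  rw [one_sub_mon_mul_evenSeries hQ]
  ext n
  cases n with
  | zero => rw [coeff_mon_mul_of_lt one_pos, coeff_mul_mon_of_lt one_pos]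
  | succ n =>
    rw [coeff_mon_mul, coeff_mul_mon]
    rcases Nat.even_or_odd' n with ⟨k, rfl | rfl⟩
    · rw [coeff_even, coeff_even, mul_smul_comm, mul_pow_of_qcomm h, smul_smul, smul_mul_assoc,
        mul_comm]
    · rw [coeff_odd, coeff_odd]; simp

/-- `x E_V = (1 - v) E_V x`. -/
lemma mon_two_mul_qexp (hQ : ∀ j : ℕ, 1 ≤ j → IsUnit (1 - Q ^ j)) {a b : A}
    (h : b * a = Q • (a * b)) :
    mon 2 b * qexp Q a = (1 - mon 1 a) * qexp Q a * mon 2 b := by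
  rw [← dilate_qexp hQ]
  ext n
  match n with
  | 0 => rw [coeff_mon_mul_of_lt two_pos, coeff_mul_mon_of_lt two_pos]
  | 1 => rw [coeff_mon_mul_of_lt one_lt_two, coeff_mul_mon_of_lt one_lt_two]
  | n + 2 =>
    rw [coeff_mon_mul, coeff_mul_mon]
    simp only [dilate, qexp, coeff_mk, mul_smul_comm, smul_mul_assoc, mul_pow_of_qcomm h]
    rw [smul_comm]

lemma pow_succ_mul_of_rel {U V x : A} (h : U * V = V * U + (1 - Q) • x)
    (hx : U * x = Q • (x * U)) (k : ℕ) :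
    U ^ (k + 1) * V = V * U ^ (k + 1) + (1 - Q ^ (k + 1)) • (x * U ^ k) := by
  induction k with
  | zero => simp [h]
  | succ k ih =>
    rw [pow_succ' U (k + 1), mul_assoc, ih, mul_add, ← mul_assoc, h, mul_smul_comm, ← mul_assoc,
      hx, smul_mul_assoc, add_mul, smul_mul_assoc, mul_assoc, mul_assoc, ← pow_succ', ← pow_succ', smul_smul,
      add_assoc, ← add_smul]
    congr 2
    ring

lemma mul_pow_succ_of_rel {U V x : A} (h : U * V = V * U + (1 - Q) • x)
    (hx : x * V = Q • (V * x)) (k : ℕ) :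
    U * V ^ (k + 1) = V ^ (k + 1) * U + (1 - Q ^ (k + 1)) • (V ^ k * x) := by
  induction k with
  | zero => simp [h]
  | succ k ih =>
    rw [pow_succ V (k + 1), ← mul_assoc, ih, add_mul, mul_assoc, h, smul_mul_assoc, mul_assoc,
      hx, mul_smul_comm, mul_add, mul_smul_comm, ← mul_assoc, ← mul_assoc, ← pow_succ, ← pow_succ, smul_smul,
      add_assoc, ← add_smul]
    congr 2
    ring

/-- `E_U v = (v + x) E_U`. -/
lemma qexp_mul_mon (hQ : ∀ j : ℕ, 1 ≤ j → IsUnit (1 - Q ^ j)) {U V x : A}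
    (h : U * V = V * U + (1 - Q) • x) (hx : U * x = Q • (x * U)) :
    qexp Q U * mon 1 V = (mon 1 V + mon 2 x) * qexp Q U := by
  rw [add_mul]
  ext n
  rw [map_add]
  match n with
  | 0 => rw [coeff_mon_mul_of_lt one_pos, coeff_mul_mon_of_lt one_pos,
      coeff_mon_mul_of_lt two_pos, add_zero]
  | 1 =>
    rw [coeff_mon_mul_of_lt one_lt_two, ← zero_add 1, coeff_mon_mul, coeff_mul_mon,
      coeff_zero_qexp]
    simp
  | n + 2 =>
    rw [coeff_mon_mul, show n + 2 = (n + 1) + 1 by ring, coeff_mon_mul, coeff_mul_mon]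
    simp only [qexp, coeff_mk, smul_mul_assoc, mul_smul_comm]
    rw [pow_succ_mul_of_rel h hx, smul_add, smul_smul, mul_comm, qc_succ hQ]

/-- `u E_V = E_V (u + x)`. -/
lemma mon_mul_qexp (hQ : ∀ j : ℕ, 1 ≤ j → IsUnit (1 - Q ^ j)) {U V x : A}
    (h : U * V = V * U + (1 - Q) • x) (hx : x * V = Q • (V * x)) :
    mon 1 U * qexp Q V = qexp Q V * (mon 1 U + mon 2 x) := by
  rw [mul_add]
  ext n
  rw [map_add]
  match n with
  | 0 => rw [coeff_mon_mul_of_lt one_pos, coeff_mul_mon_of_lt one_pos,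
      coeff_mul_mon_of_lt two_pos, add_zero]
  | 1 =>
    rw [coeff_mul_mon_of_lt one_lt_two, ← zero_add 1, coeff_mon_mul, coeff_mul_mon,
      coeff_zero_qexp]
    simp
  | n + 2 =>
    rw [coeff_mul_mon, show n + 2 = (n + 1) + 1 by ring, coeff_mon_mul, coeff_mul_mon]
    simp only [qexp, coeff_mk, smul_mul_assoc, mul_smul_comm]
    rw [mul_pow_succ_of_rel h hx, smul_add, smul_smul, mul_comm (qc Q (n + 1)), qc_succ hQ]

end Rules

/-- The pentagon identity from the three `q`-commutation relations. -/
lemma pentagon_of_rel {Q : R} (hQ : ∀ j : ℕ, 1 ≤ j → IsUnit (1 - Q ^ j)) {U V x : A}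
    (h : U * V = V * U + (1 - Q) • x) (hUx : U * x = Q • (x * U)) (hxV : x * V = Q • (V * x)) :
    qexp Q U * qexp Q V = qexp Q V * evenSeries (qc Q) x * qexp Q U := by
  refine eq_of_dilate_eq hQ (P := (1 - mon 1 U) * (1 - mon 1 V - mon 2 x)) ?_ ?_ ?_ ?_
  · simp [mon]
  · rw [dilate_mul, dilate_qexp hQ, dilate_qexp hQ, dilate_left (qexp_mul_mon hQ h hUx)]
  · rw [dilate_mul, dilate_mul, dilate_qexp hQ, dilate_qexp hQ, dilate_evenSeries hQ]
    refine dilate_right ?_ ?_ (mon_mul_evenSeries hQ hUx) (mon_mul_qexp hQ h hxV)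
      (mon_two_mul_qexp hQ hxV)
    · rw [mon_mul_mon, mon_mul_mon, smul_mon, h, mon, map_add, add_mul]
    · rw [mon_mul_mon, mon_mul_mon, smul_mon, hUx]
  · have hw : coeff 0 (evenSeries (qc Q) x) = 1 := by simp [evenSeries, qc]
    have hU := coeff_zero_qexp Q U
    have hV := coeff_zero_qexp Q V
    rw [coeff_zero_eq_constantCoeff_apply] at *
    simp [hw, hU, hV]

end QPentagon

/-- The pentagon identity for the q-exponential series: if `1 - Q^j` is a unit in `R` for all
`j ≥ 1`, and `W = U*V - Q•(V*U)` commutes with both `U` and `V`, then with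
`c k = ∏_{j=1}^{k} (1 - Q^j)⁻¹`, the formal power series
`E_U = ∑ c_k U^k t^k`, `E_V = ∑ c_k V^k t^k`, and
`E_W = ∑ c_k ((1-Q)⁻¹ • (U*V - V*U))^k t^{2k}` in `A⟦t⟧` satisfy `E_U * E_V = E_V * E_W * E_U`. -/
theorem q_exponential_pentagon (R : Type*) [CommRing R] (Q : R)
    (hQ : ∀ j : ℕ, 1 ≤ j → IsUnit (1 - Q ^ j))
    (A : Type*) [Ring A] [Algebra R A] (U V : A)
    (hWU : (U * V - Q • (V * U)) * U = U * (U * V - Q • (V * U)))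
    (hWV : (U * V - Q • (V * U)) * V = V * (U * V - Q • (V * U))) :
    let c : ℕ → R := fun k => ∏ j ∈ Finset.range k, Ring.inverse (1 - Q ^ (j + 1))
    let EU : PowerSeries A := PowerSeries.mk fun k => c k • U ^ k
    let EV : PowerSeries A := PowerSeries.mk fun k => c k • V ^ k
    let W : A := Ring.inverse (1 - Q) • (U * V - V * U)
    let EW : PowerSeries A := PowerSeries.mk fun n => if Even n then c (n / 2) • W ^ (n / 2) else 0
    EU * EV = EV * EW * EU := by
  intro c EU EV W EW
  have hu : IsUnit (1 - Q) := by simpa using hQ 1 le_rfl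
  have hW : (1 - Q) • W = U * V - V * U := by
    rw [smul_smul, Ring.mul_inverse_cancel _ hu, one_smul]
  have h : U * V = V * U + (1 - Q) • W := by rw [hW]; abel
  refine QPentagon.pentagon_of_rel hQ h (hu.smul_left_cancel.1 ?_) (hu.smul_left_cancel.1 ?_)
  -- Scaled by `1 - Q`, the two `q`-commutation relations say that `U * V - Q • (V * U)` commutes
  -- with `U` and with `V`.
  · rw [← mul_smul_comm, smul_comm (1 - Q) Q, ← smul_mul_assoc, hW]
    simp only [sub_mul, mul_sub, smul_mul_assoc, mul_smul_comm, smul_sub, mul_assoc] at hWU ⊢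
    linear_combination (norm := module) -hWU
  · rw [← smul_mul_assoc, smul_comm (1 - Q) Q, ← mul_smul_comm, hW]
    simp only [sub_mul, mul_sub, smul_mul_assoc, mul_smul_comm, smul_sub, mul_assoc] at hWV ⊢
    linear_combination (norm := module) hWV
end

section
/- Let p ≥ 3 be an odd integer and q ∈ ℂ a primitive p-th root of unity. Let B be the quotient of the free ℂ-algebra on three generators k_α, k_β, e₊ by the two-sided ideal generated by k_α^p − 1, k_β^p − 1, k_α k_β − k_β k_α, k_α e₊ − e₊ k_α, k_β e₊ − q·e₊ k_β, and e₊². Then the images of the 2p² monomials k_α^n k_β^m e₊^r with 0 ≤ n, m ≤ p−1 and r ∈ {0,1} form a ℂ-vector-space basis of B; in particular B is finite-dimensional of dimension 2p². -/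
/-!
The defining relations allow every word in the generators to be reordered into a scalar multiple of
`k_α^i k_β^j e₊^k`, with `i, j` taken modulo `p` and `k ≤ 1`; hence the monomials span: their span
contains `1` and is stable under left multiplication by the generators (`mul_mem_span_mono`).

Linear independence is seen in an explicit representation on functions
`u : ℤ/p × ℤ/p × {0,1} → ℂ`.  On the basis vectors `[n,m,r]` (indicator functions) it is
`k_α [n,m,r] = [n+1,m,r]`, `k_β [n,m,r] = q^r [n,m+1,r]`, `e₊ [n,m,0] = [n,m,1]`, `e₊ [n,m,1] = 0`.
The relations hold, using `q^p = 1`, and the monomial `k_α^n k_β^m e₊^r` sends `[0,0,0]` to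
`q^(r m) [n,m,r]`: nonzero multiples of distinct basis vectors (`rep_mono_v0`).
-/

noncomputable section

namespace Stmt3

/-- The free `ℂ`-algebra on the three generators `k_α, k_β, e₊`. -/
abbrev F : Type := FreeAlgebra ℂ (Fin 3)

def ka : F := FreeAlgebra.ι ℂ 0
def kb : F := FreeAlgebra.ι ℂ 1
def ep : F := FreeAlgebra.ι ℂ 2

/-- The defining relations of the Borel half of restricted `U_q(gl(1|1))`:
`k_α^p = k_β^p = 1`, `k_α k_β = k_β k_α`, `k_α e₊ = e₊ k_α`, `k_β e₊ = q e₊ k_β`, `e₊² = 0`. -/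
inductive Rel (p : ℕ) (q : ℂ) : F → F → Prop
  | ka_pow : Rel p q (ka ^ p) 1
  | kb_pow : Rel p q (kb ^ p) 1
  | ka_kb : Rel p q (ka * kb) (kb * ka)
  | ka_ep : Rel p q (ka * ep) (ep * ka)
  | kb_ep : Rel p q (kb * ep) (q • (ep * kb))
  | ep_sq : Rel p q (ep * ep) 0

end Stmt3

namespace Stmt3

/-- The space of the representation; `u n m r` is the coefficient of `u` at `[n,m,r]`. -/
abbrev V (p : ℕ) : Type := ZMod p → ZMod p → Fin 2 → ℂ

/-- The action of `k_α`: `[n,m,r] ↦ [n+1,m,r]`. -/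
def opA (p : ℕ) : Module.End ℂ (V p) where
  toFun u n m r := u (n - 1) m r
  map_add' _ _ := rfl
  map_smul' _ _ := rfl

/-- The action of `k_β`: `[n,m,r] ↦ q^r [n,m+1,r]`. -/
def opB (p : ℕ) (q : ℂ) : Module.End ℂ (V p) where
  toFun u n m r := q ^ (r : ℕ) * u n (m - 1) r
  map_add' u v := by
    funext n m r
    simp [mul_add]
  map_smul' c u := by
    funext n m r
    simp [mul_left_comm]

/-- The action of `e₊`: `[n,m,0] ↦ [n,m,1]` and `[n,m,1] ↦ 0`. -/
def opE (p : ℕ) : Module.End ℂ (V p) where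
  toFun u n m r := if r = 1 then u n m 0 else 0
  map_add' u v := by
    funext n m r
    by_cases h : r = 1 <;> simp [h]
  map_smul' c u := by
    funext n m r
    by_cases h : r = 1 <;> simp [h]

lemma opA_pow (p a : ℕ) (u : V p) (n m : ZMod p) (r : Fin 2) :
    (opA p ^ a) u n m r = u (n - a) m r := by
  induction a generalizing u with
  | zero => simp
  | succ a ih =>
    rw [pow_succ, Module.End.mul_apply, ih]
    simp [opA, sub_sub]

lemma opB_pow (p a : ℕ) (q : ℂ) (u : V p) (n m : ZMod p) (r : Fin 2) :
    (opB p q ^ a) u n m r = (q ^ (r : ℕ)) ^ a * u n (m - a) r := by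
  induction a generalizing u with
  | zero => simp
  | succ a ih =>
    rw [pow_succ, Module.End.mul_apply, ih]
    simp [opB, sub_sub, pow_succ, mul_assoc]

/-- The representation of the quotient algebra on `V p`. -/
def rep (p : ℕ) (q : ℂ) (hq : q ^ p = 1) : RingQuot (Rel p q) →ₐ[ℂ] Module.End ℂ (V p) :=
  RingQuot.liftAlgHom ℂ ⟨FreeAlgebra.lift ℂ ![opA p, opB p q, opE p], by
    intro x y h
    induction h with
    | ka_pow =>
      ext u n m r
      simp [ka, opA_pow]
    | kb_pow =>
      ext u n m r
      simp [kb, opB_pow, pow_right_comm q _ p, hq]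
    | ka_kb =>
      ext u n m r
      simp [ka, kb, opA, opB]
    | ka_ep =>
      ext u n m r
      simp [ka, ep, opA, opE]
    | kb_ep =>
      ext u n m r
      by_cases h : r = 1 <;> simp [kb, ep, opB, opE, h]
    | ep_sq =>
      ext u n m r
      simp [ep, opE]⟩

lemma rep_ka (p : ℕ) (q : ℂ) (hq : q ^ p = 1) :
    rep p q hq (RingQuot.mkAlgHom ℂ (Rel p q) ka) = opA p := by
  simp [rep, ka]

lemma rep_kb (p : ℕ) (q : ℂ) (hq : q ^ p = 1) :
    rep p q hq (RingQuot.mkAlgHom ℂ (Rel p q) kb) = opB p q := by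
  simp [rep, kb]

lemma rep_ep (p : ℕ) (q : ℂ) (hq : q ^ p = 1) :
    rep p q hq (RingQuot.mkAlgHom ℂ (Rel p q) ep) = opE p := by
  simp [rep, ep]

/-- The basis vector `[0,0,0]`. -/
def v0 (p : ℕ) : V p := fun n m r => if n = 0 ∧ m = 0 ∧ r = 0 then 1 else 0

lemma opE_pow_v0 (p : ℕ) (s : Fin 2) (n m : ZMod p) (r : Fin 2) :
    (opE p ^ (s : ℕ)) (v0 p) n m r = if n = 0 ∧ m = 0 ∧ r = s then 1 else 0 := by
  fin_cases s <;> fin_cases r <;> simp [opE, v0]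

/-- The monomial `k_α^i k_β^j e₊^k` in the quotient algebra. -/
def mono (p : ℕ) (q : ℂ) (i j k : ℕ) : RingQuot (Rel p q) :=
  RingQuot.mkAlgHom ℂ (Rel p q) ka ^ i * RingQuot.mkAlgHom ℂ (Rel p q) kb ^ j *
    RingQuot.mkAlgHom ℂ (Rel p q) ep ^ k

/-- The monomial `k_α^a k_β^b e₊^s` sends `[0,0,0]` to `q^(s b) [a,b,s]`. -/
lemma rep_mono_v0 (p : ℕ) (q : ℂ) (hq : q ^ p = 1) (a b : ℕ) (s : Fin 2)
    (n m : ZMod p) (r : Fin 2) :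
    rep p q hq (mono p q a b s) (v0 p) n m r =
      if n = a ∧ m = b ∧ r = s then (q ^ (r : ℕ)) ^ b else 0 := by
  simp only [mono, map_mul, map_pow, rep_ka, rep_kb, rep_ep, Module.End.mul_apply, opA_pow,
    opB_pow, opE_pow_v0, sub_eq_zero, mul_ite, mul_one, mul_zero]

lemma natCast_fin_inj {p : ℕ} (a b : Fin p) : ((a : ℕ) : ZMod p) = ((b : ℕ) : ZMod p) ↔ a = b := by
  rw [ZMod.natCast_eq_natCast_iff', Nat.mod_eq_of_lt a.2, Nat.mod_eq_of_lt b.2, Fin.ext_iff]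

lemma linearIndependent_mono (p : ℕ) (q : ℂ) (hq : q ^ p = 1) (hq0 : q ≠ 0) :
    LinearIndependent ℂ (fun x : Fin p × Fin p × Fin 2 => mono p q x.1 x.2.1 x.2.2) := by
  rw [Fintype.linearIndependent_iff]
  rintro g hg ⟨a, b, s⟩
  -- the coefficient at `[a,b,s]` of the relation applied to `[0,0,0]`
  have h := congrArg (fun z => rep p q hq z (v0 p) (a : ℕ) (b : ℕ) s) hg
  simp only [map_sum, map_smul, LinearMap.sum_apply, LinearMap.smul_apply, Finset.sum_apply,
    Pi.smul_apply, rep_mono_v0, natCast_fin_inj, map_zero, LinearMap.zero_apply,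
    Pi.zero_apply] at h
  rw [Finset.sum_eq_single (a, b, s)] at h
  · simpa [hq0] using h
  · rintro ⟨a', b', s'⟩ - hne
    rw [if_neg, smul_zero]
    rintro ⟨rfl, rfl, rfl⟩
    exact hne rfl
  · simp

section relations

variable (p : ℕ) (q : ℂ)

local notation "π" => RingQuot.mkAlgHom ℂ (Rel p q)

lemma ka_pow_p : (π ka) ^ p = 1 := by
  simpa using RingQuot.mkAlgHom_rel ℂ (Rel.ka_pow (p := p) (q := q))

lemma kb_pow_p : (π kb) ^ p = 1 := by
  simpa using RingQuot.mkAlgHom_rel ℂ (Rel.kb_pow (p := p) (q := q))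

lemma commute_ka_kb : Commute (π ka) (π kb) := by
  simpa [Commute, SemiconjBy] using RingQuot.mkAlgHom_rel ℂ (Rel.ka_kb (p := p) (q := q))

lemma commute_ka_ep : Commute (π ka) (π ep) := by
  simpa [Commute, SemiconjBy] using RingQuot.mkAlgHom_rel ℂ (Rel.ka_ep (p := p) (q := q))

lemma kb_mul_ep : π kb * π ep = q • (π ep * π kb) := by
  simpa using RingQuot.mkAlgHom_rel ℂ (Rel.kb_ep (p := p) (q := q))

lemma ep_mul_ep : π ep * π ep = 0 := by
  simpa using RingQuot.mkAlgHom_rel ℂ (Rel.ep_sq (p := p) (q := q))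

lemma kb_pow_mul_ep (j : ℕ) : π kb ^ j * π ep = q ^ j • (π ep * π kb ^ j) := by
  induction j with
  | zero => simp
  | succ j ih =>
    rw [pow_succ', mul_assoc, ih, mul_smul_comm, ← mul_assoc, kb_mul_ep, smul_mul_assoc,
      smul_smul, ← pow_succ, mul_assoc]

lemma ka_mul_mono (i j k : ℕ) : π ka * mono p q i j k = mono p q (i + 1) j k := by
  simp only [mono, pow_succ', mul_assoc]

lemma kb_mul_mono (i j k : ℕ) : π kb * mono p q i j k = mono p q i (j + 1) k := by
  simp only [mono, pow_succ' _ j, ← mul_assoc]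
  rw [((commute_ka_kb p q).pow_left i).eq]

lemma ep_mul_mono (hq0 : q ≠ 0) (i j k : ℕ) :
    π ep * mono p q i j k = (q ^ j)⁻¹ • mono p q i j (k + 1) := by
  have h : mono p q i j (k + 1) = q ^ j • (π ep * mono p q i j k) := by
    simp only [mono, pow_succ' _ k, ← mul_assoc]
    rw [mul_assoc _ (π kb ^ j) (π ep), kb_pow_mul_ep, mul_smul_comm, smul_mul_assoc, ← mul_assoc,
      ((commute_ka_ep p q).pow_left i).eq]
  rw [h, smul_smul, inv_mul_cancel₀ (pow_ne_zero _ hq0), one_smul]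

/-- Monomials with arbitrary exponents lie in the span of the `2p²` reduced ones: exponents of
`k_α`, `k_β` are reduced modulo `p`, and the monomial vanishes when `k ≥ 2`. -/
lemma mono_mem_span (hp : 0 < p) (i j k : ℕ) :
    mono p q i j k ∈ Submodule.span ℂ
      (Set.range fun x : Fin p × Fin p × Fin 2 => mono p q x.1 x.2.1 x.2.2) := by
  rcases lt_or_ge k 2 with hk | hk
  · refine Submodule.subset_span
      ⟨(⟨i % p, Nat.mod_lt _ hp⟩, ⟨j % p, Nat.mod_lt _ hp⟩, ⟨k, hk⟩), ?_⟩
    simp only [mono]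
    rw [← pow_eq_pow_mod i (ka_pow_p p q), ← pow_eq_pow_mod j (kb_pow_p p q)]
  · obtain ⟨l, rfl⟩ := Nat.exists_eq_add_of_le hk
    have h : mono p q i j (2 + l) = 0 := by
      simp [mono, pow_add, pow_two, ep_mul_ep]
    rw [h]
    exact Submodule.zero_mem _

/-- The span of the reduced monomials is a left ideal. -/
lemma mul_mem_span_mono (hp : 0 < p) (hq0 : q ≠ 0) (a : F) :
    ∀ s ∈ Submodule.span ℂ
      (Set.range fun x : Fin p × Fin p × Fin 2 => mono p q x.1 x.2.1 x.2.2),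
    π a * s ∈ Submodule.span ℂ
      (Set.range fun x : Fin p × Fin p × Fin 2 => mono p q x.1 x.2.1 x.2.2) := by
  induction a using FreeAlgebra.induction with
  | grade0 c =>
    intro s hs
    rw [AlgHom.commutes, ← Algebra.smul_def]
    exact Submodule.smul_mem _ _ hs
  | add a b ha hb =>
    intro s hs
    rw [map_add, add_mul]
    exact Submodule.add_mem _ (ha s hs) (hb s hs)
  | mul a b ha hb =>
    intro s hs
    rw [map_mul, mul_assoc]
    exact ha _ (hb s hs)
  | grade1 g =>
    intro s hs
    induction hs using Submodule.span_induction with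
    | zero => simp
    | add x y _ _ hx hy =>
      rw [mul_add]
      exact Submodule.add_mem _ hx hy
    | smul c x _ hx =>
      rw [mul_smul_comm]
      exact Submodule.smul_mem _ _ hx
    | mem x hx =>
      obtain ⟨⟨n, m, r⟩, rfl⟩ := hx
      fin_cases g
      · change π ka * mono p q n m r ∈ _
        rw [ka_mul_mono]
        exact mono_mem_span p q hp _ _ _
      · change π kb * mono p q n m r ∈ _
        rw [kb_mul_mono]
        exact mono_mem_span p q hp _ _ _
      · change π ep * mono p q n m r ∈ _
        rw [ep_mul_mono p q hq0]
        exact Submodule.smul_mem _ _ (mono_mem_span p q hp _ _ _)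

lemma span_mono (hp : 0 < p) (hq0 : q ≠ 0) :
    Submodule.span ℂ
      (Set.range fun x : Fin p × Fin p × Fin 2 => mono p q x.1 x.2.1 x.2.2) = ⊤ := by
  rw [eq_top_iff]
  rintro b -
  obtain ⟨a, rfl⟩ := RingQuot.mkAlgHom_surjective ℂ (Rel p q) b
  have h1 : mono p q 0 0 0 = 1 := by simp [mono]
  have h := mul_mem_span_mono p q hp hq0 a _ (mono_mem_span p q hp 0 0 0)
  rwa [h1, mul_one] at h

end relations

end Stmt3

open Stmt3 in
/-- The images of the `2p²` monomials `k_α^n k_β^m e₊^r` (`0 ≤ n,m ≤ p-1`, `r ∈ {0,1}`) form a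
`ℂ`-vector-space basis of the Borel half `B` of restricted `U_q(gl(1|1))`; in particular
`B` has dimension `2p²`. -/
theorem borel_half_gl11_basis (p : ℕ) (hp : 3 ≤ p) (hodd : Odd p) (q : ℂ)
    (hq : IsPrimitiveRoot q p) :
    let π := RingQuot.mkAlgHom ℂ (Rel p q)
    let f : Fin p × Fin p × Fin 2 → RingQuot (Rel p q) := fun x =>
      π ka ^ (x.1 : ℕ) * π kb ^ (x.2.1 : ℕ) * π ep ^ (x.2.2 : ℕ)
    LinearIndependent ℂ f ∧ Submodule.span ℂ (Set.range f) = ⊤ ∧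
      Module.finrank ℂ (RingQuot (Rel p q)) = 2 * p ^ 2 := by
  intro π f
  have hp0 : 0 < p := by omega
  have hq0 : q ≠ 0 := hq.ne_zero hp0.ne'
  have hli : LinearIndependent ℂ f := linearIndependent_mono p q hq.pow_eq_one hq0
  have hspan : Submodule.span ℂ (Set.range f) = ⊤ := span_mono p q hp0 hq0
  refine ⟨hli, hspan, ?_⟩
  have h := finrank_span_eq_card hli
  rw [hspan, finrank_top] at h
  rw [h]
  simp only [Fintype.card_prod, Fintype.card_fin]
  ring
end
end

section
/- Let p ≥ 3 be an odd integer and q ∈ ℂ a primitive p-th root of unity. Let U be the quotient of the free ℂ-algebra on four generators k_α, k_β, e₊, e₋ by the two-sided ideal generated by k_α^p − 1, k_β^p − 1, k_α k_β − k_β k_α, k_α e₊ − e₊ k_α, k_α e₋ − e₋ k_α, k_β e₊ − q·e₊ k_β, k_β e₋ − q^{−1}·e₋ k_β, e₊², e₋², and e₊e₋ + e₋e₊ − (q − q^{−1})^{−1}·(k_α − k_α^{p−1}). Then the images of the 4p² monomials k_α^n k_β^m e₊^r e₋^s with 0 ≤ n, m ≤ p−1 and r, s ∈ {0,1} form a ℂ-vector-space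 basis of U; in particular U is finite-dimensional of dimension 4p². -/
/-!
The monomials span because their span contains `1` and is stable under left multiplication by the
four generators: the relations let `k_α` and `k_β` be pulled to the left past `e₊`, `e₋` at the cost
of a power of `q`, and `e₋ e₊` be rewritten as a polynomial in `k_α` minus `e₊ e₋`
(`monomials_span`).

For linear independence, each pair `(a, b)` of `p`-th roots of unity gives a four-dimensional
representation (`rep`): the module induced from the character `k_α ↦ a`, `k_β ↦ b`, with basis
`v, e₊ v, e₋ v, e₊ e₋ v`. The monomial `k_α^n k_β^m e₊^r e₋^s` sends `v` to
`a^n (q^(r-s) b)^m e₊^r e₋^s v`. Hence a linear relation `∑ g(n,m,r,s) k_α^n k_β^m e₊^r e₋^s = 0`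
gives `∑ g(n,m,r,s) a^n (q^(r-s) b)^m = 0` for each `r, s` and all `p`-th roots of unity `a, b`, and
two applications of Vandermonde invertibility force `g = 0`.
-/

noncomputable section

namespace Stmt4

/-- The free `ℂ`-algebra on the four generators `k_α, k_β, e₊, e₋`. -/
abbrev F : Type := FreeAlgebra ℂ (Fin 4)

def ka : F := FreeAlgebra.ι ℂ 0
def kb : F := FreeAlgebra.ι ℂ 1
def ep : F := FreeAlgebra.ι ℂ 2
def em : F := FreeAlgebra.ι ℂ 3

/-- The defining relations of the restricted quantum supergroup `U_q(gl(1|1))`. -/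
inductive Rel (p : ℕ) (q : ℂ) : F → F → Prop
  | ka_pow : Rel p q (ka ^ p) 1
  | kb_pow : Rel p q (kb ^ p) 1
  | ka_kb : Rel p q (ka * kb) (kb * ka)
  | ka_ep : Rel p q (ka * ep) (ep * ka)
  | ka_em : Rel p q (ka * em) (em * ka)
  | kb_ep : Rel p q (kb * ep) (q • (ep * kb))
  | kb_em : Rel p q (kb * em) (q⁻¹ • (em * kb))
  | ep_sq : Rel p q (ep * ep) 0
  | em_sq : Rel p q (em * em) 0
  | ep_em : Rel p q (ep * em + em * ep) ((q - q⁻¹)⁻¹ • (ka - ka ^ (p - 1)))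

/-! ### Spanning -/

section Span

variable {R : Type*} [Ring R] [Algebra ℂ R]

/-- In any algebra satisfying the relations, a generator times an ordered monomial lies in every
subspace `S` containing all ordered monomials. The exponents in `hS` are arbitrary natural numbers,
so the relations `k_α^p = k_β^p = 1` play no role here. -/
lemma left_stable {p : ℕ} {q : ℂ} (hq0 : q ≠ 0) {A B E G : R}
    (hAB : A * B = B * A) (hAE : A * E = E * A) (hAG : A * G = G * A)
    (hBE : B * E = q • (E * B)) (hBG : B * G = q⁻¹ • (G * B))
    (hE : E * E = 0) (c : ℂ) (hEG : E * G + G * E = c • (A - A ^ (p - 1)))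
    (S : Submodule ℂ R) (hS : ∀ n m r s : ℕ, A ^ n * B ^ m * E ^ r * G ^ s ∈ S)
    (n m r s : ℕ) :
    A * (A ^ n * B ^ m * E ^ r * G ^ s) ∈ S ∧ B * (A ^ n * B ^ m * E ^ r * G ^ s) ∈ S ∧
    E * (A ^ n * B ^ m * E ^ r * G ^ s) ∈ S ∧ G * (A ^ n * B ^ m * E ^ r * G ^ s) ∈ S := by
  have cAB : Commute A B := hAB
  have cAE : Commute A E := hAE
  have cAG : Commute A G := hAG
  have hEB : E * B = q⁻¹ • (B * E) := by rw [hBE, smul_smul, inv_mul_cancel₀ hq0, one_smul]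
  have hGB : G * B = q • (B * G) := by rw [hBG, smul_smul, mul_inv_cancel₀ hq0, one_smul]
  have hEBm : ∀ m : ℕ, E * B ^ m = (q⁻¹) ^ m • (B ^ m * E) := by
    intro m
    induction m with
    | zero => simp
    | succ k ih =>
      rw [pow_succ, ← mul_assoc, ih, smul_mul_assoc, mul_assoc, hEB, mul_smul_comm, smul_smul,
        ← pow_succ, ← mul_assoc]
  have hGBm : ∀ m : ℕ, G * B ^ m = q ^ m • (B ^ m * G) := by
    intro m
    induction m with
    | zero => simp
    | succ k ih =>
      rw [pow_succ, ← mul_assoc, ih, smul_mul_assoc, mul_assoc, hGB, mul_smul_comm, smul_smul,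
        ← pow_succ, ← mul_assoc]
  refine ⟨?_, ?_, ?_, ?_⟩
  · have := hS (n + 1) m r s
    rwa [pow_succ', mul_assoc, mul_assoc, mul_assoc, ← mul_assoc (A ^ n), ← mul_assoc (A ^ n * B ^ m)]
      at this
  · have := hS n (m + 1) r s
    rwa [pow_succ', ← mul_assoc, (cAB.pow_left n).eq, mul_assoc B, mul_assoc B, mul_assoc B] at this
  · have := S.smul_mem ((q⁻¹) ^ m) (hS n m (r + 1) s)
    have h : E * (A ^ n * B ^ m * E ^ r * G ^ s)
        = (q⁻¹) ^ m • (A ^ n * B ^ m * E ^ (r + 1) * G ^ s) := by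
      calc _ = (E * A ^ n) * B ^ m * E ^ r * G ^ s := by simp only [mul_assoc]
        _ = A ^ n * (E * B ^ m) * E ^ r * G ^ s := by
          rw [← (cAE.pow_left n).eq]; simp only [mul_assoc]
        _ = _ := by
          rw [hEBm]; simp only [pow_succ', mul_assoc, smul_mul_assoc, mul_smul_comm]
    rwa [h]
  · have h : G * (A ^ n * B ^ m * E ^ r * G ^ s)
        = q ^ m • (A ^ n * B ^ m * (G * E ^ r) * G ^ s) := by
      calc _ = (G * A ^ n) * B ^ m * E ^ r * G ^ s := by simp only [mul_assoc]
        _ = A ^ n * (G * B ^ m) * E ^ r * G ^ s := by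
          rw [← (cAG.pow_left n).eq]; simp only [mul_assoc]
        _ = _ := by
          rw [hGBm]; simp only [mul_assoc, smul_mul_assoc, mul_smul_comm]
    rw [h]
    apply S.smul_mem
    match r with
    | 0 =>
      have := hS n m 0 (s + 1)
      simpa [pow_succ', mul_assoc] using this
    | 1 =>
      have hGE : G * E = c • (A - A ^ (p - 1)) - E * G := by rw [← hEG]; abel
      have h2 : A ^ n * B ^ m * (G * E ^ 1) * G ^ s
          = c • (A ^ (n + 1) * B ^ m * E ^ 0 * G ^ s)
            - c • (A ^ (n + (p - 1)) * B ^ m * E ^ 0 * G ^ s)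
            - A ^ n * B ^ m * E ^ 1 * G ^ (s + 1) := by
        have e1 : A ^ n * B ^ m * A = A ^ (n + 1) * B ^ m := by
          rw [mul_assoc, ← (cAB.pow_right m).eq, ← mul_assoc, pow_succ]
        have e2 : A ^ n * B ^ m * A ^ (p - 1) = A ^ (n + (p - 1)) * B ^ m := by
          rw [mul_assoc, ← (cAB.pow_pow (p - 1) m).eq, ← mul_assoc, pow_add]
        rw [pow_one, hGE, mul_sub, mul_smul_comm, mul_sub, e1, e2, pow_succ' G]
        simp only [pow_zero, mul_one, smul_sub, sub_mul, smul_mul_assoc, mul_assoc]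
      rw [h2]
      exact S.sub_mem (S.sub_mem (S.smul_mem _ (hS _ _ _ _)) (S.smul_mem _ (hS _ _ _ _)))
        (hS _ _ _ _)
    | r + 2 =>
      have : E ^ (r + 2) = 0 := by rw [pow_add, pow_two, hE, mul_zero]
      simp [this]

end Span

/-- The monomials with exponents in the stated ranges span the quotient algebra: their span contains
`1` and is a left ideal. -/
lemma monomials_span (p : ℕ) (hp : 0 < p) (q : ℂ) (hq0 : q ≠ 0) :
    let π := RingQuot.mkAlgHom ℂ (Rel p q)
    Submodule.span ℂ (Set.range fun x : Fin p × Fin p × Fin 2 × Fin 2 =>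
      π ka ^ (x.1 : ℕ) * π kb ^ (x.2.1 : ℕ) * π ep ^ (x.2.2.1 : ℕ) * π em ^ (x.2.2.2 : ℕ)) = ⊤ := by
  intro π
  set f := fun x : Fin p × Fin p × Fin 2 × Fin 2 =>
      π ka ^ (x.1 : ℕ) * π kb ^ (x.2.1 : ℕ) * π ep ^ (x.2.2.1 : ℕ) * π em ^ (x.2.2.2 : ℕ) with hf
  have rel : ∀ {x y : F}, Rel p q x y → π x = π y := fun h => RingQuot.mkAlgHom_rel ℂ h
  have hA : π ka ^ p = 1 := by simpa using rel (.ka_pow (p := p) (q := q))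
  have hB : π kb ^ p = 1 := by simpa using rel (.kb_pow (p := p) (q := q))
  have hE : π ep * π ep = 0 := by simpa using rel (.ep_sq (p := p) (q := q))
  have hG : π em * π em = 0 := by simpa using rel (.em_sq (p := p) (q := q))
  have hS : ∀ n m r s : ℕ, π ka ^ n * π kb ^ m * π ep ^ r * π em ^ s
      ∈ Submodule.span ℂ (Set.range f) := by
    intro n m r s
    by_cases hr : r < 2
    · by_cases hs : s < 2
      · rw [pow_eq_pow_mod n hA, pow_eq_pow_mod m hB]
        exact Submodule.subset_span
          ⟨(⟨n % p, Nat.mod_lt _ hp⟩, ⟨m % p, Nat.mod_lt _ hp⟩, ⟨r, hr⟩, ⟨s, hs⟩), rfl⟩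
      · obtain ⟨t, rfl⟩ := Nat.exists_eq_add_of_le (not_lt.mp hs)
        rw [pow_add (π em), pow_two, hG]; simp
    · obtain ⟨t, rfl⟩ := Nat.exists_eq_add_of_le (not_lt.mp hr)
      rw [pow_add (π ep), pow_two, hE]; simp
  have stable := left_stable (p := p) hq0
    (by simpa using rel (.ka_kb (p := p) (q := q)))
    (by simpa using rel (.ka_ep (p := p) (q := q)))
    (by simpa using rel (.ka_em (p := p) (q := q)))
    (by simpa using rel (.kb_ep (p := p) (q := q)))
    (by simpa using rel (.kb_em (p := p) (q := q))) hE (q - q⁻¹)⁻¹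
    (by simpa only [map_add, map_mul, map_smul, map_sub, map_pow]
          using rel (.ep_em (p := p) (q := q))) _ hS
  have gen : ∀ i : Fin 4, ∀ y ∈ Submodule.span ℂ (Set.range f),
      π (FreeAlgebra.ι ℂ i) * y ∈ Submodule.span ℂ (Set.range f) := by
    intro i y hy
    induction hy using Submodule.span_induction with
    | mem x hx =>
      obtain ⟨x, rfl⟩ := hx
      have := stable x.1 x.2.1 x.2.2.1 x.2.2.2
      fin_cases i
      exacts [this.1, this.2.1, this.2.2.1, this.2.2.2]
    | zero => simp
    | add x y _ _ hx hy => rw [mul_add]; exact Submodule.add_mem _ hx hy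
    | smul a x _ hx => rw [mul_smul_comm]; exact Submodule.smul_mem _ _ hx
  have all : ∀ w : F, ∀ y ∈ Submodule.span ℂ (Set.range f),
      π w * y ∈ Submodule.span ℂ (Set.range f) := by
    intro w
    induction w using FreeAlgebra.induction with
    | grade0 r =>
      intro y hy
      rw [AlgHom.commutes, ← Algebra.smul_def]; exact Submodule.smul_mem _ _ hy
    | grade1 i => exact gen i
    | mul a b ha hb => intro y hy; rw [map_mul, mul_assoc]; exact ha _ (hb _ hy)
    | add a b ha hb =>
      intro y hy; rw [map_add, add_mul]; exact Submodule.add_mem _ (ha _ hy) (hb _ hy)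
  rw [eq_top_iff]
  intro x _
  obtain ⟨w, rfl⟩ := RingQuot.mkAlgHom_surjective ℂ (Rel p q) x
  have := all w 1 (by simpa using hS 0 0 0 0)
  rwa [mul_one] at this

/-! ### Induced four-dimensional representations -/

/-- The scalar by which `e₊ e₋ + e₋ e₊` acts where `k_α` acts by `a`. -/
def cs (p : ℕ) (q a : ℂ) : ℂ := (q - q⁻¹)⁻¹ * (a - a ^ (p - 1))

/-- The matrices of `k_α, k_β, e₊, e₋` (in this order) on the module induced from the character
`k_α ↦ a, k_β ↦ b`, in the basis `v, e₊ v, e₋ v, e₊ e₋ v`. -/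
def mats (p : ℕ) (q a b : ℂ) : Fin 4 → Matrix (Fin 4) (Fin 4) ℂ :=
  ![Matrix.diagonal fun _ => a,
    Matrix.diagonal ![b, q * b, q⁻¹ * b, b],
    !![0, 0, 0, 0; 1, 0, 0, 0; 0, 0, 0, 0; 0, 0, 1, 0],
    !![0, cs p q a, 0, 0; 0, 0, 0, 0; 1, 0, 0, cs p q a; 0, -1, 0, 0]]

lemma mats_rel (p : ℕ) (q a b : ℂ) (hq0 : q ≠ 0) (hq : q ^ p = 1) (ha : a ^ p = 1)
    (hb : b ^ p = 1) ⦃x y : F⦄ (h : Rel p q x y) :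
    FreeAlgebra.lift ℂ (mats p q a b) x = FreeAlgebra.lift ℂ (mats p q a b) y := by
  have diag : ∀ n : ℕ, (Matrix.diagonal fun _ : Fin 4 => a) ^ n
      = Matrix.diagonal fun _ => a ^ n := by
    intro n; rw [Matrix.diagonal_pow]; rfl
  cases h <;>
    simp only [ka, kb, ep, em, map_mul, map_pow, map_add, map_sub, map_smul, map_one, map_zero,
      FreeAlgebra.lift_ι_apply, mats, Matrix.cons_val]
  case ka_pow => rw [diag, ha, Matrix.diagonal_one]
  case kb_pow =>
    rw [Matrix.diagonal_pow, ← Matrix.diagonal_one]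
    congr 1
    ext i
    fin_cases i <;> simp [mul_pow, hq, hb]
  case ep_em =>
    rw [diag]
    ext i j
    fin_cases i <;> fin_cases j <;>
      simp [Matrix.diagonal, cs]
  all_goals
    ext i j
    try simp only [Matrix.smul_apply, Matrix.diagonal_mul, Matrix.mul_diagonal]
    fin_cases i <;> fin_cases j <;> simp [hq0, mul_comm] <;> field_simp

/-- The induced representation with parameters `(a, b)`, as an algebra homomorphism. -/
def rep (p : ℕ) (q a b : ℂ) (hq0 : q ≠ 0) (hq : q ^ p = 1) (ha : a ^ p = 1) (hb : b ^ p = 1) :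
    RingQuot (Rel p q) →ₐ[ℂ] Matrix (Fin 4) (Fin 4) ℂ :=
  RingQuot.liftAlgHom ℂ ⟨FreeAlgebra.lift ℂ (mats p q a b), mats_rel p q a b hq0 hq ha hb⟩

/-- The position of `e₊^r e₋^s v` in the basis used by `mats`. -/
def pos (r s : Fin 2) : Fin 4 := ![![0, 2], ![1, 3]] r s

lemma pos_inj : ∀ r s r' s' : Fin 2, pos r s = pos r' s' ↔ r' = r ∧ s' = s := by
  simp only [pos]; decide

/-- The factor by which the `k_β`-weight of `e₊^r e₋^s v` differs from that of `v`. -/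
def wt (q : ℂ) (r s : Fin 2) : ℂ := ![![1, q⁻¹], ![q, 1]] r s

/-- The first column of the matrix of `k_α^n k_β^m e₊^r e₋^s`, i.e. the image of `v`. -/
lemma rep_monomial (p : ℕ) (q a b : ℂ) (hq0 : q ≠ 0) (hq : q ^ p = 1) (ha : a ^ p = 1)
    (hb : b ^ p = 1) (n m : ℕ) (r s : Fin 2) (i : Fin 4) :
    (rep p q a b hq0 hq ha hb (RingQuot.mkAlgHom ℂ (Rel p q) ka ^ n *
      RingQuot.mkAlgHom ℂ (Rel p q) kb ^ m * RingQuot.mkAlgHom ℂ (Rel p q) ep ^ (r : ℕ) *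
      RingQuot.mkAlgHom ℂ (Rel p q) em ^ (s : ℕ))) i 0
      = if i = pos r s then a ^ n * (wt q r s * b) ^ m else 0 := by
  simp only [map_mul, map_pow, rep, RingQuot.liftAlgHom_mkAlgHom_apply, ka, kb, ep, em,
    FreeAlgebra.lift_ι_apply, mats, Matrix.cons_val, Matrix.diagonal_pow,
    mul_assoc, Matrix.diagonal_mul]
  fin_cases r <;> fin_cases s <;> fin_cases i <;>
    simp [pos, wt, Matrix.mul_apply, Fin.sum_univ_four]

/-! ### Linear independence -/

/-- A polynomial in two variables of degree less than `p` in each which vanishes at all pairs of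
`p`-th roots of unity is zero. -/
lemma vandermonde_two {p : ℕ} {q : ℂ} (hq : IsPrimitiveRoot q p) (g : Fin p → Fin p → ℂ)
    (h : ∀ i j : Fin p, ∑ n, ∑ m, g n m * ((q ^ (i : ℕ)) ^ (n : ℕ) * (q ^ (j : ℕ)) ^ (m : ℕ)) = 0) :
    ∀ n m, g n m = 0 := by
  have inj : Function.Injective fun i : Fin p => q ^ (i : ℕ) := by
    intro i j hij
    exact Fin.ext (hq.pow_inj i.2 j.2 hij)
  have h1 : ∀ j : Fin p, (fun n => ∑ m, g n m * (q ^ (j : ℕ)) ^ (m : ℕ)) = 0 := by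
    intro j
    refine Matrix.eq_zero_of_forall_index_sum_pow_mul_eq_zero inj fun i => ?_
    rw [← h i j]
    refine Finset.sum_congr rfl fun n _ => ?_
    rw [Finset.mul_sum]
    exact Finset.sum_congr rfl fun m _ => by ring
  intro n
  have h2 : g n = 0 := by
    refine Matrix.eq_zero_of_forall_index_sum_pow_mul_eq_zero inj fun j => ?_
    refine Eq.trans ?_ (congrFun (h1 j) n)
    exact Finset.sum_congr rfl fun m _ => by ring
  exact fun m => congrFun h2 m

lemma monomials_linearIndependent (p : ℕ) (hp : 0 < p) (q : ℂ) (hq : IsPrimitiveRoot q p) :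
    let π := RingQuot.mkAlgHom ℂ (Rel p q)
    LinearIndependent ℂ (fun x : Fin p × Fin p × Fin 2 × Fin 2 =>
      π ka ^ (x.1 : ℕ) * π kb ^ (x.2.1 : ℕ) * π ep ^ (x.2.2.1 : ℕ) * π em ^ (x.2.2.2 : ℕ)) := by
  intro π
  have hq0 : q ≠ 0 := hq.ne_zero hp.ne'
  have hq1 := hq.pow_eq_one
  have hqi : ∀ i : ℕ, (q ^ i) ^ p = 1 := fun i => by rw [← pow_mul, mul_comm, pow_mul, hq1, one_pow]
  rw [Fintype.linearIndependent_iff]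
  rintro g hg ⟨n, m, r, s⟩
  have hw : wt q r s ^ p = 1 ∧ wt q r s ≠ 0 := by
    fin_cases r <;> fin_cases s <;> simp [wt, hq1, hq0]
  refine vandermonde_two hq (fun n m => g (n, m, r, s)) (fun i j => ?_) n m
  -- The choice of `b` makes the `k_β`-weight of `e₊^r e₋^s v` equal to `q ^ j`.
  have hb : ((wt q r s)⁻¹ * q ^ (j : ℕ)) ^ p = 1 := by rw [mul_pow, inv_pow, hw.1, hqi]; simp
  have key := congrArg (fun M => (rep p q (q ^ (i : ℕ)) ((wt q r s)⁻¹ * q ^ (j : ℕ)) hq0 hq1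
    (hqi i) hb M) (pos r s) 0) hg
  simp only [map_sum, map_smul, map_zero, Matrix.sum_apply, Matrix.smul_apply, π, rep_monomial,
    smul_eq_mul, Matrix.zero_apply, Fintype.sum_prod_type, pos_inj] at key
  rw [← key]
  refine Finset.sum_congr rfl fun n' _ => Finset.sum_congr rfl fun m' _ => ?_
  rw [Finset.sum_eq_single r (fun r' _ hr => Finset.sum_eq_zero fun s' _ => by simp [hr])
    (by simp), Finset.sum_eq_single s (fun s' _ hs => by simp [hs]) (by simp)]
  simp [mul_inv_cancel_left₀ hw.2]

end Stmt4

open Stmt4 in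
/-- The images of the `4p²` monomials `k_α^n k_β^m e₊^r e₋^s` (`0 ≤ n,m ≤ p-1`, `r,s ∈ {0,1}`)
form a `ℂ`-vector-space basis of restricted `U_q(gl(1|1))`; in particular it has
dimension `4p²`. -/
theorem restricted_gl11_basis (p : ℕ) (hp : 3 ≤ p) (hodd : Odd p) (q : ℂ)
    (hq : IsPrimitiveRoot q p) :
    let π := RingQuot.mkAlgHom ℂ (Rel p q)
    let f : Fin p × Fin p × Fin 2 × Fin 2 → RingQuot (Rel p q) := fun x =>
      π ka ^ (x.1 : ℕ) * π kb ^ (x.2.1 : ℕ) * π ep ^ (x.2.2.1 : ℕ) * π em ^ (x.2.2.2 : ℕ)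
    LinearIndependent ℂ f ∧ Submodule.span ℂ (Set.range f) = ⊤ ∧
      Module.finrank ℂ (RingQuot (Rel p q)) = 4 * p ^ 2 := by
  intro π f
  have hli : LinearIndependent ℂ f := monomials_linearIndependent p (by omega) q hq
  have hsp : Submodule.span ℂ (Set.range f) = ⊤ :=
    monomials_span p (by omega) q (hq.ne_zero (by omega))
  refine ⟨hli, hsp, ?_⟩
  rw [Module.finrank_eq_card_basis (Module.Basis.mk hli hsp.ge)]
  simp only [Fintype.card_prod, Fintype.card_fin]
  ring
end
end

section
/- Let p ≥ 3 be an odd integer and q ∈ ℂ a primitive p-th root of unity. Let H be the quotient of the free ℂ-algebra on eight generators k_α, k_β, e₊, e₋, l_α, l_β, ζ₊, ζ₋ by the two-sided ideal generated by: (U_q(gl(1|1)) relations) k_α^p − 1, k_β^p − 1, k_α k_β − k_β k_α, k_α e_± − e_± k_α, k_β e₊ − q e₊ k_β, k_β e₋ − q^{−1} e₋ k_β, e₊², e₋², e₊e₋ + e₋e₊ − (q − q^{−1})^{−1}(k_α − k_α^{p−1}); (dual relations) l_α^p − 1, l_β^p − 1, l_α l_β − l_β l_α, l_α ζ_± − ζ_±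 l_α, l_β ζ_± − q^{−1} ζ_± l_β, ζ₊², ζ₋², ζ₊ζ₋ + ζ₋ζ₊; and (cross relations) k_α l_α − l_α k_α, k_α l_β − q l_β k_α, k_β l_β − l_β k_β, k_β l_α − q l_α k_β, e₋ l_α − l_α e₋, e₋ l_β − l_β e₋, e₊ l_α − l_α e₊, e₊ l_β − q^{−1} l_β e₊ − l_β ζ₋, k_α ζ_± − ζ_± k_α, k_β ζ₊ − q^{−1} ζ₊ k_β, k_β ζ₋ − q ζ₋ k_β, e₋ζ₋ + ζ₋e₋ − k_α, e₊ζ₊ + ζ₊e₊ + 1, e₋ζ₊ + ζ₊e₋, e₊ζ₋ + ζ₋e₊. Then the images of the monomials k_α^n k_β^m l_α^{n'} l_β^{m'} e₊^r e₋^s ζ₊^{r'} ζ₋^{s'} with 0 ≤ n, m, n', m' ≤ p−1 and r, s, r', s' ∈ {0,1} form a ℂ-vector-space basis of H. -/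
/-!
The monomials span because their span is stable under left multiplication by each generator:
all generators commute up to a scalar, except that moving a fermionic generator past another
one, or `e₊` past `l_β`, creates terms that are shorter or involve `ζ₋`, with coefficients in
the span of the powers of `k_α`. This is `S_closed`, phrased with products of submodules.

Linear independence is a dimension count. Put `c = (q - q⁻¹)⁻¹` and
`e₊' = e₊ - c (1 - k_α⁻²) ζ₋`. Then `(e₊', ζ₊)` and `(k_α⁻¹ e₋, ζ₋)` are two anticommuting
fermionic modes, `(k_α, l_β)` and `(k_β, l_α)` are two Weyl pairs, and all other commutations
are scalar; the identity `c (q - q⁻¹) = 1` is what makes the `ζ₋`-term of `e₊ l_β` disappear for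
`e₊'`. Hence the algebra acts on functions on `ℤ/p × ℤ/p × {0,1} × {0,1}` (`gen`, `gen_rel`).
The image contains all matrix units, since it contains enough diagonal operators to separate
points and the remaining generators connect all points (`gen_top`). So the `16 p⁴` monomials
have images spanning the endomorphism algebra, of dimension `(4 p²)²`, and are independent.
-/

noncomputable section

namespace Stmt6

/-- The free `ℂ`-algebra on the eight generators `k_α, k_β, e₊, e₋, l_α, l_β, ζ₊, ζ₋`. -/
abbrev F : Type := FreeAlgebra ℂ (Fin 8)

def ka : F := FreeAlgebra.ι ℂ 0
def kb : F := FreeAlgebra.ι ℂ 1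
def ep : F := FreeAlgebra.ι ℂ 2
def em : F := FreeAlgebra.ι ℂ 3
def la : F := FreeAlgebra.ι ℂ 4
def lb : F := FreeAlgebra.ι ℂ 5
def zp : F := FreeAlgebra.ι ℂ 6
def zm : F := FreeAlgebra.ι ℂ 7

/-- The defining relations of the Heisenberg double of restricted `U_q(gl(1|1))`. -/
inductive Rel (p : ℕ) (q : ℂ) : F → F → Prop
  -- U_q(gl(1|1)) relations
  | ka_pow : Rel p q (ka ^ p) 1
  | kb_pow : Rel p q (kb ^ p) 1
  | ka_kb : Rel p q (ka * kb) (kb * ka)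
  | ka_ep : Rel p q (ka * ep) (ep * ka)
  | ka_em : Rel p q (ka * em) (em * ka)
  | kb_ep : Rel p q (kb * ep) (q • (ep * kb))
  | kb_em : Rel p q (kb * em) (q⁻¹ • (em * kb))
  | ep_sq : Rel p q (ep * ep) 0
  | em_sq : Rel p q (em * em) 0
  | ep_em : Rel p q (ep * em + em * ep) ((q - q⁻¹)⁻¹ • (ka - ka ^ (p - 1)))
  -- dual relations
  | la_pow : Rel p q (la ^ p) 1
  | lb_pow : Rel p q (lb ^ p) 1
  | la_lb : Rel p q (la * lb) (lb * la)
  | la_zp : Rel p q (la * zp) (zp * la)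
  | la_zm : Rel p q (la * zm) (zm * la)
  | lb_zp : Rel p q (lb * zp) (q⁻¹ • (zp * lb))
  | lb_zm : Rel p q (lb * zm) (q⁻¹ • (zm * lb))
  | zp_sq : Rel p q (zp * zp) 0
  | zm_sq : Rel p q (zm * zm) 0
  | zp_zm : Rel p q (zp * zm + zm * zp) 0
  -- cross relations
  | ka_la : Rel p q (ka * la) (la * ka)
  | ka_lb : Rel p q (ka * lb) (q • (lb * ka))
  | kb_lb : Rel p q (kb * lb) (lb * kb)
  | kb_la : Rel p q (kb * la) (q • (la * kb))
  | em_la : Rel p q (em * la) (la * em)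
  | em_lb : Rel p q (em * lb) (lb * em)
  | ep_la : Rel p q (ep * la) (la * ep)
  | ep_lb : Rel p q (ep * lb) (q⁻¹ • (lb * ep) + lb * zm)
  | ka_zp : Rel p q (ka * zp) (zp * ka)
  | ka_zm : Rel p q (ka * zm) (zm * ka)
  | kb_zp : Rel p q (kb * zp) (q⁻¹ • (zp * kb))
  | kb_zm : Rel p q (kb * zm) (q • (zm * kb))
  | em_zm : Rel p q (em * zm + zm * em) ka
  | ep_zp : Rel p q (ep * zp + zp * ep) (-1)
  | em_zp : Rel p q (em * zp + zp * em) 0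
  | ep_zm : Rel p q (ep * zm + zm * ep) 0

end Stmt6

namespace Stmt6

open Submodule

/-! ### Reordering products of spans of powers -/

section Span

variable {A : Type*} [Ring A] [Algebra ℂ A]

/-- The span of `1, x, …, x ^ (n - 1)`. -/
def Pw (x : A) (n : ℕ) : Submodule ℂ A := span ℂ (Set.range fun i : Fin n => x ^ (i : ℕ))

lemma pow_mem_Pw (x : A) {n i : ℕ} (h : i < n) : x ^ i ∈ Pw x n :=
  subset_span ⟨⟨i, h⟩, rfl⟩

lemma one_le_Pw (x : A) {n : ℕ} (h : 0 < n) : 1 ≤ Pw x n := by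
  rw [Submodule.one_le]
  simpa using pow_mem_Pw x h

lemma mul_Pw_le {g x : A} {n : ℕ} {W : Submodule ℂ A} (h : ∀ i < n, g * x ^ i ∈ W) :
    (ℂ ∙ g) * Pw x n ≤ W := by
  rw [Pw, span_mul_span, span_le]
  rintro _ ⟨_, rfl, _, ⟨i, rfl⟩, rfl⟩
  exact h i i.2

lemma absorb {x : A} {n : ℕ} (h : x ^ n ∈ Pw x n) : (ℂ ∙ x) * Pw x n ≤ Pw x n := by
  refine mul_Pw_le fun i hi => ?_
  rw [← pow_succ']
  rcases Nat.lt_or_ge (i + 1) n with h' | h'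
  · exact pow_mem_Pw x h'
  · rwa [show i + 1 = n by omega]

/-- `g` and `x` commute up to a scalar, in the form needed to move `g` to the right of `x`. -/
def QC (g x : A) : Prop := ∃ c : ℂ, g * x = c • (x * g)

lemma QC.of_eq {g x : A} (h : g * x = x * g) : QC g x := ⟨1, by simpa using h⟩

lemma QC.of_eq' {g x : A} (h : x * g = g * x) : QC g x := ⟨1, by simpa using h.symm⟩

lemma QC.of_smul {g x : A} {c : ℂ} (hc : c ≠ 0) (h : x * g = c • (g * x)) : QC g x :=
  ⟨c⁻¹, by rw [h, smul_smul, inv_mul_cancel₀ hc, one_smul]⟩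

lemma QC.of_anti {g x : A} (h : g * x + x * g = 0) : QC g x :=
  ⟨-1, by rw [neg_smul, one_smul]; exact eq_neg_of_add_eq_zero_left h⟩

lemma QC.of_anti' {g x : A} (h : x * g + g * x = 0) : QC g x :=
  QC.of_anti (by rwa [add_comm])

lemma QC.pow_right {g x : A} (h : QC g x) (n : ℕ) : QC g (x ^ n) := by
  obtain ⟨c, hc⟩ := h
  refine ⟨c ^ n, ?_⟩
  induction n with
  | zero => simp
  | succ n ih =>
    rw [pow_succ, ← mul_assoc, ih, smul_mul_assoc, mul_assoc, hc, mul_smul_comm, smul_smul,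
      ← mul_assoc, pow_succ]

lemma QC.pow_left {g x : A} (h : QC g x) (n : ℕ) : QC (g ^ n) x := by
  obtain ⟨c, hc⟩ := h
  refine ⟨c ^ n, ?_⟩
  induction n with
  | zero => simp
  | succ n ih =>
    rw [pow_succ, mul_assoc, hc, mul_smul_comm, ← mul_assoc, ih, smul_mul_assoc, smul_smul,
      mul_assoc, pow_succ, mul_comm (c ^ n)]

lemma QC.move {g x : A} (h : QC g x) (n : ℕ) : (ℂ ∙ g) * Pw x n ≤ Pw x n * (ℂ ∙ g) := by
  refine mul_Pw_le fun i hi => ?_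
  obtain ⟨c, hc⟩ := h.pow_right i
  rw [hc]
  exact smul_mem _ _ (mul_mem_mul (pow_mem_Pw x hi) (mem_span_singleton_self g))

lemma QC.Pw_comm {x y : A} (h : QC x y) (m n : ℕ) : Pw x m * Pw y n ≤ Pw y n * Pw x m := by
  conv_lhs => rw [Pw, Pw, span_mul_span]
  rw [span_le]
  rintro _ ⟨_, ⟨i, rfl⟩, _, ⟨j, rfl⟩, rfl⟩
  obtain ⟨c, hc⟩ := (h.pow_left i).pow_right j
  simp only [SetLike.mem_coe]
  rw [hc]
  exact smul_mem _ _ (mul_mem_mul (pow_mem_Pw y j.2) (pow_mem_Pw x i.2))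

/-- Moving `g` past `1, x` when `g` and `x` anticommute up to an element of `K`. -/
lemma clifford_move {g x : A} {K : Submodule ℂ A} (h : g * x + x * g ∈ K) :
    (ℂ ∙ g) * Pw x 2 ≤ Pw x 2 * (ℂ ∙ g) ⊔ K := by
  have hg := mem_span_singleton_self (R := ℂ) g
  refine mul_Pw_le fun i hi => ?_
  interval_cases i
  · refine mem_sup_left ?_
    have := mul_mem_mul (pow_mem_Pw x (show 0 < 2 by norm_num)) hg
    simpa using this
  · have h1 := mul_mem_mul (pow_mem_Pw x (show 1 < 2 by norm_num)) hg
    rw [show g * x ^ 1 = -(x ^ 1 * g) + (g * x + x * g) by simp]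
    exact add_mem (mem_sup_left (neg_mem h1)) (mem_sup_right h)

/-- Moving `g` past the powers of `x` when this creates a multiple of an element `z` which
itself commutes with `x` up to a scalar. -/
lemma twisted_move {g x z : A} {c : ℂ} (hz : QC z x) (h : g * x = c • (x * g) + x * z) (n : ℕ) :
    (ℂ ∙ g) * Pw x n ≤ Pw x n * (ℂ ∙ g) ⊔ Pw x n * (ℂ ∙ z) := by
  refine mul_Pw_le fun i hi => ?_
  obtain ⟨a, b, hab⟩ : ∃ a b : ℂ, g * x ^ i = a • (x ^ i * g) + b • (x ^ i * z) := by
    obtain ⟨d, hd⟩ := hz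
    clear hi
    induction i with
    | zero => exact ⟨1, 0, by simp⟩
    | succ i ih =>
      obtain ⟨a, b, hab⟩ := ih
      refine ⟨a * c, a + b * d, ?_⟩
      rw [pow_succ, ← mul_assoc, hab, add_mul, smul_mul_assoc, smul_mul_assoc, mul_assoc,
        mul_assoc, h, hd]
      simp only [mul_add, mul_smul_comm, smul_add, smul_smul, add_smul, mul_assoc]
      abel
  rw [hab]
  exact add_mem
    (mem_sup_left (smul_mem _ _ (mul_mem_mul (pow_mem_Pw x hi) (mem_span_singleton_self g))))
    (mem_sup_right (smul_mem _ _ (mul_mem_mul (pow_mem_Pw x hi) (mem_span_singleton_self z))))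

variable {G X W K : Submodule ℂ A}

lemma mul_left_mono' {M M' N : Submodule ℂ A} (h : M ≤ M') : M * N ≤ M' * N :=
  mul_le_mul' h le_rfl

lemma mul_right_mono' {M N N' : Submodule ℂ A} (h : N ≤ N') : M * N ≤ M * N' :=
  mul_le_mul' le_rfl h

lemma le_mul_of_one_le' (hK : 1 ≤ K) : W ≤ K * W := by
  simpa using mul_left_mono' (N := W) hK

/-- The lemmas `push_absorb`, `push` and `push_sup` propagate `G * W ≤ K * W` from a tail `W`
of an ordered product to the longer tail `X * W`; here `K` will be the span of the powers of
`k_α` and `G` the line through a generator. -/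
lemma push_absorb (hK : 1 ≤ K) (h : G * X ≤ X) : G * (X * W) ≤ K * (X * W) := by
  rw [← mul_assoc]
  exact (mul_left_mono' h).trans (le_mul_of_one_le' hK)

lemma push_aux (hXK : X * K ≤ K * X) (hW : G * W ≤ K * W) : X * G * W ≤ K * (X * W) := by
  calc X * G * W = X * (G * W) := mul_assoc _ _ _
    _ ≤ X * (K * W) := mul_right_mono' hW
    _ = X * K * W := (mul_assoc _ _ _).symm
    _ ≤ K * X * W := mul_left_mono' hXK
    _ = K * (X * W) := mul_assoc _ _ _

lemma push (hXK : X * K ≤ K * X) (h : G * X ≤ X * G) (hW : G * W ≤ K * W) :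
    G * (X * W) ≤ K * (X * W) := by
  rw [← mul_assoc]
  exact (mul_left_mono' h).trans (push_aux hXK hW)

lemma push_sup {Y : Submodule ℂ A} (hXK : X * K ≤ K * X) (h : G * X ≤ X * G ⊔ Y)
    (hW : G * W ≤ K * W) (hY : Y * W ≤ K * (X * W)) : G * (X * W) ≤ K * (X * W) := by
  rw [← mul_assoc]
  refine (mul_left_mono' h).trans ?_
  rw [Submodule.sup_mul]
  exact sup_le (push_aux hXK hW) hY

end Span

/-! ### The monomials span -/

section Spanning

variable (p : ℕ) (q : ℂ)

/-- The quotient map onto the Heisenberg double. -/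
abbrev pr : F →ₐ[ℂ] RingQuot (Rel p q) := RingQuot.mkAlgHom ℂ (Rel p q)

variable {p q}

lemma rel {a b : F} (h : Rel p q a b) : pr p q a = pr p q b := RingQuot.mkAlgHom_rel ℂ h

variable (p q) in
/-- The product of the spans of the powers of the generators, in the order of the monomials. -/
def S : Submodule ℂ (RingQuot (Rel p q)) :=
  Pw (pr p q ka) p * (Pw (pr p q kb) p * (Pw (pr p q la) p * (Pw (pr p q lb) p *
    (Pw (pr p q ep) 2 * (Pw (pr p q em) 2 * (Pw (pr p q zp) 2 * Pw (pr p q zm) 2))))))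

set_option maxHeartbeats 1000000 in
/-- `S` is a left ideal: a generator moved to its place in the ordered product creates only
lower terms, whose coefficients are powers of `k_α` and can be moved to the far left. -/
lemma S_closed (hp : 3 ≤ p) (hq : q ≠ 0) (i : Fin 8) :
    (ℂ ∙ pr p q (FreeAlgebra.ι ℂ i)) * S p q ≤ S p q := by
  have hq' : q⁻¹ ≠ 0 := inv_ne_zero hq
  have r1 := rel (@Rel.ka_pow p q)
  have r2 := rel (@Rel.kb_pow p q)
  have r3 := rel (@Rel.ka_kb p q)
  have r4 := rel (@Rel.ka_ep p q)
  have r5 := rel (@Rel.ka_em p q)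
  have r6 := rel (@Rel.kb_ep p q)
  have r7 := rel (@Rel.kb_em p q)
  have r8 := rel (@Rel.ep_sq p q)
  have r9 := rel (@Rel.em_sq p q)
  have r10 := rel (@Rel.ep_em p q)
  have s1 := rel (@Rel.la_pow p q)
  have s2 := rel (@Rel.lb_pow p q)
  have s3 := rel (@Rel.la_lb p q)
  have s4 := rel (@Rel.la_zp p q)
  have s5 := rel (@Rel.la_zm p q)
  have s6 := rel (@Rel.lb_zp p q)
  have s7 := rel (@Rel.lb_zm p q)
  have s8 := rel (@Rel.zp_sq p q)
  have s9 := rel (@Rel.zm_sq p q)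
  have s10 := rel (@Rel.zp_zm p q)
  have t1 := rel (@Rel.ka_la p q)
  have t2 := rel (@Rel.ka_lb p q)
  have t3 := rel (@Rel.kb_lb p q)
  have t4 := rel (@Rel.kb_la p q)
  have t5 := rel (@Rel.em_la p q)
  have t6 := rel (@Rel.em_lb p q)
  have t7 := rel (@Rel.ep_la p q)
  have t8 := rel (@Rel.ep_lb p q)
  have t9 := rel (@Rel.ka_zp p q)
  have t10 := rel (@Rel.ka_zm p q)
  have t11 := rel (@Rel.kb_zp p q)
  have t12 := rel (@Rel.kb_zm p q)
  have t13 := rel (@Rel.em_zm p q)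
  have t14 := rel (@Rel.ep_zp p q)
  have t15 := rel (@Rel.em_zp p q)
  have t16 := rel (@Rel.ep_zm p q)
  simp only [map_mul, map_pow, map_one, map_zero, map_add, map_sub, map_smul, map_neg] at *
  have mv0 : pr p q (FreeAlgebra.ι ℂ 0) = pr p q ka := rfl
  have mv1 : pr p q (FreeAlgebra.ι ℂ 1) = pr p q kb := rfl
  have mv2 : pr p q (FreeAlgebra.ι ℂ 2) = pr p q ep := rfl
  have mv3 : pr p q (FreeAlgebra.ι ℂ 3) = pr p q em := rfl
  have mv4 : pr p q (FreeAlgebra.ι ℂ 4) = pr p q la := rfl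
  have mv5 : pr p q (FreeAlgebra.ι ℂ 5) = pr p q lb := rfl
  have mv6 : pr p q (FreeAlgebra.ι ℂ 6) = pr p q zp := rfl
  have mv7 : pr p q (FreeAlgebra.ι ℂ 7) = pr p q zm := rfl
  unfold S
  generalize pr p q ka = KA at *
  generalize pr p q kb = KB at *
  generalize pr p q ep = EP at *
  generalize pr p q em = EM at *
  generalize pr p q la = LA at *
  generalize pr p q lb = LB at *
  generalize pr p q zp = ZP at *
  generalize pr p q zm = ZM at *
  have unip : ∀ x : RingQuot (Rel p q), x ^ p = 1 → (ℂ ∙ x) * Pw x p ≤ Pw x p := fun x hx =>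
    absorb (by rw [hx]; simpa using pow_mem_Pw x (show 0 < p by omega))
  have nil : ∀ x : RingQuot (Rel p q), x * x = 0 → (ℂ ∙ x) * Pw x 2 ≤ Pw x 2 := fun x hx =>
    absorb (by rw [sq, hx]; exact zero_mem _)
  -- the powers of `k_α` span a commutative subalgebra that can be moved to the far left
  have A1 : 1 ≤ Pw KA p := one_le_Pw _ (by omega)
  have AA : Pw KA p * Pw KA p ≤ Pw KA p := by
    conv_lhs => rw [Pw, span_mul_span]
    rw [span_le]
    rintro _ ⟨_, ⟨i, rfl⟩, _, ⟨j, rfl⟩, rfl⟩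
    simp only [← pow_add, SetLike.mem_coe]
    rw [pow_eq_pow_mod _ r1]
    exact pow_mem_Pw _ (Nat.mod_lt _ (by omega))
  have KAm : KA ∈ Pw KA p := by simpa using pow_mem_Pw KA (show 1 < p by omega)
  have cA := (QC.of_eq (rfl : KA * KA = _)).Pw_comm p p
  have cB := (QC.of_eq' r3).Pw_comm p p
  have cC := (QC.of_eq' t1).Pw_comm p p
  have cD := (QC.of_smul hq t2).Pw_comm p p
  have cP := (QC.of_eq' r4).Pw_comm 2 p
  have cM := (QC.of_eq' r5).Pw_comm 2 p
  have cY := (QC.of_eq' t9).Pw_comm 2 p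
  have P1 : 1 ≤ Pw EP 2 := one_le_Pw _ (by omega)
  have M1 : 1 ≤ Pw EM 2 := one_le_Pw _ (by omega)
  -- below, each generator is moved through the tails of the product
  have L : ∀ {W : Submodule ℂ (RingQuot (Rel p q))}, W ≤ Pw KA p * W :=
    fun {_} => le_mul_of_one_le' A1
  have zmM : (ℂ ∙ ZM) * Pw EM 2 ≤ Pw EM 2 * (ℂ ∙ ZM) ⊔ Pw KA p :=
    clifford_move (by rw [add_comm, t13]; exact KAm)
  have zm5 := push cP ((QC.of_anti' t16).move 2) <| push_sup cM zmM
    (push cY ((QC.of_anti' s10).move 2) ((nil _ s9).trans L))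
    (mul_right_mono' (le_mul_of_one_le' M1))
  have zm2 := push cB ((QC.of_smul hq t12).move p) <| push cC ((QC.of_eq' s5).move p) <|
    push cD ((QC.of_smul hq' s7).move p) zm5
  have hzm := push cA ((QC.of_eq' t10).move p) zm2
  have epD := twisted_move (QC.of_smul hq' s7) t8 p
  have hep := push cA ((QC.of_eq' r4).move p) <| push cB ((QC.of_smul hq r6).move p) <|
    push cC ((QC.of_eq t7).move p) <| push_sup cD epD
      (push_absorb (W := Pw EM 2 * (Pw ZP 2 * Pw ZM 2)) A1 (nil _ r8)) (push_aux cD zm5)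
  have emP : (ℂ ∙ EM) * Pw EP 2 ≤ Pw EP 2 * (ℂ ∙ EM) ⊔ Pw KA p :=
    clifford_move (by
      rw [add_comm, r10]
      exact smul_mem _ _ (sub_mem KAm (pow_mem_Pw _ (by omega))))
  have hem := push cA ((QC.of_eq' r5).move p) <| push cB ((QC.of_smul hq' r7).move p) <|
    push cC ((QC.of_eq t5).move p) <| push cD ((QC.of_eq t6).move p) <| push_sup cP emP
      (push_absorb (W := Pw ZP 2 * Pw ZM 2) A1 (nil _ r9))
      (mul_right_mono' (le_mul_of_one_le' P1))
  have zpP : (ℂ ∙ ZP) * Pw EP 2 ≤ Pw EP 2 * (ℂ ∙ ZP) ⊔ Pw KA p :=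
    clifford_move (by
      rw [add_comm, t14]
      exact neg_mem (Submodule.one_le.1 A1))
  have hzp := push cA ((QC.of_eq' t9).move p) <| push cB ((QC.of_smul hq' t11).move p) <|
    push cC ((QC.of_eq' s4).move p) <| push cD ((QC.of_smul hq' s6).move p) <| push_sup cP zpP
      (push cM ((QC.of_anti' t15).move 2) (push_absorb (W := Pw ZM 2) A1 (nil _ s8)))
      (mul_right_mono' (le_mul_of_one_le' P1))
  have hlb := push cA ((QC.of_smul hq t2).move p) <| push cB ((QC.of_eq' t3).move p) <|
    push cC ((QC.of_eq' s3).move p) <|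
      push_absorb (W := Pw EP 2 * (Pw EM 2 * (Pw ZP 2 * Pw ZM 2))) A1 (unip _ s2)
  have hla := push cA ((QC.of_eq' t1).move p) <| push cB ((QC.of_smul hq t4).move p) <|
    push_absorb (W := Pw LB p * (Pw EP 2 * (Pw EM 2 * (Pw ZP 2 * Pw ZM 2)))) A1 (unip _ s1)
  have hkb := push cA ((QC.of_eq' r3).move p) <|
    push_absorb (W := Pw LA p * (Pw LB p * (Pw EP 2 * (Pw EM 2 * (Pw ZP 2 * Pw ZM 2))))) A1
      (unip _ r2)
  have hka := push_absorb (W := Pw KB p * (Pw LA p * (Pw LB p * (Pw EP 2 * (Pw EM 2 *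
    (Pw ZP 2 * Pw ZM 2)))))) A1 (unip _ r1)
  -- the extra factor of powers of `k_α` on the left is absorbed
  have fin : ∀ W : Submodule ℂ (RingQuot (Rel p q)),
      Pw KA p * (Pw KA p * W) ≤ Pw KA p * W := by
    intro W
    rw [← mul_assoc]
    exact mul_left_mono' AA
  fin_cases i
  · change (ℂ ∙ pr p q (FreeAlgebra.ι ℂ 0)) * _ ≤ _
    rw [mv0]
    exact hka.trans (fin _)
  · change (ℂ ∙ pr p q (FreeAlgebra.ι ℂ 1)) * _ ≤ _
    rw [mv1]
    exact hkb.trans (fin _)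
  · change (ℂ ∙ pr p q (FreeAlgebra.ι ℂ 2)) * _ ≤ _
    rw [mv2]
    exact hep.trans (fin _)
  · change (ℂ ∙ pr p q (FreeAlgebra.ι ℂ 3)) * _ ≤ _
    rw [mv3]
    exact hem.trans (fin _)
  · change (ℂ ∙ pr p q (FreeAlgebra.ι ℂ 4)) * _ ≤ _
    rw [mv4]
    exact hla.trans (fin _)
  · change (ℂ ∙ pr p q (FreeAlgebra.ι ℂ 5)) * _ ≤ _
    rw [mv5]
    exact hlb.trans (fin _)
  · change (ℂ ∙ pr p q (FreeAlgebra.ι ℂ 6)) * _ ≤ _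
    rw [mv6]
    exact hzp.trans (fin _)
  · change (ℂ ∙ pr p q (FreeAlgebra.ι ℂ 7)) * _ ≤ _
    rw [mv7]
    exact hzm.trans (fin _)

lemma S_eq_top (hp : 3 ≤ p) (hq : q ≠ 0) : S p q = ⊤ := by
  have h1 : (1 : RingQuot (Rel p q)) ∈ S p q := by
    have h : ∀ (x : RingQuot (Rel p q)) (n : ℕ), 0 < n → 1 ∈ Pw x n := fun x n hn =>
      Submodule.one_le.1 (one_le_Pw x hn)
    have hp0 : 0 < p := by omega
    rw [S, show (1 : RingQuot (Rel p q)) = 1 * (1 * (1 * (1 * (1 * (1 * (1 * 1)))))) by simp]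
    exact mul_mem_mul (h _ _ hp0) <| mul_mem_mul (h _ _ hp0) <| mul_mem_mul (h _ _ hp0) <|
      mul_mem_mul (h _ _ hp0) <| mul_mem_mul (h _ _ two_pos) <| mul_mem_mul (h _ _ two_pos) <|
      mul_mem_mul (h _ _ two_pos) (h _ _ two_pos)
  have hmul : ∀ a : F, ∀ s ∈ S p q, pr p q a * s ∈ S p q := by
    intro a
    induction a using FreeAlgebra.induction with
    | grade0 c =>
      intro s hs
      rw [AlgHom.commutes, ← Algebra.smul_def]
      exact smul_mem _ _ hs
    | grade1 i =>
      intro s hs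
      exact S_closed hp hq i (mul_mem_mul (mem_span_singleton_self _) hs)
    | mul a b ha hb =>
      intro s hs
      rw [map_mul, mul_assoc]
      exact ha _ (hb _ hs)
    | add a b ha hb =>
      intro s hs
      rw [map_add, add_mul]
      exact add_mem (ha _ hs) (hb _ hs)
  rw [eq_top_iff]
  intro x _
  obtain ⟨a, rfl⟩ := RingQuot.mkAlgHom_surjective ℂ (Rel p q) x
  simpa using hmul a 1 h1

variable (p q) in
/-- The family of ordered monomials. -/
def mono : Fin p × Fin p × Fin p × Fin p × Fin 2 × Fin 2 × Fin 2 × Fin 2 →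
    RingQuot (Rel p q) := fun x =>
  pr p q ka ^ (x.1 : ℕ) * pr p q kb ^ (x.2.1 : ℕ) * pr p q la ^ (x.2.2.1 : ℕ) *
    pr p q lb ^ (x.2.2.2.1 : ℕ) * pr p q ep ^ (x.2.2.2.2.1 : ℕ) *
    pr p q em ^ (x.2.2.2.2.2.1 : ℕ) *
    pr p q zp ^ (x.2.2.2.2.2.2.1 : ℕ) * pr p q zm ^ (x.2.2.2.2.2.2.2 : ℕ)

lemma span_mono_eq_top (hp : 3 ≤ p) (hq : q ≠ 0) : span ℂ (Set.range (mono p q)) = ⊤ := by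
  rw [eq_top_iff, ← S_eq_top hp hq, S]
  simp only [Pw, span_mul_span]
  refine Submodule.span_mono ?_
  rintro _ ⟨_, ⟨a, rfl⟩, _, ⟨_, ⟨b, rfl⟩, _, ⟨_, ⟨c, rfl⟩, _, ⟨_, ⟨d, rfl⟩, _, ⟨_, ⟨e, rfl⟩, _,
    ⟨_, ⟨f, rfl⟩, _, ⟨_, ⟨g, rfl⟩, _, ⟨h, rfl⟩, rfl⟩, rfl⟩, rfl⟩, rfl⟩, rfl⟩, rfl⟩, rfl⟩
  exact ⟨(a, b, c, d, e, f, g, h), by simp [mono, mul_assoc]⟩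

end Spanning

/-! ### The representation of dimension `4 p²` -/

section Rep

variable (p : ℕ)

/-- Index set of the standard basis of the representation: positions `i, j` on two cyclic
groups and occupation numbers `a, b` of two fermionic modes. -/
abbrev Idx : Type := ZMod p × ZMod p × Bool × Bool

variable {p}

/-- The weighted substitution operator `v ↦ h · (v ∘ σ)`. -/
def Op (h : Idx p → ℂ) (σ : Idx p → Idx p) : Module.End ℂ (Idx p → ℂ) where
  toFun v x := h x * v (σ x)
  map_add' v w := by ext x; simp [mul_add]
  map_smul' c v := by ext x; simp; ring

@[simp] lemma Op_apply (h : Idx p → ℂ) (σ : Idx p → Idx p) (v : Idx p → ℂ) (x : Idx p) :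
    Op h σ v x = h x * v (σ x) := rfl

lemma Op_mul (h h' : Idx p → ℂ) (σ σ' : Idx p → Idx p) :
    Op h σ * Op h' σ' = Op (fun x => h x * h' (σ x)) (fun x => σ' (σ x)) := by
  refine LinearMap.ext fun v => funext fun x => ?_
  simp [mul_assoc]

lemma Op_id_pow (h : Idx p → ℂ) (n : ℕ) : Op h id ^ n = Op (fun x => h x ^ n) id := by
  induction n with
  | zero => refine LinearMap.ext fun v => funext fun x => ?_; simp
  | succ n ih => rw [pow_succ, ih, Op_mul]; simp [pow_succ]; rfl

variable (q : ℂ) (χ : AddChar (ZMod p) ℂ)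

/-- The operators representing `k_α, k_β, e₊, e₋, l_α, l_β, ζ₊, ζ₋`, in this order. On functions
of `(i, j, a, b)`, `k_α` and `k_β` are diagonal, `l_β` and `l_α` are shifts in `i` and `j`; the
weights `q^{±1}` in `k_β` and `l_β` implement their scalar commutation with the fermions. `ζ₊`
and `ζ₋` create the two fermions, `e₋` is `k_α` times the annihilator of the second one, and
`e₊` is minus the annihilator of the first one plus `(q - q⁻¹)⁻¹ (1 - k_α⁻²) ζ₋`. -/
def gen : Fin 8 → Module.End ℂ (Idx p → ℂ) :=
  ![Op (fun x => χ x.1) id,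
    Op (fun x => χ x.2.1 * (if x.2.2.1 then q⁻¹ else 1) * (if x.2.2.2 then q else 1)) id,
    Op (fun x => if x.2.2.1 then 0 else -1) (fun x => (x.1, x.2.1, true, x.2.2.2)) +
      Op (fun x => (q - q⁻¹)⁻¹ * (1 - ((χ x.1)⁻¹) ^ 2) * (if x.2.2.2 then 1 else 0) *
        (if x.2.2.1 then -1 else 1)) (fun x => (x.1, x.2.1, x.2.2.1, false)),
    Op (fun x => χ x.1 * (if x.2.2.2 then 0 else 1) * (if x.2.2.1 then -1 else 1))
      (fun x => (x.1, x.2.1, x.2.2.1, true)),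
    Op 1 (fun x => (x.1, x.2.1 - 1, x.2.2)),
    Op (fun x => (if x.2.2.1 then q⁻¹ else 1) * (if x.2.2.2 then q⁻¹ else 1))
      (fun x => (x.1 - 1, x.2)),
    Op (fun x => if x.2.2.1 then 1 else 0) (fun x => (x.1, x.2.1, false, x.2.2.2)),
    Op (fun x => (if x.2.2.2 then 1 else 0) * (if x.2.2.1 then -1 else 1))
      (fun x => (x.1, x.2.1, x.2.2.1, false))]

set_option maxHeartbeats 2000000 in
/-- The operators `gen` satisfy the defining relations. -/
lemma gen_rel (hp : 3 ≤ p) (hq : IsPrimitiveRoot q p) (hχ : χ 1 = q) {a b : F}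
    (h : Rel p q a b) : FreeAlgebra.lift ℂ (gen q χ) a = FreeAlgebra.lift ℂ (gen q χ) b := by
  have hq0 : q ≠ 0 := hq.ne_zero (by omega)
  have hχ0 : ∀ i, χ i ≠ 0 := fun i => (χ.val_isUnit i).ne_zero
  have hχp : ∀ i, χ i ^ p = 1 := fun i => by
    rw [← AddChar.map_nsmul_eq_pow]; simp
  have hχp' : ∀ i, χ i ^ (p - 1) = (χ i)⁻¹ := fun i => by
    refine eq_inv_of_mul_eq_one_left ?_
    rw [← pow_succ, Nat.sub_add_cancel (by omega), hχp]
  have hχs : ∀ i, χ (i - 1) = χ i * q⁻¹ := fun i => by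
    rw [AddChar.map_sub_eq_div, hχ, div_eq_mul_inv]
  have hqq : q - q⁻¹ ≠ 0 := by
    intro h0
    have h2 : q ^ 2 = 1 := by
      field_simp at h0
      linear_combination h0
    have := Nat.le_of_dvd (by norm_num) ((hq.pow_eq_one_iff_dvd 2).1 h2)
    omega
  have hq2 : q ^ 2 - 1 ≠ 0 := by
    intro h0; apply hqq; field_simp; simpa using h0
  have g0 : FreeAlgebra.lift ℂ (gen q χ) ka = gen q χ 0 := by simp [ka]
  have g1 : FreeAlgebra.lift ℂ (gen q χ) kb = gen q χ 1 := by simp [kb]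
  have g2 : FreeAlgebra.lift ℂ (gen q χ) ep = gen q χ 2 := by simp [ep]
  have g3 : FreeAlgebra.lift ℂ (gen q χ) em = gen q χ 3 := by simp [em]
  have g4 : FreeAlgebra.lift ℂ (gen q χ) la = gen q χ 4 := by simp [la]
  have g5 : FreeAlgebra.lift ℂ (gen q χ) lb = gen q χ 5 := by simp [lb]
  have g6 : FreeAlgebra.lift ℂ (gen q χ) zp = gen q χ 6 := by simp [zp]
  have g7 : FreeAlgebra.lift ℂ (gen q χ) zm = gen q χ 7 := by simp [zm]
  cases h <;> simp only [map_mul, map_add, map_sub, map_pow, map_smul, map_one, map_zero, map_neg,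
    g0, g1, g2, g3, g4, g5, g6, g7]
  case la_pow =>
    have : ∀ n : ℕ, ∀ v x, (gen q χ 4 ^ n) v x = v (x.1, x.2.1 - n, x.2.2) := by
      intro n
      induction n with
      | zero => intro v x; simp
      | succ n ih =>
        intro v x
        rw [pow_succ, Module.End.mul_apply, ih]
        simp [gen, sub_sub]
    refine LinearMap.ext fun v => funext fun x => ?_
    simp [this]
  case lb_pow =>
    have : ∀ n : ℕ, ∀ v x, (gen q χ 5 ^ n) v x =
        ((if x.2.2.1 then q⁻¹ else 1) * (if x.2.2.2 then q⁻¹ else 1)) ^ n *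
          v (x.1 - n, x.2) := by
      intro n
      induction n with
      | zero => intro v x; simp
      | succ n ih =>
        intro v x
        rw [pow_succ, Module.End.mul_apply, ih]
        simp only [gen, Matrix.cons_val, Op_apply, sub_sub, Nat.cast_succ]
        ring
    have hqp := hq.pow_eq_one
    refine LinearMap.ext fun v => funext fun ⟨i, j, a, b⟩ => ?_
    rw [this]
    cases a <;> cases b <;> simp [mul_pow, hqp]
  case ka_pow =>
    refine LinearMap.ext fun v => funext fun x => ?_
    simp [gen, Op_id_pow, hχp]
  case kb_pow =>
    have hqp := hq.pow_eq_one
    refine LinearMap.ext fun v => funext fun ⟨i, j, a, b⟩ => ?_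
    simp only [gen, Matrix.cons_val, Op_id_pow, Op_apply]
    cases a <;> cases b <;> simp [mul_pow, hχp, hqp]
  case ep_em =>
    refine LinearMap.ext fun v => funext fun ⟨i, j, a, b⟩ => ?_
    simp only [gen, Matrix.cons_val, Op_id_pow]
    have := hχ0 i
    cases a <;> cases b <;> simp [hχp'] <;> field_simp
  case ep_lb =>
    refine LinearMap.ext fun v => funext fun ⟨i, j, a, b⟩ => ?_
    have := hχ0 i
    cases a <;> cases b <;> simp [gen, hχs] <;> field_simp <;> ring
  all_goals
    refine LinearMap.ext fun v => funext fun ⟨i, j, a, b⟩ => ?_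
    have := hχ0 i
    cases a <;> cases b <;> simp [gen, hχs] <;> field_simp

/-- The matrix unit sending the basis vector at `y` to the one at `x`. -/
def unit (x y : Idx p) : Module.End ℂ (Idx p → ℂ) := Op (Pi.single x 1) (fun _ => y)

lemma unit_mul_unit (x y z : Idx p) : unit x y * unit y z = unit x z := by
  rw [unit, unit, Op_mul]
  simp [unit]

lemma single_mul_Op (x : Idx p) (h : Idx p → ℂ) (σ : Idx p → Idx p) :
    Op (Pi.single x 1) id * Op h σ = h x • unit x (σ x) := by
  refine LinearMap.ext fun v => funext fun y => ?_
  by_cases hy : y = x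
  · subst hy; simp [unit]
  · simp [unit, hy]

lemma eq_sum_unit [NeZero p] (f : Module.End ℂ (Idx p → ℂ)) :
    f = ∑ x, ∑ y, f (Pi.single y 1) x • unit x y := by
  refine LinearMap.pi_ext' fun z => LinearMap.ext_ring (funext fun w => ?_)
  simp [unit, Finset.sum_apply, Pi.single_apply]

/-- The functions acting by multiplication through an element of the subalgebra `R`. -/
def diagSub (R : Subalgebra ℂ (Module.End ℂ (Idx p → ℂ))) : Subalgebra ℂ (Idx p → ℂ) where
  carrier := {h | Op h id ∈ R}
  mul_mem' {a b} ha hb := by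
    have := R.mul_mem ha hb
    rwa [Op_mul] at this
  add_mem' {a b} ha hb := by
    change Op (a + b) id ∈ R
    rw [show Op (a + b) id = Op a id + Op b id from ?_]
    · exact R.add_mem ha hb
    refine LinearMap.ext fun v => funext fun x => ?_
    simp [add_mul]
  algebraMap_mem' c := by
    change Op (algebraMap ℂ (Idx p → ℂ) c) id ∈ R
    rw [show Op (algebraMap ℂ (Idx p → ℂ) c) id = algebraMap ℂ _ c from ?_]
    · exact R.algebraMap_mem c
    refine LinearMap.ext fun v => funext fun x => ?_
    simp [Module.algebraMap_end_apply]

lemma mem_diagSub {R : Subalgebra ℂ (Module.End ℂ (Idx p → ℂ))} {h : Idx p → ℂ} :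
    h ∈ diagSub R ↔ Op h id ∈ R := Iff.rfl

/-- A point-separating subalgebra of functions on a finite set contains all indicator
functions of points. -/
lemma single_mem_of_separates {I : Type*} [Fintype I] [DecidableEq I]
    (D : Subalgebra ℂ (I → ℂ)) (hD : ∀ x y, x ≠ y → ∃ h ∈ D, h x ≠ h y) (x : I) :
    (Pi.single x 1 : I → ℂ) ∈ D := by
  have : ∀ y, ∃ g ∈ D, g x = 1 ∧ (y ≠ x → g y = 0) := by
    intro y
    by_cases hy : y = x
    · exact ⟨1, D.one_mem, rfl, fun h => absurd hy h⟩
    · obtain ⟨h, hh, hne⟩ := hD x y (Ne.symm hy)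
      have hne' : h x - h y ≠ 0 := sub_ne_zero.2 hne
      refine ⟨(h x - h y)⁻¹ • (h - algebraMap ℂ _ (h y)),
        D.smul_mem (D.sub_mem hh (D.algebraMap_mem _)) _, ?_, fun _ => ?_⟩
      · simp [hne']
      · simp
  choose g hg hx hy using this
  convert D.prod_mem (t := Finset.univ) (fun y _ => hg y) using 1
  funext z
  rw [Finset.prod_apply]
  by_cases hz : z = x
  · subst hz; simp [hx]
  · rw [Pi.single_eq_of_ne hz, eq_comm]
    exact Finset.prod_eq_zero (Finset.mem_univ z) (hy z hz)

/-- The representing operators generate the full endomorphism algebra. -/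
lemma gen_top [NeZero p] (hp : 3 ≤ p) (hq : IsPrimitiveRoot q p) (hχ : χ 1 = q)
    (R : Subalgebra ℂ (Module.End ℂ (Idx p → ℂ))) (hR : ∀ i, gen q χ i ∈ R) : R = ⊤ := by
  have hq0 : q ≠ 0 := hq.ne_zero (by omega)
  have hχ0 : ∀ i, χ i ≠ 0 := fun i => (χ.val_isUnit i).ne_zero
  have hχp : ∀ i, χ i ^ p = 1 := fun i => by
    rw [← AddChar.map_nsmul_eq_pow]; simp
  have hχp' : ∀ i, χ i ^ (p - 1) = (χ i)⁻¹ := fun i => by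
    refine eq_inv_of_mul_eq_one_left ?_
    rw [← pow_succ, Nat.sub_add_cancel (by omega), hχp]
  have hinj : Function.Injective χ := by
    intro i j hij
    have hv : ∀ i : ZMod p, χ i = q ^ i.val := fun i => by
      rw [← hχ, ← AddChar.map_nsmul_eq_pow]; simp
    rw [hv, hv] at hij
    exact ZMod.val_injective p (hq.pow_inj (ZMod.val_lt i) (ZMod.val_lt j) hij)
  have d0 : (fun x : Idx p => χ x.1) ∈ diagSub R := hR 0
  have d0' : (fun x : Idx p => (χ x.1)⁻¹) ∈ diagSub R := by
    convert (diagSub R).pow_mem d0 (p - 1) using 1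
    funext x
    simp [hχp']
  have d1 : (fun x : Idx p => χ x.2.1 * (if x.2.2.1 then q⁻¹ else 1) *
    (if x.2.2.2 then q else 1)) ∈ diagSub R := hR 1
  -- the annihilation operator of the first mode, recovered from `e₊`, `k_α` and `ζ₋`
  have ep' : Op (fun x : Idx p => if x.2.2.1 then 0 else -1)
      (fun x => (x.1, x.2.1, true, x.2.2.2)) ∈ R := by
    have h1 : (fun x : Idx p => (q - q⁻¹)⁻¹ * (1 - ((χ x.1)⁻¹) ^ 2)) ∈ diagSub R :=
      (diagSub R).smul_mem ((diagSub R).sub_mem (diagSub R).one_mem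
        ((diagSub R).pow_mem d0' 2)) _
    convert R.sub_mem (hR 2) (R.mul_mem h1 (hR 7)) using 1
    simp [gen, Op_mul, mul_assoc]
  -- occupation numbers of the two modes
  have da : (fun x : Idx p => if x.2.2.1 then (1 : ℂ) else 0) ∈ diagSub R := by
    rw [mem_diagSub]
    convert R.neg_mem (R.mul_mem (hR 6) ep') using 1
    refine LinearMap.ext fun v => funext fun ⟨i, j, a, b⟩ => ?_
    cases a <;> cases b <;> simp [gen]
  have db : (fun x : Idx p => if x.2.2.2 then (1 : ℂ) else 0) ∈ diagSub R := by
    rw [mem_diagSub]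
    convert R.mul_mem d0' (R.mul_mem (hR 7) (hR 3)) using 1
    refine LinearMap.ext fun v => funext fun ⟨i, j, a, b⟩ => ?_
    cases a <;> cases b <;> simp [gen, hχ0]
  have dsingle : ∀ x : Idx p, (Pi.single x 1 : Idx p → ℂ) ∈ diagSub R := by
    refine single_mem_of_separates _ ?_
    rintro ⟨i, j, a, b⟩ ⟨i', j', a', b'⟩ hne
    by_cases hi : i = i'
    · by_cases ha : a = a'
      · by_cases hb : b = b'
        · have hj : j ≠ j' := by rintro rfl; simp_all
          refine ⟨_, d1, ?_⟩
          subst hi ha hb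
          have := hinj.ne hj
          cases a <;> cases b <;> simpa [hq0] using this
        · exact ⟨_, db, by cases b <;> cases b' <;> simp_all⟩
      · exact ⟨_, da, by cases a <;> cases a' <;> simp_all⟩
    · exact ⟨_, d0, hinj.ne hi⟩
  have edge : ∀ (h : Idx p → ℂ) (σ : Idx p → Idx p), Op h σ ∈ R → ∀ x, h x ≠ 0 →
      unit x (σ x) ∈ R := by
    intro h σ hσ x hx
    have := R.smul_mem (R.mul_mem (dsingle x) hσ) (h x)⁻¹
    rwa [single_mul_Op, smul_smul, inv_mul_cancel₀ hx, one_smul] at this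
  have self : ∀ x : Idx p, unit x x ∈ R := fun x =>
    edge 1 id (mem_diagSub.1 (diagSub R).one_mem) x one_ne_zero
  have tr : ∀ {x y z : Idx p}, unit x y ∈ R → unit y z ∈ R → unit x z ∈ R := by
    intro x y z h1 h2
    rw [← unit_mul_unit x y z]
    exact R.mul_mem h1 h2
  -- stepping by `-1` reaches every element of `ZMod p`
  have hshift : ∀ (P : ZMod p → Prop), (∀ i, P i → P (i - 1)) → ∀ i, P i → ∀ j, P j := by
    intro P hP i hi j
    have : ∀ n : ℕ, P (i - n) := by
      intro n
      induction n with
      | zero => simpa using hi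
      | succ n ih => simpa [sub_sub] using hP _ ih
    simpa using this (i - j).val
  have all : ∀ x y : Idx p, unit x y ∈ R := by
    rintro ⟨i, j, a, b⟩ ⟨i', j', a', b'⟩
    have e0 : unit (i, j, a, b) (i, j, a, b) ∈ R := self _
    have e1 : unit (i, j, a, b) (i', j, a, b) ∈ R := by
      refine hshift (fun k => unit (i, j, a, b) (k, j, a, b) ∈ R) (fun k hk => tr hk ?_) i e0 i'
      exact edge _ _ (hR 5) (k, j, a, b) (by cases a <;> cases b <;> simp [hq0])
    have e2 : unit (i, j, a, b) (i', j', a, b) ∈ R := by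
      refine hshift (fun k => unit (i, j, a, b) (i', k, a, b) ∈ R) (fun k hk => tr hk ?_) j e1 j'
      exact edge _ _ (hR 4) (i', k, a, b) (by simp)
    have e3 : unit (i, j, a, b) (i', j', a', b) ∈ R := by
      refine tr e2 ?_
      cases a <;> cases a'
      · exact self _
      · exact edge _ _ ep' (i', j', false, b) (by simp)
      · exact edge _ _ (hR 6) (i', j', true, b) (by simp)
      · exact self _
    refine tr e3 ?_
    cases b <;> cases b'
    · exact self _
    · exact edge _ _ (hR 3) (i', j', a', false) (by cases a' <;> simp [hχ0])
    · exact edge _ _ (hR 7) (i', j', a', true) (by cases a' <;> simp)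
    · exact self _
  rw [eq_top_iff]
  intro f _
  rw [eq_sum_unit f]
  exact R.sum_mem fun x _ => R.sum_mem fun y _ => R.smul_mem (all x y) _

end Rep

end Stmt6

open Stmt6 in
/-- The images of the monomials `k_α^n k_β^m l_α^{n'} l_β^{m'} e₊^r e₋^s ζ₊^{r'} ζ₋^{s'}` form a
`ℂ`-vector-space basis of the Heisenberg double of restricted `U_q(gl(1|1))`. -/
theorem heisenberg_double_gl11_basis (p : ℕ) (hp : 3 ≤ p) (hodd : Odd p) (q : ℂ)
    (hq : IsPrimitiveRoot q p) :
    let π := RingQuot.mkAlgHom ℂ (Rel p q)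
    let f : Fin p × Fin p × Fin p × Fin p × Fin 2 × Fin 2 × Fin 2 × Fin 2 →
        RingQuot (Rel p q) := fun x =>
      π ka ^ (x.1 : ℕ) * π kb ^ (x.2.1 : ℕ) * π la ^ (x.2.2.1 : ℕ) *
        π lb ^ (x.2.2.2.1 : ℕ) * π ep ^ (x.2.2.2.2.1 : ℕ) * π em ^ (x.2.2.2.2.2.1 : ℕ) *
        π zp ^ (x.2.2.2.2.2.2.1 : ℕ) * π zm ^ (x.2.2.2.2.2.2.2 : ℕ)
    LinearIndependent ℂ f ∧ Submodule.span ℂ (Set.range f) = ⊤ := by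
  have hq0 : q ≠ 0 := hq.ne_zero (by omega)
  have : NeZero p := ⟨by omega⟩
  intro π f
  have hf : f = mono p q := rfl
  have hspan := span_mono_eq_top (p := p) (q := q) hp hq0
  rw [hf]
  refine ⟨?_, hspan⟩
  let χ : AddChar (ZMod p) ℂ := AddChar.zmodChar p hq.pow_eq_one
  have hχ : χ 1 = q := by
    have : Fact (1 < p) := ⟨by omega⟩
    simp [χ, AddChar.zmodChar_apply, ZMod.val_one]
  let ρ : RingQuot (Rel p q) →ₐ[ℂ] Module.End ℂ (Idx p → ℂ) :=
    RingQuot.liftAlgHom ℂ ⟨FreeAlgebra.lift ℂ (gen q χ), fun _ _ h => gen_rel q χ hp hq hχ h⟩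
  have hρ : ρ.range = ⊤ := by
    refine gen_top q χ hp hq hχ _ fun i => ⟨pr p q (FreeAlgebra.ι ℂ i), ?_⟩
    simp [ρ, pr]
  refine LinearIndependent.of_comp ρ.toLinearMap ?_
  refine linearIndependent_of_top_le_span_of_card_eq_finrank ?_ ?_
  · rw [Set.range_comp, Submodule.span_image, hspan, Submodule.map_top]
    intro x _
    have hx : x ∈ ρ.range := hρ ▸ Algebra.mem_top
    exact hx
  · simp only [Module.finrank_linearMap, Module.finrank_fintype_fun_eq_card, Fintype.card_prod,
      Fintype.card_fin, ZMod.card, Fintype.card_bool]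
    ring
end
end

section
/- Let p ≥ 3 be an odd integer and q ∈ ℂ a primitive p-th root of unity. Let D be the quotient of the free ℂ-algebra on six generators k_α, k_β, k̂_α, k̂_β, e₊, e₋ by the two-sided ideal generated by: (subalgebra relations) k_α^p − 1, k_β^p − 1, k_α k_β − k_β k_α, k_α e₊ − e₊ k_α, k_β e₊ − q·e₊ k_β, e₊², k̂_α^p − 1, k̂_β^p − 1, k̂_α k̂_β − k̂_β k̂_α, k̂_α e₋ − e₋ k̂_α, k̂_β e₋ − q^{−1}·e₋ k̂_β, e₋²; and (cross relations) k_α k̂_α − k̂_α k_α, k_β k̂_β − k̂_β k_β, k_α k̂_β − k̂_β k_α, k_β k̂_α − k̂_α k_β, k_α e₋ − e₋ k_α, k_β e₋ − q^{−1}·e₋ k_β, e₊ k̂_α − k̂_α e₊, e₊ k̂_β − q^{−1}·k̂_β e₊, and e₊e₋ + e₋e₊ − (q − q^{−1})^{−1}·(k̂_α − k_α^{p−1}). Then the images of the 4p⁴ monomials k_α^n k_β^m k̂_α^{n'} k̂_β^{m'} e₊^r e₋^s with 0 ≤ n, m, n', m' ≤ p−1 and r, s ∈ {0,1} form a ℂ-vector-space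 basis of D; in particular D is finite-dimensional of dimension 4p⁴. -/
/-!
The group-like generators commute with each other and commute with `e₊`, `e₋` up to powers of `q`,
so left multiplication by each generator maps the span of the monomials to itself: moving `e₋` past
`e₊` produces only the central element `c = (q - q⁻¹)⁻¹ (k̂_α - k_α^{p-1})`. As the span contains
`1`, it is everything (`span_eq_top`).

Independence comes from an explicit representation. Over the group algebra `A = ℂ[(ℤ/p)⁴]`, the
algebra generated by `e₊, e₋` with `e₊² = e₋² = 0`, `e₊e₋ + e₋e₊ = c` acts on itself by left
multiplication, in the basis `1, e₊, e₋, e₊e₋`; twisting `k_β` and `k̂_β` by the weight grading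
`diag(1, q, q⁻¹, 1)` gives a homomorphism `rep` from `D` to the `4 × 4` matrices over `A`. The
monomial with exponents `(n, m, n', m', r, s)` sends the basis vector `1` to a nonzero scalar times
the group element `(n, m, n', m')` placed at the basis vector `e₊^r e₋^s`, so distinct monomials
have disjoint supports (`rep_mono_apply`).
-/

noncomputable section

namespace Stmt7

/-- The free `ℂ`-algebra on the six generators `k_α, k_β, k̂_α, k̂_β, e₊, e₋`. -/
abbrev F : Type := FreeAlgebra ℂ (Fin 6)

def ka : F := FreeAlgebra.ι ℂ 0
def kb : F := FreeAlgebra.ι ℂ 1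
def hka : F := FreeAlgebra.ι ℂ 2
def hkb : F := FreeAlgebra.ι ℂ 3
def ep : F := FreeAlgebra.ι ℂ 4
def em : F := FreeAlgebra.ι ℂ 5

/-- The defining relations of the Drinfeld double of the Borel half of restricted
`U_q(gl(1|1))`. -/
inductive Rel (p : ℕ) (q : ℂ) : F → F → Prop
  -- Borel half relations
  | ka_pow : Rel p q (ka ^ p) 1
  | kb_pow : Rel p q (kb ^ p) 1
  | ka_kb : Rel p q (ka * kb) (kb * ka)
  | ka_ep : Rel p q (ka * ep) (ep * ka)
  | kb_ep : Rel p q (kb * ep) (q • (ep * kb))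
  | ep_sq : Rel p q (ep * ep) 0
  -- dual Borel half relations
  | hka_pow : Rel p q (hka ^ p) 1
  | hkb_pow : Rel p q (hkb ^ p) 1
  | hka_hkb : Rel p q (hka * hkb) (hkb * hka)
  | hka_em : Rel p q (hka * em) (em * hka)
  | hkb_em : Rel p q (hkb * em) (q⁻¹ • (em * hkb))
  | em_sq : Rel p q (em * em) 0
  -- cross relations
  | ka_hka : Rel p q (ka * hka) (hka * ka)
  | kb_hkb : Rel p q (kb * hkb) (hkb * kb)
  | ka_hkb : Rel p q (ka * hkb) (hkb * ka)
  | kb_hka : Rel p q (kb * hka) (hka * kb)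
  | ka_em : Rel p q (ka * em) (em * ka)
  | kb_em : Rel p q (kb * em) (q⁻¹ • (em * kb))
  | ep_hka : Rel p q (ep * hka) (hka * ep)
  | ep_hkb : Rel p q (ep * hkb) (q⁻¹ • (hkb * ep))
  | ep_em : Rel p q (ep * em + em * ep) ((q - q⁻¹)⁻¹ • (hka - ka ^ (p - 1)))

end Stmt7

namespace Stmt7

/-! ### Spanning -/

section Span

variable {B : Type*} [Ring B] [Algebra ℂ B]

/-- The ordered monomial in `k_α, k_β, k̂_α, k̂_β, e₊, e₋` with natural-number exponents. -/
def mono (a b c d e f : B) (n m n' m' r s : ℕ) : B :=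
  a ^ n * b ^ m * c ^ n' * d ^ m' * e ^ r * f ^ s

lemma mul_pow_of_qcomm {x k : B} {t : ℂ} (h : x * k = t • (k * x)) (n : ℕ) :
    x * k ^ n = t ^ n • (k ^ n * x) := by
  induction n with
  | zero => simp
  | succ n ih =>
    rw [pow_succ, ← mul_assoc, ih, smul_mul_assoc, mul_assoc, h, mul_smul_comm, smul_smul,
      ← mul_assoc, ← pow_succ]

/-- Moving `x` past the group-like part of a monomial costs only a scalar. -/
lemma mul_group_part {x a b c d : B} {t u : ℂ} (ha : Commute x a) (hb : x * b = t • (b * x))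
    (hc : Commute x c) (hd : x * d = u • (d * x)) (n m n' m' : ℕ) (y : B) :
    x * (a ^ n * b ^ m * c ^ n' * d ^ m' * y)
      = (t ^ m * u ^ m') • (a ^ n * b ^ m * c ^ n' * d ^ m' * (x * y)) := by
  have h1 : x * a ^ n = a ^ n * x := (ha.pow_right n).eq
  have h3 : x * c ^ n' = c ^ n' * x := (hc.pow_right n').eq
  have h2 := mul_pow_of_qcomm hb m
  have h4 := mul_pow_of_qcomm hd m'
  calc x * (a ^ n * b ^ m * c ^ n' * d ^ m' * y)
      = (x * a ^ n) * b ^ m * c ^ n' * d ^ m' * y := by simp only [mul_assoc]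
    _ = a ^ n * (x * b ^ m) * c ^ n' * d ^ m' * y := by rw [h1]; simp only [mul_assoc]
    _ = t ^ m • (a ^ n * b ^ m * (x * c ^ n') * d ^ m' * y) := by
        rw [h2]; simp only [mul_assoc, smul_mul_assoc, mul_smul_comm]
    _ = t ^ m • (a ^ n * b ^ m * c ^ n' * (x * d ^ m') * y) := by
        rw [h3]; simp only [mul_assoc]
    _ = _ := by
        rw [h4]; simp only [mul_assoc, smul_mul_assoc, mul_smul_comm, smul_smul]

/-- The monomials with reduced exponents span any algebra generated by six elements satisfying the
defining relations; `t` is the inverse of `q` and `z` the scalar in the anticommutator. Generation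
is expressed by `hgen`: only the full subspace contains `1` and is stable under left multiplication
by the generators. -/
lemma span_eq_top {p : ℕ} (hp : 0 < p) {q t z : ℂ} {a b c d e f : B}
    (hqt : t * q = 1)
    (hap : a ^ p = 1) (hbp : b ^ p = 1) (hcp : c ^ p = 1) (hdp : d ^ p = 1)
    (hab : Commute a b) (hac : Commute a c) (had : Commute a d)
    (hbc : Commute b c) (hbd : Commute b d) (hcd : Commute c d)
    (hae : Commute a e) (haf : Commute a f) (hce : Commute e c) (hcf : Commute c f)
    (hbe : b * e = q • (e * b)) (hbf : b * f = t • (f * b))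
    (hde : e * d = t • (d * e)) (hdf : d * f = t • (f * d))
    (hee : e * e = 0) (hff : f * f = 0)
    (hef : e * f + f * e = z • (c - a ^ (p - 1)))
    (hgen : ∀ S : Submodule ℂ B, 1 ∈ S →
      (∀ g ∈ ({a, b, c, d, e, f} : Set B), ∀ s ∈ S, g * s ∈ S) → S = ⊤) :
    Submodule.span ℂ (Set.range fun x : Fin p × Fin p × Fin p × Fin p × Fin 2 × Fin 2 =>
      mono a b c d e f x.1 x.2.1 x.2.2.1 x.2.2.2.1 x.2.2.2.2.1 x.2.2.2.2.2) = ⊤ := by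
  set S := Submodule.span ℂ
    (Set.range fun x : Fin p × Fin p × Fin p × Fin p × Fin 2 × Fin 2 =>
      mono a b c d e f x.1 x.2.1 x.2.2.1 x.2.2.2.1 x.2.2.2.2.1 x.2.2.2.2.2) with hS
  have heb : e * b = t • (b * e) := by rw [hbe, smul_smul, hqt, one_smul]
  have hfb : f * b = q • (b * f) := by rw [hbf, smul_smul, mul_comm, hqt, one_smul]
  have hfd : f * d = q • (d * f) := by rw [hdf, smul_smul, mul_comm, hqt, one_smul]
  have hred : ∀ {g : B}, g ^ p = 1 → ∀ n, g ^ (n % p) = g ^ n := fun {g} hg n => by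
    conv_rhs => rw [← Nat.mod_add_div n p, pow_add, pow_mul, hg, one_pow, mul_one]
  have hmem : ∀ n m n' m' r s : ℕ, mono a b c d e f n m n' m' r s ∈ S := by
    intro n m n' m' r s
    by_cases hr : r < 2
    · by_cases hs : s < 2
      · refine Submodule.subset_span ⟨(⟨n % p, Nat.mod_lt _ hp⟩, ⟨m % p, Nat.mod_lt _ hp⟩,
          ⟨n' % p, Nat.mod_lt _ hp⟩, ⟨m' % p, Nat.mod_lt _ hp⟩, ⟨r, hr⟩, ⟨s, hs⟩), ?_⟩
        simp only [mono, hred hap, hred hbp, hred hcp, hred hdp]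
      · obtain ⟨s, rfl⟩ := Nat.exists_eq_add_of_le (not_lt.mp hs)
        have : f ^ (2 + s) = 0 := by rw [pow_add, sq, hff, zero_mul]
        simp [mono, this]
    · obtain ⟨r, rfl⟩ := Nat.exists_eq_add_of_le (not_lt.mp hr)
      have : e ^ (2 + r) = 0 := by rw [pow_add, sq, hee, zero_mul]
      simp [mono, this]
  have hA : ∀ n m n' m' r s, a * mono a b c d e f n m n' m' r s
      = mono a b c d e f (n + 1) m n' m' r s := fun n m n' m' r s => by
    simp only [mono, pow_succ', mul_assoc]
  have hB : ∀ n m n' m' r s, b * mono a b c d e f n m n' m' r s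
      = mono a b c d e f n (m + 1) n' m' r s := fun n m n' m' r s => by
    have := (hab.symm.pow_right n).eq
    simp only [mono, pow_succ', ← mul_assoc, this]
  have hC : ∀ n m n' m' r s, c * mono a b c d e f n m n' m' r s
      = mono a b c d e f n m (n' + 1) m' r s := fun n m n' m' r s => by
    have := ((hac.symm.pow_right n).mul_right (hbc.symm.pow_right m)).eq
    simp only [mono, pow_succ', ← mul_assoc] at this ⊢
    rw [this]
  have hD : ∀ n m n' m' r s, d * mono a b c d e f n m n' m' r s
      = mono a b c d e f n m n' (m' + 1) r s := fun n m n' m' r s => by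
    have := (((had.symm.pow_right n).mul_right (hbd.symm.pow_right m)).mul_right
      (hcd.symm.pow_right n')).eq
    simp only [mono, pow_succ', ← mul_assoc] at this ⊢
    rw [this]
  have hE : ∀ n m n' m' r s, e * mono a b c d e f n m n' m' r s ∈ S := by
    intro n m n' m' r s
    have h := mul_group_part hae.symm heb hce hde n m n' m' (e ^ r * f ^ s)
    have h2 : e * mono a b c d e f n m n' m' r s
        = (t ^ m * t ^ m') • mono a b c d e f n m n' m' (r + 1) s := by
      simp only [mono, pow_succ', mul_assoc] at h ⊢
      exact h
    rw [h2]
    exact S.smul_mem _ (hmem _ _ _ _ _ _)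
  have hF : ∀ n m n' m' r s, f * mono a b c d e f n m n' m' r s ∈ S := by
    intro n m n' m' r s
    have h := mul_group_part haf.symm hfb hcf.symm hfd n m n' m' (e ^ r * f ^ s)
    have h2 : f * mono a b c d e f n m n' m' r s
        = (q ^ m * q ^ m') • (a ^ n * b ^ m * c ^ n' * d ^ m' * (f * (e ^ r * f ^ s))) := by
      rw [← h]; simp only [mono, mul_assoc]
    rw [h2]
    refine S.smul_mem _ ?_
    rcases r with _ | _ | r
    · have := hmem n m n' m' 0 (s + 1)
      simpa [mono, pow_succ', mul_assoc] using this
    · have hfe : f * e = z • (c - a ^ (p - 1)) - e * f := by rw [← hef]; abel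
      -- The anticommutator is central, so it is absorbed into the group-like part.
      have hc' : a ^ n * b ^ m * c ^ n' * d ^ m' * c = a ^ n * b ^ m * c ^ (n' + 1) * d ^ m' := by
        rw [mul_assoc _ _ c, (hcd.symm.pow_left m').eq, pow_succ]; simp only [mul_assoc]
      have ha' : a ^ n * b ^ m * c ^ n' * d ^ m' * a ^ (p - 1)
          = a ^ (n + (p - 1)) * b ^ m * c ^ n' * d ^ m' := by
        have : Commute (b ^ m * c ^ n' * d ^ m') (a ^ (p - 1)) :=
          ((hab.symm.pow_pow m _).mul_left (hac.symm.pow_pow n' _)).mul_left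
            (had.symm.pow_pow m' _)
        have h := this.eq
        rw [pow_add]
        simp only [mul_assoc] at h ⊢
        rw [h]
      have key : a ^ n * b ^ m * c ^ n' * d ^ m' * (f * (e ^ (0 + 1) * f ^ s))
          = z • (mono a b c d e f n m (n' + 1) m' 0 s
              - mono a b c d e f (n + (p - 1)) m n' m' 0 s)
            - mono a b c d e f n m n' m' 1 (s + 1) := by
        rw [zero_add, pow_one, ← mul_assoc f e, hfe, sub_mul, mul_sub, smul_mul_assoc,
          mul_smul_comm, sub_mul, mul_sub, ← mul_assoc _ c, ← mul_assoc _ (a ^ (p - 1)), hc', ha']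
        simp only [mono, pow_zero, mul_one, pow_one, pow_succ' f, mul_assoc]
      rw [key]
      exact S.sub_mem (S.smul_mem _ (S.sub_mem (hmem _ _ _ _ _ _) (hmem _ _ _ _ _ _)))
        (hmem _ _ _ _ _ _)
    · have : e ^ (r + 1 + 1) = 0 := by rw [pow_succ', pow_succ', ← mul_assoc, hee, zero_mul]
      simp [this]
  refine hgen S ?_ ?_
  · simpa [mono] using hmem 0 0 0 0 0 0
  · intro g hg s hs
    have hle : S ≤ S.comap (LinearMap.mulLeft ℂ g) := by
      conv_lhs => rw [hS]
      rw [Submodule.span_le]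
      rintro _ ⟨x, rfl⟩
      simp only [Submodule.comap_coe, Set.mem_preimage, LinearMap.mulLeft_apply, SetLike.mem_coe]
      simp only [Set.mem_insert_iff, Set.mem_singleton_iff] at hg
      rcases hg with rfl | rfl | rfl | rfl | rfl | rfl
      · rw [hA]; exact hmem _ _ _ _ _ _
      · rw [hB]; exact hmem _ _ _ _ _ _
      · rw [hC]; exact hmem _ _ _ _ _ _
      · rw [hD]; exact hmem _ _ _ _ _ _
      · exact hE _ _ _ _ _ _
      · exact hF _ _ _ _ _ _
    exact hle hs

end Span

/-- The six generators generate: a subspace containing `1` and stable under left multiplication by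
them is everything. -/
lemma eq_top_of_stable (p : ℕ) (q : ℂ) (S : Submodule ℂ (RingQuot (Rel p q))) (h1 : 1 ∈ S)
    (h : ∀ i : Fin 6, ∀ s ∈ S, RingQuot.mkAlgHom ℂ (Rel p q) (FreeAlgebra.ι ℂ i) * s ∈ S) :
    S = ⊤ := by
  have key : ∀ y : F, ∀ s ∈ S, RingQuot.mkAlgHom ℂ (Rel p q) y * s ∈ S := by
    intro y
    induction y using FreeAlgebra.induction with
    | grade0 r =>
      intro s hs
      rw [AlgHom.commutes, ← Algebra.smul_def]
      exact S.smul_mem _ hs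
    | grade1 i => exact h i
    | mul x y hx hy =>
      intro s hs
      rw [map_mul, mul_assoc]
      exact hx _ (hy _ hs)
    | add x y hx hy =>
      intro s hs
      rw [map_add, add_mul]
      exact S.add_mem (hx _ hs) (hy _ hs)
  rw [eq_top_iff]
  rintro x -
  obtain ⟨y, rfl⟩ := RingQuot.mkAlgHom_surjective ℂ (Rel p q) x
  simpa using key y 1 h1

/-! ### A representation separating the monomials -/

section Rep

variable {A : Type*} [CommRing A] [Algebra ℂ A]

/-- The matrix of a group-like element `k` times the weight grading `diag(1, q, q⁻¹, 1)` of the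
basis `1, e₊, e₋, e₊e₋`. -/
def Kmat (q : ℂ) (k : A) : Matrix (Fin 4) (Fin 4) A :=
  Matrix.diagonal ![k, q • k, q⁻¹ • k, k]

/-- Left multiplication by `e₊` in the basis `1, e₊, e₋, e₊e₋`. -/
def Epmat : Matrix (Fin 4) (Fin 4) A :=
  !![0, 0, 0, 0; 1, 0, 0, 0; 0, 0, 0, 0; 0, 0, 1, 0]

/-- Left multiplication by `e₋` in the basis `1, e₊, e₋, e₊e₋`, where `e₊e₋ + e₋e₊ = c`. -/
def Emmat (c : A) : Matrix (Fin 4) (Fin 4) A :=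
  !![0, c, 0, 0; 0, 0, 0, 0; 1, 0, 0, c; 0, -1, 0, 0]

/-- The matrices of the six generators, given the images `g 0, g 1, g 2, g 3` of the group-like
generators in the commutative algebra `A`. -/
def gens (p : ℕ) (q : ℂ) (g : Fin 4 → A) : Fin 6 → Matrix (Fin 4) (Fin 4) A :=
  ![Matrix.scalar (Fin 4) (g 0), Kmat q (g 1), Matrix.scalar (Fin 4) (g 2), Kmat q (g 3), Epmat,
    Emmat ((q - q⁻¹)⁻¹ • (g 2 - g 0 ^ (p - 1)))]

lemma Kmat_pow (q : ℂ) (k : A) (n : ℕ) :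
    Kmat q k ^ n = Matrix.diagonal ![k ^ n, (q • k) ^ n, (q⁻¹ • k) ^ n, k ^ n] := by
  rw [Kmat, Matrix.diagonal_pow]
  congr 1
  ext i
  fin_cases i <;> simp

lemma Kmat_pow_eq_one {p : ℕ} {q : ℂ} (hq : q ^ p = 1) {k : A} (hk : k ^ p = 1) :
    Kmat q k ^ p = 1 := by
  rw [Kmat_pow, ← Matrix.diagonal_one]
  congr 1
  ext i
  fin_cases i <;> simp [smul_pow, hq, hk]

lemma gens_rel {p : ℕ} {q : ℂ} (hq0 : q ≠ 0) (hq : q ^ p = 1) {g : Fin 4 → A}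
    (hg : ∀ i, g i ^ p = 1) ⦃x y : F⦄ (h : Rel p q x y) :
    FreeAlgebra.lift ℂ (gens p q g) x = FreeAlgebra.lift ℂ (gens p q g) y := by
  have hs : ∀ (k : A) (M : Matrix (Fin 4) (Fin 4) A),
      Matrix.scalar (Fin 4) k * M = M * Matrix.scalar (Fin 4) k := fun k M =>
    Matrix.scalar_commute k (fun r => Commute.all _ _) M
  have hK : ∀ k l : A, Kmat q k * Kmat q l = Kmat q l * Kmat q k := fun k l => by
    simp only [Kmat, Matrix.diagonal_mul_diagonal, mul_comm]
  have hKe : ∀ k : A, Kmat q k * Epmat = q • (Epmat * Kmat q k) := fun k => by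
    ext i j
    rw [Matrix.smul_apply, Kmat, Matrix.diagonal_mul, Matrix.mul_diagonal]
    fin_cases i <;> fin_cases j <;> simp [Epmat, smul_smul, hq0]
  have hKf : ∀ k c : A, Kmat q k * Emmat c = q⁻¹ • (Emmat c * Kmat q k) := fun k c => by
    ext i j
    rw [Matrix.smul_apply, Kmat, Matrix.diagonal_mul, Matrix.mul_diagonal]
    fin_cases i <;> fin_cases j <;> simp [Emmat, smul_smul, hq0, mul_comm]
  cases h <;>
    simp only [ka, kb, hka, hkb, ep, em, map_pow, map_mul, map_one, map_add, map_sub, map_smul,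
      map_zero, FreeAlgebra.lift_ι_apply, gens, Matrix.cons_val]
  case ka_pow => rw [← map_pow, hg, map_one]
  case hka_pow => rw [← map_pow, hg, map_one]
  case kb_pow => exact Kmat_pow_eq_one hq (hg 1)
  case hkb_pow => exact Kmat_pow_eq_one hq (hg 3)
  case kb_ep => exact hKe _
  case hkb_em => exact hKf _ _
  case kb_em => exact hKf _ _
  case kb_hkb => exact hK _ _
  case ep_hkb => rw [hKe, smul_smul, inv_mul_cancel₀ hq0, one_smul]
  case ep_sq =>
    ext i j
    fin_cases i <;> fin_cases j <;> simp [Epmat, Matrix.mul_apply, Fin.sum_univ_four]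
  case em_sq =>
    ext i j
    fin_cases i <;> fin_cases j <;> simp [Emmat, Matrix.mul_apply, Fin.sum_univ_four]
  case ep_em =>
    rw [← map_pow, ← map_sub]
    generalize g 2 - g 0 ^ (p - 1) = w
    ext i j
    fin_cases i <;> fin_cases j <;>
      simp [Epmat, Emmat, Matrix.scalar_apply]
  all_goals first | exact hs _ _ | exact (hs _ _).symm

/-- The representation of the double on the free `A`-module with basis `1, e₊, e₋, e₊e₋`. -/
def rep {p : ℕ} {q : ℂ} (hq0 : q ≠ 0) (hq : q ^ p = 1) {g : Fin 4 → A} (hg : ∀ i, g i ^ p = 1) :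
    RingQuot (Rel p q) →ₐ[ℂ] Matrix (Fin 4) (Fin 4) A :=
  RingQuot.liftAlgHom ℂ ⟨FreeAlgebra.lift ℂ (gens p q g), gens_rel hq0 hq hg⟩

/-- The position of `e₊^r e₋^s` in the basis `1, e₊, e₋, e₊e₋`. -/
def pos : Fin 2 × Fin 2 → Fin 4
  | (r, s) => ![![0, 2], ![1, 3]] r s

lemma pos_injective : Function.Injective pos := by decide

/-- The weight of `e₊^r e₋^s` under `k_β` and `k̂_β`. -/
def weight (q : ℂ) : Fin 2 × Fin 2 → ℂ
  | (r, s) => ![![1, q⁻¹], ![q, 1]] r s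

/-- A monomial applied to the basis vector `1` is supported at the basis vector `e₊^r e₋^s`. -/
lemma rep_mono_apply {p : ℕ} {q : ℂ} (hq0 : q ≠ 0) (hq : q ^ p = 1) {g : Fin 4 → A}
    (hg : ∀ i, g i ^ p = 1) (n m n' m' : ℕ) (r s : Fin 2) (i : Fin 4) :
    let π := RingQuot.mkAlgHom ℂ (Rel p q)
    rep hq0 hq hg (π ka ^ n * π kb ^ m * π hka ^ n' * π hkb ^ m' * π ep ^ (r : ℕ) * π em ^ (s : ℕ))
        i 0
      = if i = pos (r, s) then
          weight q (r, s) ^ (m + m') • (g 0 ^ n * g 1 ^ m * g 2 ^ n' * g 3 ^ m') else 0 := by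
  intro π
  have hgen : ∀ j, rep hq0 hq hg (π (FreeAlgebra.ι ℂ j)) = gens p q g j := fun j => by
    simp only [π, rep, RingQuot.liftAlgHom_mkAlgHom_apply, FreeAlgebra.lift_ι_apply]
  simp only [ka, kb, hka, hkb, ep, em, map_mul, map_pow, hgen]
  simp only [gens, Matrix.cons_val, Kmat_pow, Matrix.scalar_apply, Matrix.diagonal_pow,
    Matrix.diagonal_mul_diagonal]
  rw [mul_assoc, Matrix.diagonal_mul]
  -- The first column of `e₊^r e₋^s` is a standard basis vector.
  have hcol : ∀ c : A, ((Epmat : Matrix (Fin 4) (Fin 4) A) ^ (r : ℕ) * Emmat c ^ (s : ℕ)) i 0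
      = if i = pos (r, s) then 1 else 0 := by
    intro c
    fin_cases r <;> fin_cases s <;> fin_cases i <;>
      simp [pos, Epmat, Emmat]
  rw [hcol]
  split_ifs with h
  · subst h
    fin_cases r <;> fin_cases s <;> simp [pos, weight, smul_pow, pow_add, smul_smul, mul_comm]
  · rw [mul_zero]

end Rep

/-- The group algebra of `(ℤ/p)⁴`. -/
abbrev GA (p : ℕ) : Type := AddMonoidAlgebra ℂ (Fin 4 → ZMod p)

/-- The four standard group elements of `(ℤ/p)⁴` in its group algebra. -/
def grp (p : ℕ) (i : Fin 4) : GA p := AddMonoidAlgebra.single (Pi.single i 1) 1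

lemma grp_pow (p : ℕ) (i : Fin 4) : grp p i ^ p = 1 := by
  rw [grp, AddMonoidAlgebra.single_pow, one_pow, AddMonoidAlgebra.one_def]
  congr 1
  ext j
  simp

lemma grp_prod (p n m n' m' : ℕ) :
    grp p 0 ^ n * grp p 1 ^ m * grp p 2 ^ n' * grp p 3 ^ m'
      = AddMonoidAlgebra.single ![(n : ZMod p), m, n', m'] 1 := by
  simp only [grp, AddMonoidAlgebra.single_pow, AddMonoidAlgebra.single_mul_single, one_pow, mul_one]
  congr 1
  ext j
  fin_cases j <;> simp

lemma natCast_fin_inj {p : ℕ} {i j : Fin p} (h : ((i : ℕ) : ZMod p) = ((j : ℕ) : ZMod p)) :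
    i = j := by
  rw [ZMod.natCast_eq_natCast_iff', Nat.mod_eq_of_lt i.2, Nat.mod_eq_of_lt j.2] at h
  exact Fin.ext h

end Stmt7

open Stmt7 in
/-- The images of the `4p⁴` monomials `k_α^n k_β^m k̂_α^{n'} k̂_β^{m'} e₊^r e₋^s` form a
`ℂ`-vector-space basis of the Drinfeld double `D` of the Borel half of restricted
`U_q(gl(1|1))`; in particular `D` has dimension `4p⁴`. -/
theorem drinfeld_double_borel_gl11_basis (p : ℕ) (hp : 3 ≤ p) (hodd : Odd p) (q : ℂ)
    (hq : IsPrimitiveRoot q p) :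
    let π := RingQuot.mkAlgHom ℂ (Rel p q)
    let f : Fin p × Fin p × Fin p × Fin p × Fin 2 × Fin 2 → RingQuot (Rel p q) := fun x =>
      π ka ^ (x.1 : ℕ) * π kb ^ (x.2.1 : ℕ) * π hka ^ (x.2.2.1 : ℕ) *
        π hkb ^ (x.2.2.2.1 : ℕ) * π ep ^ (x.2.2.2.2.1 : ℕ) * π em ^ (x.2.2.2.2.2 : ℕ)
    LinearIndependent ℂ f ∧ Submodule.span ℂ (Set.range f) = ⊤ ∧
      Module.finrank ℂ (RingQuot (Rel p q)) = 4 * p ^ 4 := by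
  intro π f
  have hq0 : q ≠ 0 := hq.ne_zero (by omega)
  have hqp : q ^ p = 1 := hq.pow_eq_one
  have hli : LinearIndependent ℂ f := by
    rw [Fintype.linearIndependent_iff]
    intro w hw y
    -- Read off the coefficient of the group element of `y` in the entry belonging to `y`.
    have h := congrArg (fun d => (rep hq0 hqp (grp_pow p) d (pos y.2.2.2.2) 0).coeff
      ![((y.1 : ℕ) : ZMod p), (y.2.1 : ℕ), (y.2.2.1 : ℕ), (y.2.2.2.1 : ℕ)]) hw
    simp only [map_sum, map_smul, map_zero, Matrix.sum_apply, Matrix.smul_apply, f, π,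
      rep_mono_apply, grp_prod, AddMonoidAlgebra.coeff_sum, AddMonoidAlgebra.coeff_smul,
      Finsupp.finsetSum_apply, Finsupp.smul_apply] at h
    rw [Finset.sum_eq_single y] at h
    · have hwt : weight q y.2.2.2.2 ≠ 0 := by
        obtain ⟨-, -, -, -, r, s⟩ := y
        fin_cases r <;> fin_cases s <;> simp [weight, hq0]
      simpa [hwt] using h
    · rintro ⟨n, m, n', m', r, s⟩ - hne
      split_ifs with hpos
      · have hrs := pos_injective hpos
        rw [AddMonoidAlgebra.coeff_smul, AddMonoidAlgebra.coeff_single, Finsupp.smul_apply,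
          Finsupp.single_eq_of_ne, smul_zero, smul_zero]
        intro heq
        obtain ⟨y1, y2, y3, y4, yr, ys⟩ := y
        apply hne
        have h0 := natCast_fin_inj (congrFun heq 0)
        have h1 := natCast_fin_inj (congrFun heq 1)
        have h2 := natCast_fin_inj (congrFun heq 2)
        have h3 := natCast_fin_inj (congrFun heq 3)
        simp_all
      · simp
    · simp
  have hrel : ∀ {x y : F}, Rel p q x y → π x = π y := fun h => RingQuot.mkAlgHom_rel ℂ h
  have hsp : Submodule.span ℂ (Set.range f) = ⊤ := by
    have hcomm : ∀ {x y : F}, Rel p q (x * y) (y * x) → Commute (π x) (π y) := fun h => by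
      simpa [commute_iff_eq] using hrel h
    refine span_eq_top (q := q) (t := q⁻¹) (z := (q - q⁻¹)⁻¹) (a := π ka) (b := π kb)
      (c := π hka) (d := π hkb) (e := π ep) (f := π em) (by omega) (inv_mul_cancel₀ hq0)
      (by simpa using hrel .ka_pow) (by simpa using hrel .kb_pow)
      (by simpa using hrel .hka_pow) (by simpa using hrel .hkb_pow)
      (hcomm .ka_kb) (hcomm .ka_hka) (hcomm .ka_hkb)
      (hcomm .kb_hka) (hcomm .kb_hkb) (hcomm .hka_hkb)
      (hcomm .ka_ep) (hcomm .ka_em) (hcomm .ep_hka)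
      (hcomm .hka_em) (by simpa using hrel .kb_ep) (by simpa using hrel .kb_em)
      (by simpa using hrel .ep_hkb) (by simpa using hrel .hkb_em) (by simpa using hrel .ep_sq)
      (by simpa using hrel .em_sq) (by simpa using hrel .ep_em) ?_
    intro S h1 hS
    refine eq_top_of_stable p q S h1 fun i => hS _ ?_
    fin_cases i <;> simp [π, ka, kb, hka, hkb, ep, Stmt7.em]
  refine ⟨hli, hsp, ?_⟩
  rw [Module.finrank_eq_card_basis (Module.Basis.mk hli hsp.ge)]
  simp only [Fintype.card_prod, Fintype.card_fin]
  ring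
end
end

section
/- Let p ≥ 3 be an odd integer and q ∈ ℂ a primitive p-th root of unity. Let D be the presented Drinfeld double of the Borel half of restricted U_q(gl(1|1)) (generators k_α, k_β, k̂_α, k̂_β, e₊, e₋ with the Borel, dual Borel and cross relations, in particular e₊e₋ + e₋e₊ = (k̂_α − k_α^{p−1})/(q − q^{−1})), and let U be the presented restricted U_q(gl(1|1)) (generators K_α, K_β, E₊, E₋ with relations K_α^p = K_β^p = 1, K_α K_β = K_β K_α, K_α E_± = E_± K_α, K_β E_± = q^{±1} E_± K_β, E_±² = 0, E₊E₋ + E₋E₊ = (K_α − K_α^{p−1})/(q − q^{−1})). Then the quotient of D by the two-sided ideal generated by k̂_α − k_α and k̂_β − k_β is isomorphic as a ℂ-algebra to U, via the isomorphism sending the classes of k_α, k_β, e₊, e₋ to K_α, K_β, E₊, E₋ respectively. -/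
/-!
Both algebras are given by generators and relations, so the isomorphism is a comparison of
presentations. Sending `k_α, k̂_α ↦ K_α`, `k_β, k̂_β ↦ K_β`, `e_± ↦ E_±` turns each defining relation
of the double into a relation of `U_q(gl(1|1))` and identifies the hatted generators with the unhatted
ones, which gives a map out of the quotient (`quotToU`). Conversely, once `k̂_α = k_α` and
`k̂_β = k_β` hold, the relations of the double contain those of `U_q(gl(1|1))`, which gives
`uToQuot`. The two maps are inverse to each other on generators, hence everywhere.

The only relation that needs an argument is `e₊ k̂_β = q⁻¹ k̂_β e₊`, which becomes
`K_β E₊ = q E₊ K_β` after multiplication by `q ≠ 0`.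
-/

noncomputable section

namespace Stmt8

/-- The free `ℂ`-algebra on the six generators `k_α, k_β, k̂_α, k̂_β, e₊, e₋`. -/
abbrev F : Type := FreeAlgebra ℂ (Fin 6)

def ka : F := FreeAlgebra.ι ℂ 0
def kb : F := FreeAlgebra.ι ℂ 1
def hka : F := FreeAlgebra.ι ℂ 2
def hkb : F := FreeAlgebra.ι ℂ 3
def ep : F := FreeAlgebra.ι ℂ 4
def em : F := FreeAlgebra.ι ℂ 5

/-- The defining relations of the Drinfeld double of the Borel half of restricted
`U_q(gl(1|1))`. -/
inductive DRel (p : ℕ) (q : ℂ) : F → F → Prop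
  | ka_pow : DRel p q (ka ^ p) 1
  | kb_pow : DRel p q (kb ^ p) 1
  | ka_kb : DRel p q (ka * kb) (kb * ka)
  | ka_ep : DRel p q (ka * ep) (ep * ka)
  | kb_ep : DRel p q (kb * ep) (q • (ep * kb))
  | ep_sq : DRel p q (ep * ep) 0
  | hka_pow : DRel p q (hka ^ p) 1
  | hkb_pow : DRel p q (hkb ^ p) 1
  | hka_hkb : DRel p q (hka * hkb) (hkb * hka)
  | hka_em : DRel p q (hka * em) (em * hka)
  | hkb_em : DRel p q (hkb * em) (q⁻¹ • (em * hkb))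
  | em_sq : DRel p q (em * em) 0
  | ka_hka : DRel p q (ka * hka) (hka * ka)
  | kb_hkb : DRel p q (kb * hkb) (hkb * kb)
  | ka_hkb : DRel p q (ka * hkb) (hkb * ka)
  | kb_hka : DRel p q (kb * hka) (hka * kb)
  | ka_em : DRel p q (ka * em) (em * ka)
  | kb_em : DRel p q (kb * em) (q⁻¹ • (em * kb))
  | ep_hka : DRel p q (ep * hka) (hka * ep)
  | ep_hkb : DRel p q (ep * hkb) (q⁻¹ • (hkb * ep))
  | ep_em : DRel p q (ep * em + em * ep) ((q - q⁻¹)⁻¹ • (hka - ka ^ (p - 1)))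

/-- The free `ℂ`-algebra on the four generators `K_α, K_β, E₊, E₋`. -/
abbrev FU : Type := FreeAlgebra ℂ (Fin 4)

def Ka : FU := FreeAlgebra.ι ℂ 0
def Kb : FU := FreeAlgebra.ι ℂ 1
def Ep : FU := FreeAlgebra.ι ℂ 2
def Em : FU := FreeAlgebra.ι ℂ 3

/-- The defining relations of restricted `U_q(gl(1|1))`. -/
inductive URel (p : ℕ) (q : ℂ) : FU → FU → Prop
  | ka_pow : URel p q (Ka ^ p) 1
  | kb_pow : URel p q (Kb ^ p) 1
  | ka_kb : URel p q (Ka * Kb) (Kb * Ka)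
  | ka_ep : URel p q (Ka * Ep) (Ep * Ka)
  | ka_em : URel p q (Ka * Em) (Em * Ka)
  | kb_ep : URel p q (Kb * Ep) (q • (Ep * Kb))
  | kb_em : URel p q (Kb * Em) (q⁻¹ • (Em * Kb))
  | ep_sq : URel p q (Ep * Ep) 0
  | em_sq : URel p q (Em * Em) 0
  | ep_em : URel p q (Ep * Em + Em * Ep) ((q - q⁻¹)⁻¹ • (Ka - Ka ^ (p - 1)))

/-- The extra relations `k̂_α = k_α`, `k̂_β = k_β` imposed on the Drinfeld double. -/
inductive QRel (p : ℕ) (q : ℂ) : RingQuot (DRel p q) → RingQuot (DRel p q) → Prop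
  | hka_ka : QRel p q (RingQuot.mkAlgHom ℂ (DRel p q) hka) (RingQuot.mkAlgHom ℂ (DRel p q) ka)
  | hkb_kb : QRel p q (RingQuot.mkAlgHom ℂ (DRel p q) hkb) (RingQuot.mkAlgHom ℂ (DRel p q) kb)

end Stmt8

namespace Stmt8

variable {p : ℕ} {q : ℂ}

/-- The images in `U_q(gl(1|1))` of `k_α, k_β, k̂_α, k̂_β, e₊, e₋`, in this order. -/
def genU (p : ℕ) (q : ℂ) : Fin 6 → RingQuot (URel p q) :=
  let π := RingQuot.mkAlgHom ℂ (URel p q)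
  ![π Ka, π Kb, π Ka, π Kb, π Ep, π Em]

/-- The images in the quotient of the double of `K_α, K_β, E₊, E₋`, in this order. -/
def genQ (p : ℕ) (q : ℂ) : Fin 4 → RingQuot (QRel p q) :=
  let π := (RingQuot.mkAlgHom ℂ (QRel p q)).comp (RingQuot.mkAlgHom ℂ (DRel p q))
  ![π ka, π kb, π ep, π em]

theorem lift_genU_rel (hq : q ≠ 0) ⦃x y : F⦄ (h : DRel p q x y) :
    FreeAlgebra.lift ℂ (genU p q) x = FreeAlgebra.lift ℂ (genU p q) y := by
  have rel {a b : FU} (h : URel p q a b) := RingQuot.mkAlgHom_rel ℂ h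
  have h1 := rel .ka_pow
  have h2 := rel .kb_pow
  have h3 := rel .ka_kb
  have h4 := rel .ka_ep
  have h5 := rel .ka_em
  have h6 := rel .kb_ep
  have h7 := rel .kb_em
  have h8 := rel .ep_sq
  have h9 := rel .em_sq
  have h10 := rel .ep_em
  simp only [map_mul, map_pow, map_one, map_smul, map_zero, map_add, map_sub]
    at h1 h2 h3 h4 h5 h6 h7 h8 h9 h10
  cases h <;>
    simp only [map_mul, map_pow, map_one, map_smul, map_zero, map_add, map_sub,
      ka, kb, hka, hkb, ep, em, FreeAlgebra.lift_ι_apply, genU, Matrix.cons_val]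
  all_goals first | assumption | exact h3.symm | exact h4.symm | skip
  -- the relation `e₊ k̂_β = q⁻¹ k̂_β e₊`
  rw [h6, smul_smul, inv_mul_cancel₀ hq, one_smul]

/-- The algebra map from the Drinfeld double to `U_q(gl(1|1))` that forgets the hats. -/
def doubleToU (hq : q ≠ 0) : RingQuot (DRel p q) →ₐ[ℂ] RingQuot (URel p q) :=
  RingQuot.liftAlgHom ℂ ⟨FreeAlgebra.lift ℂ (genU p q), lift_genU_rel hq⟩

theorem doubleToU_ι (hq : q ≠ 0) (i : Fin 6) :
    doubleToU hq (RingQuot.mkAlgHom ℂ (DRel p q) (FreeAlgebra.ι ℂ i)) = genU p q i := by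
  simp [doubleToU]

theorem doubleToU_rel (hq : q ≠ 0) ⦃x y : RingQuot (DRel p q)⦄ (h : QRel p q x y) :
    doubleToU hq x = doubleToU hq y := by
  cases h <;> simp only [hka, hkb, ka, kb, doubleToU_ι] <;> rfl

/-- The map induced by `doubleToU` on the quotient by `k̂_α = k_α`, `k̂_β = k_β`. -/
def quotToU (hq : q ≠ 0) : RingQuot (QRel p q) →ₐ[ℂ] RingQuot (URel p q) :=
  RingQuot.liftAlgHom ℂ ⟨doubleToU hq, doubleToU_rel hq⟩

theorem quotToU_ι (hq : q ≠ 0) (i : Fin 6) :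
    quotToU hq (RingQuot.mkAlgHom ℂ (QRel p q)
      (RingQuot.mkAlgHom ℂ (DRel p q) (FreeAlgebra.ι ℂ i))) = genU p q i := by
  simp [quotToU, doubleToU_ι]

theorem lift_genQ_rel ⦃x y : FU⦄ (h : URel p q x y) :
    FreeAlgebra.lift ℂ (genQ p q) x = FreeAlgebra.lift ℂ (genQ p q) y := by
  have rel {a b : F} (h : DRel p q a b) :=
    congrArg (RingQuot.mkAlgHom ℂ (QRel p q)) (RingQuot.mkAlgHom_rel ℂ h)
  have h1 := rel .ka_pow
  have h2 := rel .kb_pow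
  have h3 := rel .ka_kb
  have h4 := rel .ka_ep
  have h5 := rel .ka_em
  have h6 := rel .kb_ep
  have h7 := rel .kb_em
  have h8 := rel .ep_sq
  have h9 := rel .em_sq
  have h10 := rel .ep_em
  have hα := RingQuot.mkAlgHom_rel ℂ (QRel.hka_ka (p := p) (q := q))
  simp only [map_mul, map_pow, map_one, map_smul, map_zero, map_add, map_sub, hα]
    at h1 h2 h3 h4 h5 h6 h7 h8 h9 h10
  cases h <;>
    simp only [map_mul, map_pow, map_one, map_smul, map_zero, map_add, map_sub,
      Ka, Kb, Ep, Em, FreeAlgebra.lift_ι_apply, genQ, Matrix.cons_val, AlgHom.comp_apply] <;>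
    assumption

/-- The algebra map from `U_q(gl(1|1))` to the quotient of the double. -/
def uToQuot (p : ℕ) (q : ℂ) : RingQuot (URel p q) →ₐ[ℂ] RingQuot (QRel p q) :=
  RingQuot.liftAlgHom ℂ ⟨FreeAlgebra.lift ℂ (genQ p q), lift_genQ_rel⟩

theorem uToQuot_ι (i : Fin 4) :
    uToQuot p q (RingQuot.mkAlgHom ℂ (URel p q) (FreeAlgebra.ι ℂ i)) = genQ p q i := by
  simp [uToQuot]

theorem quotToU_comp_uToQuot (hq : q ≠ 0) :
    (quotToU hq).comp (uToQuot p q) = AlgHom.id ℂ _ := by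
  refine RingQuot.ringQuot_ext' _ _ _ (FreeAlgebra.hom_ext (funext fun i => ?_))
  simp only [Function.comp_apply, AlgHom.comp_apply, AlgHom.id_apply, uToQuot_ι]
  fin_cases i <;> exact quotToU_ι hq _

theorem uToQuot_comp_quotToU (hq : q ≠ 0) :
    (uToQuot p q).comp (quotToU hq) = AlgHom.id ℂ _ := by
  refine RingQuot.ringQuot_ext' _ _ _
    (RingQuot.ringQuot_ext' _ _ _ (FreeAlgebra.hom_ext (funext fun i => ?_)))
  simp only [Function.comp_apply, AlgHom.comp_apply, AlgHom.id_apply, quotToU_ι]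
  fin_cases i
  · exact uToQuot_ι 0
  · exact uToQuot_ι 1
  -- `k̂_α` and `k̂_β` come back as `k_α` and `k_β`, which have the same class in the quotient
  · exact (uToQuot_ι 0).trans (RingQuot.mkAlgHom_rel ℂ QRel.hka_ka).symm
  · exact (uToQuot_ι 1).trans (RingQuot.mkAlgHom_rel ℂ QRel.hkb_kb).symm
  · exact uToQuot_ι 2
  · exact uToQuot_ι 3

end Stmt8

open Stmt8 in
/-- The quotient of the Drinfeld double of the Borel half of restricted `U_q(gl(1|1))` by the
two-sided ideal generated by `k̂_α - k_α` and `k̂_β - k_β` is isomorphic as a `ℂ`-algebra to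
restricted `U_q(gl(1|1))`, via the isomorphism sending the classes of `k_α, k_β, e₊, e₋` to
`K_α, K_β, E₊, E₋` respectively. -/
theorem drinfeld_double_quotient_iso_gl11 (p : ℕ) (hp : 3 ≤ p) (hodd : Odd p) (q : ℂ)
    (hq : IsPrimitiveRoot q p) :
    let πD := RingQuot.mkAlgHom ℂ (DRel p q)
    let πQ := RingQuot.mkAlgHom ℂ (QRel p q)
    let πU := RingQuot.mkAlgHom ℂ (URel p q)
    ∃ e : RingQuot (QRel p q) ≃ₐ[ℂ] RingQuot (URel p q),
      e (πQ (πD ka)) = πU Ka ∧ e (πQ (πD kb)) = πU Kb ∧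
        e (πQ (πD ep)) = πU Ep ∧ e (πQ (πD em)) = πU Em := by
  intro πD πQ πU
  have hq0 : q ≠ 0 := hq.ne_zero (by omega)
  exact ⟨AlgEquiv.ofAlgHom (quotToU hq0) (uToQuot p q) (quotToU_comp_uToQuot hq0)
    (uToQuot_comp_quotToU hq0),
    quotToU_ι hq0 0, quotToU_ι hq0 1, quotToU_ι hq0 4, quotToU_ι hq0 5⟩
end
end

section
/- Let p ≥ 3 be an odd integer and q ∈ ℂ a primitive p-th root of unity. Let B be the presented Borel half of restricted U_q(gl(1|1)) (generators a, b, c with relations a^p = b^p = 1, ab = ba, ac = ca, bc = q cb, c² = 0), let B* be the presented dual Borel half (generators â, b̂, d with relations â^p = b̂^p = 1, âb̂ = b̂â, âd = dâ, b̂d = q^{−1} db̂, d² = 0), and let D be the presented Drinfeld double of the Borel half of restricted U_q(gl(1|1)) on generators k_α, k_β, e₊, k̂_α, k̂_β, e₋. Then the unique ℂ-algebra homomorphism B → D sending a ↦ k_α, b ↦ k_β, c ↦ e₊ is injective, and the unique ℂ-algebra homomorphism B* → D sending â ↦ k̂_α, b̂ ↦ k̂_β, d ↦ e₋ is injective; i.e.,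 B and B* embed as subalgebras of the Drinfeld double. -/
/-!
Each Borel half is a retract of the double `H`. The quotient of `H` by `e₋` forces
`k̂_α = k_α^(p-1)`, and `k̂_β` has the same commutation relation with `e₊` as `k_β`; so
`k_α ↦ a`, `k_β ↦ b`, `k̂_α ↦ a^(p-1)`, `k̂_β ↦ b`, `e₊ ↦ c`, `e₋ ↦ 0` defines an algebra
homomorphism `H → B` (`retractB`) that is left inverse to `B → H`. Symmetrically,
`k_α ↦ â^(p-1)`, `k_β ↦ b̂`, `k̂_α ↦ â`, `k̂_β ↦ b̂`, `e₊ ↦ 0`, `e₋ ↦ d` defines `H → B*`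
(`retractDual`); here the relation for `{e₊, e₋}` holds because `(p-1)² ≡ 1` modulo `p`.
The homomorphisms `B → H` and `B* → H` exist since the relations of each half are among those
of `H`, and they are unique since they are prescribed on generators.
-/

noncomputable section

namespace Stmt10

/-- The free `ℂ`-algebra on the three generators `a, b, c` of the Borel half. -/
abbrev FB : Type := FreeAlgebra ℂ (Fin 3)

def ga : FB := FreeAlgebra.ι ℂ 0
def gb : FB := FreeAlgebra.ι ℂ 1
def gc : FB := FreeAlgebra.ι ℂ 2

/-- The defining relations of the Borel half of restricted `U_q(gl(1|1))`:
`a^p = b^p = 1`, `ab = ba`, `ac = ca`, `bc = q cb`, `c² = 0`. -/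
inductive BRel (p : ℕ) (q : ℂ) : FB → FB → Prop
  | a_pow : BRel p q (ga ^ p) 1
  | b_pow : BRel p q (gb ^ p) 1
  | a_b : BRel p q (ga * gb) (gb * ga)
  | a_c : BRel p q (ga * gc) (gc * ga)
  | b_c : BRel p q (gb * gc) (q • (gc * gb))
  | c_sq : BRel p q (gc * gc) 0

/-- The defining relations of the dual Borel half:
`â^p = b̂^p = 1`, `âb̂ = b̂â`, `âd = dâ`, `b̂d = q⁻¹ db̂`, `d² = 0`. -/
inductive DualRel (p : ℕ) (q : ℂ) : FB → FB → Prop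
  | a_pow : DualRel p q (ga ^ p) 1
  | b_pow : DualRel p q (gb ^ p) 1
  | a_b : DualRel p q (ga * gb) (gb * ga)
  | a_c : DualRel p q (ga * gc) (gc * ga)
  | b_c : DualRel p q (gb * gc) (q⁻¹ • (gc * gb))
  | c_sq : DualRel p q (gc * gc) 0

/-- The free `ℂ`-algebra on the six generators `k_α, k_β, k̂_α, k̂_β, e₊, e₋`. -/
abbrev FH : Type := FreeAlgebra ℂ (Fin 6)

def ka : FH := FreeAlgebra.ι ℂ 0
def kb : FH := FreeAlgebra.ι ℂ 1
def hka : FH := FreeAlgebra.ι ℂ 2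
def hkb : FH := FreeAlgebra.ι ℂ 3
def ep : FH := FreeAlgebra.ι ℂ 4
def em : FH := FreeAlgebra.ι ℂ 5

/-- The defining relations of the Drinfeld double of the Borel half of restricted
`U_q(gl(1|1))`. -/
inductive DDRel (p : ℕ) (q : ℂ) : FH → FH → Prop
  | ka_pow : DDRel p q (ka ^ p) 1
  | kb_pow : DDRel p q (kb ^ p) 1
  | ka_kb : DDRel p q (ka * kb) (kb * ka)
  | ka_ep : DDRel p q (ka * ep) (ep * ka)
  | kb_ep : DDRel p q (kb * ep) (q • (ep * kb))
  | ep_sq : DDRel p q (ep * ep) 0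
  | hka_pow : DDRel p q (hka ^ p) 1
  | hkb_pow : DDRel p q (hkb ^ p) 1
  | hka_hkb : DDRel p q (hka * hkb) (hkb * hka)
  | hka_em : DDRel p q (hka * em) (em * hka)
  | hkb_em : DDRel p q (hkb * em) (q⁻¹ • (em * hkb))
  | em_sq : DDRel p q (em * em) 0
  | ka_hka : DDRel p q (ka * hka) (hka * ka)
  | kb_hkb : DDRel p q (kb * hkb) (hkb * kb)
  | ka_hkb : DDRel p q (ka * hkb) (hkb * ka)
  | kb_hka : DDRel p q (kb * hka) (hka * kb)
  | ka_em : DDRel p q (ka * em) (em * ka)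
  | kb_em : DDRel p q (kb * em) (q⁻¹ • (em * kb))
  | ep_hka : DDRel p q (ep * hka) (hka * ep)
  | ep_hkb : DDRel p q (ep * hkb) (q⁻¹ • (hkb * ep))
  | ep_em : DDRel p q (ep * em + em * ep) ((q - q⁻¹)⁻¹ • (hka - ka ^ (p - 1)))

theorem algHom_ext_gens {S : FB → FB → Prop} {A : Type*} [Semiring A] [Algebra ℂ A]
    {φ ψ : RingQuot S →ₐ[ℂ] A}
    (ha : φ (RingQuot.mkAlgHom ℂ S ga) = ψ (RingQuot.mkAlgHom ℂ S ga))
    (hb : φ (RingQuot.mkAlgHom ℂ S gb) = ψ (RingQuot.mkAlgHom ℂ S gb))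
    (hc : φ (RingQuot.mkAlgHom ℂ S gc) = ψ (RingQuot.mkAlgHom ℂ S gc)) : φ = ψ := by
  apply RingQuot.ringQuot_ext'
  apply FreeAlgebra.hom_ext
  funext i
  fin_cases i
  exacts [ha, hb, hc]

/-- The universal property of the double, for target elements indexed in the order
`k_α, k_β, k̂_α, k̂_β, e₊, e₋`. -/
theorem exists_lift_double (p : ℕ) (q : ℂ) {A : Type*} [Ring A] [Algebra ℂ A]
    (A₁ B₁ A₂ B₂ E F : A)
    (h1 : A₁ ^ p = 1) (h2 : B₁ ^ p = 1) (h3 : A₁ * B₁ = B₁ * A₁) (h4 : A₁ * E = E * A₁)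
    (h5 : B₁ * E = q • (E * B₁)) (h6 : E * E = 0)
    (h7 : A₂ ^ p = 1) (h8 : B₂ ^ p = 1) (h9 : A₂ * B₂ = B₂ * A₂) (h10 : A₂ * F = F * A₂)
    (h11 : B₂ * F = q⁻¹ • (F * B₂)) (h12 : F * F = 0)
    (h13 : A₁ * A₂ = A₂ * A₁) (h14 : B₁ * B₂ = B₂ * B₁) (h15 : A₁ * B₂ = B₂ * A₁)
    (h16 : B₁ * A₂ = A₂ * B₁) (h17 : A₁ * F = F * A₁) (h18 : B₁ * F = q⁻¹ • (F * B₁))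
    (h19 : E * A₂ = A₂ * E) (h20 : E * B₂ = q⁻¹ • (B₂ * E))
    (h21 : E * F + F * E = (q - q⁻¹)⁻¹ • (A₂ - A₁ ^ (p - 1))) :
    ∃ ρ : RingQuot (DDRel p q) →ₐ[ℂ] A,
      ρ (RingQuot.mkAlgHom ℂ (DDRel p q) ka) = A₁ ∧ ρ (RingQuot.mkAlgHom ℂ (DDRel p q) kb) = B₁ ∧
      ρ (RingQuot.mkAlgHom ℂ (DDRel p q) hka) = A₂ ∧ ρ (RingQuot.mkAlgHom ℂ (DDRel p q) hkb) = B₂ ∧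
      ρ (RingQuot.mkAlgHom ℂ (DDRel p q) ep) = E ∧
      ρ (RingQuot.mkAlgHom ℂ (DDRel p q) em) = F := by
  let f : FH →ₐ[ℂ] A := FreeAlgebra.lift ℂ (![A₁, B₁, A₂, B₂, E, F])
  have f0 : f ka = A₁ := by simp [f, ka]
  have f1 : f kb = B₁ := by simp [f, kb]
  have f2 : f hka = A₂ := by simp [f, hka]
  have f3 : f hkb = B₂ := by simp [f, hkb]
  have f4 : f ep = E := by simp [f, ep]
  have f5 : f em = F := by simp [f, em]
  have hf : ∀ ⦃x y⦄, DDRel p q x y → f x = f y := by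
    intro x y h
    cases h <;> simp only [map_mul, map_pow, map_smul, map_one, map_zero, map_add, map_sub,
      f0, f1, f2, f3, f4, f5] <;> assumption
  refine ⟨RingQuot.liftAlgHom ℂ ⟨f, hf⟩, ?_, ?_, ?_, ?_, ?_, ?_⟩ <;>
    simp only [RingQuot.liftAlgHom_mkAlgHom_apply, f0, f1, f2, f3, f4, f5]

theorem exists_inclB (p : ℕ) (q : ℂ) :
    ∃ φ : RingQuot (BRel p q) →ₐ[ℂ] RingQuot (DDRel p q),
      φ (RingQuot.mkAlgHom ℂ (BRel p q) ga) = RingQuot.mkAlgHom ℂ (DDRel p q) ka ∧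
      φ (RingQuot.mkAlgHom ℂ (BRel p q) gb) = RingQuot.mkAlgHom ℂ (DDRel p q) kb ∧
      φ (RingQuot.mkAlgHom ℂ (BRel p q) gc) = RingQuot.mkAlgHom ℂ (DDRel p q) ep := by
  let f : FB →ₐ[ℂ] RingQuot (DDRel p q) := FreeAlgebra.lift ℂ
    (![RingQuot.mkAlgHom ℂ (DDRel p q) ka, RingQuot.mkAlgHom ℂ (DDRel p q) kb,
      RingQuot.mkAlgHom ℂ (DDRel p q) ep])
  have fa : f ga = RingQuot.mkAlgHom ℂ (DDRel p q) ka := by simp [f, ga]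
  have fb : f gb = RingQuot.mkAlgHom ℂ (DDRel p q) kb := by simp [f, gb]
  have fc : f gc = RingQuot.mkAlgHom ℂ (DDRel p q) ep := by simp [f, gc]
  have hf : ∀ ⦃x y⦄, BRel p q x y → f x = f y := by
    intro x y h
    cases h <;> simp only [map_mul, map_pow, map_smul, map_one, map_zero, fa, fb, fc]
    · simpa using RingQuot.mkAlgHom_rel ℂ (DDRel.ka_pow (p := p) (q := q))
    · simpa using RingQuot.mkAlgHom_rel ℂ (DDRel.kb_pow (p := p) (q := q))
    · simpa using RingQuot.mkAlgHom_rel ℂ (DDRel.ka_kb (p := p) (q := q))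
    · simpa using RingQuot.mkAlgHom_rel ℂ (DDRel.ka_ep (p := p) (q := q))
    · simpa using RingQuot.mkAlgHom_rel ℂ (DDRel.kb_ep (p := p) (q := q))
    · simpa using RingQuot.mkAlgHom_rel ℂ (DDRel.ep_sq (p := p) (q := q))
  refine ⟨RingQuot.liftAlgHom ℂ ⟨f, hf⟩, ?_, ?_, ?_⟩ <;>
    simp only [RingQuot.liftAlgHom_mkAlgHom_apply, fa, fb, fc]

theorem exists_inclDual (p : ℕ) (q : ℂ) :
    ∃ φ : RingQuot (DualRel p q) →ₐ[ℂ] RingQuot (DDRel p q),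
      φ (RingQuot.mkAlgHom ℂ (DualRel p q) ga) = RingQuot.mkAlgHom ℂ (DDRel p q) hka ∧
      φ (RingQuot.mkAlgHom ℂ (DualRel p q) gb) = RingQuot.mkAlgHom ℂ (DDRel p q) hkb ∧
      φ (RingQuot.mkAlgHom ℂ (DualRel p q) gc) = RingQuot.mkAlgHom ℂ (DDRel p q) em := by
  let f : FB →ₐ[ℂ] RingQuot (DDRel p q) := FreeAlgebra.lift ℂ
    (![RingQuot.mkAlgHom ℂ (DDRel p q) hka, RingQuot.mkAlgHom ℂ (DDRel p q) hkb,
      RingQuot.mkAlgHom ℂ (DDRel p q) em])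
  have fa : f ga = RingQuot.mkAlgHom ℂ (DDRel p q) hka := by simp [f, ga]
  have fb : f gb = RingQuot.mkAlgHom ℂ (DDRel p q) hkb := by simp [f, gb]
  have fc : f gc = RingQuot.mkAlgHom ℂ (DDRel p q) em := by simp [f, gc]
  have hf : ∀ ⦃x y⦄, DualRel p q x y → f x = f y := by
    intro x y h
    cases h <;> simp only [map_mul, map_pow, map_smul, map_one, map_zero, fa, fb, fc]
    · simpa using RingQuot.mkAlgHom_rel ℂ (DDRel.hka_pow (p := p) (q := q))
    · simpa using RingQuot.mkAlgHom_rel ℂ (DDRel.hkb_pow (p := p) (q := q))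
    · simpa using RingQuot.mkAlgHom_rel ℂ (DDRel.hka_hkb (p := p) (q := q))
    · simpa using RingQuot.mkAlgHom_rel ℂ (DDRel.hka_em (p := p) (q := q))
    · simpa using RingQuot.mkAlgHom_rel ℂ (DDRel.hkb_em (p := p) (q := q))
    · simpa using RingQuot.mkAlgHom_rel ℂ (DDRel.em_sq (p := p) (q := q))
  refine ⟨RingQuot.liftAlgHom ℂ ⟨f, hf⟩, ?_, ?_, ?_⟩ <;>
    simp only [RingQuot.liftAlgHom_mkAlgHom_apply, fa, fb, fc]

/-- The retraction `H → B`, with `k̂_α ↦ a^(p-1)`, `k̂_β ↦ b` and `e₋ ↦ 0`. -/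
theorem retractB (p : ℕ) (q : ℂ) (hq : q ≠ 0) :
    ∃ ρ : RingQuot (DDRel p q) →ₐ[ℂ] RingQuot (BRel p q),
      ρ (RingQuot.mkAlgHom ℂ (DDRel p q) ka) = RingQuot.mkAlgHom ℂ (BRel p q) ga ∧
      ρ (RingQuot.mkAlgHom ℂ (DDRel p q) kb) = RingQuot.mkAlgHom ℂ (BRel p q) gb ∧
      ρ (RingQuot.mkAlgHom ℂ (DDRel p q) ep) = RingQuot.mkAlgHom ℂ (BRel p q) gc := by
  have ha := RingQuot.mkAlgHom_rel ℂ (BRel.a_pow (p := p) (q := q))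
  have hb := RingQuot.mkAlgHom_rel ℂ (BRel.b_pow (p := p) (q := q))
  have hab := RingQuot.mkAlgHom_rel ℂ (BRel.a_b (p := p) (q := q))
  have hac := RingQuot.mkAlgHom_rel ℂ (BRel.a_c (p := p) (q := q))
  have hbc := RingQuot.mkAlgHom_rel ℂ (BRel.b_c (p := p) (q := q))
  have hcc := RingQuot.mkAlgHom_rel ℂ (BRel.c_sq (p := p) (q := q))
  simp only [map_mul, map_pow, map_smul, map_one, map_zero] at ha hb hab hac hbc hcc
  generalize RingQuot.mkAlgHom ℂ (BRel p q) ga = a at *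
  generalize RingQuot.mkAlgHom ℂ (BRel p q) gb = b at *
  generalize RingQuot.mkAlgHom ℂ (BRel p q) gc = c at *
  have hpow : (a ^ (p - 1)) ^ p = 1 := by rw [← pow_mul, mul_comm, pow_mul, ha, one_pow]
  have hcomm : a ^ (p - 1) * b = b * a ^ (p - 1) := (show Commute a b from hab).pow_left _
  have hcommc : a ^ (p - 1) * c = c * a ^ (p - 1) := (show Commute a c from hac).pow_left _
  have hself : a ^ (p - 1) * a = a * a ^ (p - 1) := (Commute.refl a).pow_left _
  have hcb : c * b = q⁻¹ • (b * c) := by rw [hbc, smul_smul, inv_mul_cancel₀ hq, one_smul]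
  obtain ⟨ρ, h0, h1, -, -, h4, -⟩ := exists_lift_double p q a b (a ^ (p - 1)) b c 0
    ha hb hab hac hbc hcc hpow hb hcomm (by simp) (by simp) (by simp) hself.symm rfl hab
    hcomm.symm (by simp) (by simp) hcommc.symm hcb (by simp)
  exact ⟨ρ, h0, h1, h4⟩

/-- The retraction `H → B*`, with `k_α ↦ â^(p-1)`, `k_β ↦ b̂` and `e₊ ↦ 0`. -/
theorem retractDual (p : ℕ) (hp : 3 ≤ p) (q : ℂ) :
    ∃ ρ : RingQuot (DDRel p q) →ₐ[ℂ] RingQuot (DualRel p q),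
      ρ (RingQuot.mkAlgHom ℂ (DDRel p q) hka) = RingQuot.mkAlgHom ℂ (DualRel p q) ga ∧
      ρ (RingQuot.mkAlgHom ℂ (DDRel p q) hkb) = RingQuot.mkAlgHom ℂ (DualRel p q) gb ∧
      ρ (RingQuot.mkAlgHom ℂ (DDRel p q) em) = RingQuot.mkAlgHom ℂ (DualRel p q) gc := by
  have ha := RingQuot.mkAlgHom_rel ℂ (DualRel.a_pow (p := p) (q := q))
  have hb := RingQuot.mkAlgHom_rel ℂ (DualRel.b_pow (p := p) (q := q))
  have hab := RingQuot.mkAlgHom_rel ℂ (DualRel.a_b (p := p) (q := q))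
  have hac := RingQuot.mkAlgHom_rel ℂ (DualRel.a_c (p := p) (q := q))
  have hbc := RingQuot.mkAlgHom_rel ℂ (DualRel.b_c (p := p) (q := q))
  have hcc := RingQuot.mkAlgHom_rel ℂ (DualRel.c_sq (p := p) (q := q))
  simp only [map_mul, map_pow, map_smul, map_one, map_zero] at ha hb hab hac hbc hcc
  generalize RingQuot.mkAlgHom ℂ (DualRel p q) ga = a at *
  generalize RingQuot.mkAlgHom ℂ (DualRel p q) gb = b at *
  generalize RingQuot.mkAlgHom ℂ (DualRel p q) gc = c at *
  have hpow : (a ^ (p - 1)) ^ p = 1 := by rw [← pow_mul, mul_comm, pow_mul, ha, one_pow]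
  have hcomm : a ^ (p - 1) * b = b * a ^ (p - 1) := (show Commute a b from hab).pow_left _
  have hcommc : a ^ (p - 1) * c = c * a ^ (p - 1) := (show Commute a c from hac).pow_left _
  have hself : a ^ (p - 1) * a = a * a ^ (p - 1) := (Commute.refl a).pow_left _
  have hinv : (a ^ (p - 1)) ^ (p - 1) = a := by
    obtain ⟨n, rfl⟩ : ∃ n, p = n + 2 := ⟨p - 2, by omega⟩
    -- `(p-1)² = p(p-2) + 1`, written with `p = n + 2`.
    have h : (n + 2 - 1) * (n + 2 - 1) = (n + 2) * n + 1 := by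
      rw [show n + 2 - 1 = n + 1 from rfl]; ring
    rw [← pow_mul, h, pow_add, pow_mul, ha, one_pow, one_mul, pow_one]
  obtain ⟨ρ, -, -, h2, h3, -, h5⟩ := exists_lift_double p q (a ^ (p - 1)) b a b 0 c
    hpow hb hcomm (by simp) (by simp) (by simp) ha hb hab hac hbc hcc hself rfl hcomm
    hab.symm hcommc hbc (by simp) (by simp) (by simp [hinv])
  exact ⟨ρ, h2, h3, h5⟩

/-- An algebra homomorphism out of a quotient of `FB` is injective when some homomorphism back
sends the images of the three generators to the generators. -/
theorem injective_of_retract {S : FB → FB → Prop} {A : Type*} [Semiring A] [Algebra ℂ A]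
    {φ : RingQuot S →ₐ[ℂ] A} {ρ : A →ₐ[ℂ] RingQuot S}
    (ha : ρ (φ (RingQuot.mkAlgHom ℂ S ga)) = RingQuot.mkAlgHom ℂ S ga)
    (hb : ρ (φ (RingQuot.mkAlgHom ℂ S gb)) = RingQuot.mkAlgHom ℂ S gb)
    (hc : ρ (φ (RingQuot.mkAlgHom ℂ S gc)) = RingQuot.mkAlgHom ℂ S gc) :
    Function.Injective φ := by
  have h : ρ.comp φ = AlgHom.id ℂ _ := algHom_ext_gens ha hb hc
  exact Function.LeftInverse.injective (g := ρ) fun x => DFunLike.congr_fun h x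

end Stmt10

open Stmt10 in
/-- The Borel half `B` and its dual `B*` embed as subalgebras of the Drinfeld double `H` of
the Borel half of restricted `U_q(gl(1|1))`: the unique `ℂ`-algebra homomorphism `B → H` with
`a ↦ k_α`, `b ↦ k_β`, `c ↦ e₊` is injective, and the unique `ℂ`-algebra homomorphism
`B* → H` with `â ↦ k̂_α`, `b̂ ↦ k̂_β`, `d ↦ e₋` is injective. -/
theorem borel_halves_embed_in_drinfeld_double (p : ℕ) (hp : 3 ≤ p) (hodd : Odd p) (q : ℂ)
    (hq : IsPrimitiveRoot q p) :
    let πB := RingQuot.mkAlgHom ℂ (BRel p q)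
    let πD := RingQuot.mkAlgHom ℂ (DualRel p q)
    let πH := RingQuot.mkAlgHom ℂ (DDRel p q)
    ((∃! φ : RingQuot (BRel p q) →ₐ[ℂ] RingQuot (DDRel p q),
        φ (πB ga) = πH ka ∧ φ (πB gb) = πH kb ∧ φ (πB gc) = πH ep) ∧
      ∀ φ : RingQuot (BRel p q) →ₐ[ℂ] RingQuot (DDRel p q),
        (φ (πB ga) = πH ka ∧ φ (πB gb) = πH kb ∧ φ (πB gc) = πH ep) →
          Function.Injective φ) ∧
    ((∃! ψ : RingQuot (DualRel p q) →ₐ[ℂ] RingQuot (DDRel p q),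
        ψ (πD ga) = πH hka ∧ ψ (πD gb) = πH hkb ∧ ψ (πD gc) = πH em) ∧
      ∀ ψ : RingQuot (DualRel p q) →ₐ[ℂ] RingQuot (DDRel p q),
        (ψ (πD ga) = πH hka ∧ ψ (πD gb) = πH hkb ∧ ψ (πD gc) = πH em) →
          Function.Injective ψ) := by
  intro πB πD πH
  refine ⟨⟨?_, ?_⟩, ?_, ?_⟩
  · obtain ⟨φ, ha, hb, hc⟩ := exists_inclB p q
    exact ⟨φ, ⟨ha, hb, hc⟩, fun ψ ⟨ha', hb', hc'⟩ =>
      algHom_ext_gens (ha'.trans ha.symm) (hb'.trans hb.symm) (hc'.trans hc.symm)⟩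
  · rintro φ ⟨ha, hb, hc⟩
    obtain ⟨ρ, ra, rb, rc⟩ := retractB p q (hq.ne_zero (by omega))
    exact injective_of_retract ((congrArg ρ ha).trans ra) ((congrArg ρ hb).trans rb)
      ((congrArg ρ hc).trans rc)
  · obtain ⟨φ, ha, hb, hc⟩ := exists_inclDual p q
    exact ⟨φ, ⟨ha, hb, hc⟩, fun ψ ⟨ha', hb', hc'⟩ =>
      algHom_ext_gens (ha'.trans ha.symm) (hb'.trans hb.symm) (hc'.trans hc.symm)⟩
  · rintro φ ⟨ha, hb, hc⟩
    obtain ⟨ρ, ra, rb, rc⟩ := retractDual p hp q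
    exact injective_of_retract ((congrArg ρ ha).trans ra) ((congrArg ρ hb).trans rb)
      ((congrArg ρ hc).trans rc)
end
end
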